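/- arXiv:2507.14012 — 2 statements merged into one kernel-verified Lean document; each statement's English description precedes it below -/
import Mathlib

section
/- Let Δ ⊂ ℝ³ be a tetrahedron with |Δ| = 1 and Λ_L := (−L/2, L/2)³. There is a constant C depending only on Δ such that for every ρ ∈ [0,1] and all ℓ, L > 0, E_{Λ_L}(ρ)/L³ − μ* ρ ≥ F_{ℓΔ}(ρ)/ℓ³ − C(μ* + |F_{ℓΔ}(ρ)|/ℓ³)(ℓ/L) − C ρ/ℓ. -/
open MeasureTheory Metric Set Filter Bornology
open scoped Topology ENNReal NNReal Pointwise

noncomputable section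

/-- Three-dimensional Euclidean space. -/
abbrev E3 : Type := EuclideanSpace ℝ (Fin 3)

/-- The divergence of a vector field on `E3`, defined as the trace of its derivative. -/
def divg (φ : E3 → E3) (x : E3) : ℝ :=
  LinearMap.trace ℝ E3 (fderiv ℝ φ x : E3 →ₗ[ℝ] E3)

/-- The candidate values `∫_Ω div φ` over `C¹` compactly supported vector fields bounded by one. -/
def perCand (Ω : Set E3) : Set ℝ :=
  {a : ℝ | ∃ φ : E3 → E3, ContDiff ℝ 1 φ ∧ HasCompactSupport φ ∧
      (∀ x, ‖φ x‖ ≤ 1) ∧ a = ∫ x in Ω, divg φ x}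

/-- The perimeter of a set, in the sense of geometric measure theory. -/
def per (Ω : Set E3) : ℝ := sSup (perCand Ω)

/-- A set has finite perimeter if the family of integrals defining the perimeter is
bounded above. -/
def HasFinPer (Ω : Set E3) : Prop := BddAbove (perCand Ω)

/-- The Lebesgue volume of a set as a real number. -/
def vol (Ω : Set E3) : ℝ := (volume Ω).toReal

/-- The liquid drop energy `𝓔_Λ[ρ,Ω]`. -/
def ldEnergy (Λ : Set E3) (ρ : ℝ) (Ω : Set E3) : ℝ :=
  per Ω + (1/2) * ∫ x, ∫ y,
    (Set.indicator Ω (fun _ => (1:ℝ)) x - ρ * Set.indicator Λ (fun _ => (1:ℝ)) x) *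
      (Set.indicator Ω (fun _ => (1:ℝ)) y - ρ * Set.indicator Λ (fun _ => (1:ℝ)) y) / ‖x - y‖

/-- The neutral ground state energy `E_Λ(ρ)`. -/
def EE (Λ : Set E3) (ρ : ℝ) : ℝ :=
  sInf {t : ℝ | ∃ Ω : Set E3, MeasurableSet Ω ∧ Ω ⊆ Λ ∧ HasFinPer Ω ∧
    vol Ω = ρ * vol Λ ∧ t = ldEnergy Λ ρ Ω}

/-- The liquid drop energy `I[Ω]` of an isolated droplet (no background). -/
def II (Ω : Set E3) : ℝ :=
  per Ω + (1/2) * ∫ x in Ω, ∫ y in Ω, 1 / ‖x - y‖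

/-- `μ* = inf I[Ω]/|Ω|`. -/
def muStar : ℝ :=
  sInf {t : ℝ | ∃ Ω : Set E3, MeasurableSet Ω ∧ HasFinPer Ω ∧
    0 < volume Ω ∧ volume Ω < ⊤ ∧ t = II Ω / vol Ω}

/-- A minimizer for the isolated liquid drop problem. -/
def IsMinimizer (Ω : Set E3) : Prop :=
  MeasurableSet Ω ∧ HasFinPer Ω ∧ 0 < volume Ω ∧ volume Ω < ⊤ ∧ II Ω = muStar * vol Ω

/-- The set of masses of minimizers. -/
def minimizerMasses : Set ℝ := {m : ℝ | ∃ Ω : Set E3, IsMinimizer Ω ∧ m = vol Ω}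

/-- The largest mass of a minimizer. -/
def mStar : ℝ := sSup minimizerMasses

/-- The smallest mass of a minimizer. -/
def mStarStar : ℝ := sInf minimizerMasses

/-- `Λ` is an `(r,L)`-Lipschitz open set: near each boundary point it is, in a suitable
orthonormal coordinate system, the epigraph of an `L`-Lipschitz function. -/
def IsLipschitzDomain (r L : ℝ) (Λ : Set E3) : Prop :=
  ∀ x ∈ frontier Λ, ∃ (g : E3 ≃ᵢ E3) (f : ℝ × ℝ → ℝ),
    LipschitzWith L.toNNReal f ∧
    Λ ∩ ball x r = {y ∈ ball x r | f (g y 0, g y 1) < g y 2}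

/-- Fisher regularity of the boundary. -/
def FisherCond (C ℓ : ℝ) (Λ : Set E3) : Prop :=
  ∀ h : ℝ, 0 < h → h ≤ ℓ → (volume (frontier Λ + ball (0:E3) h)).toReal ≤ C * ℓ^2 * h

/-- An admissible sequence of domains for the thermodynamic limit. -/
def IsAdmissibleSeq (r L C : ℝ) (Λs : ℕ → Set E3) (ℓ : ℕ → ℝ) : Prop :=
  Tendsto ℓ atTop atTop ∧
  ∀ n : ℕ, IsOpen (Λs n) ∧ IsBounded (Λs n) ∧ IsLipschitzDomain r L (Λs n) ∧
    ball 0 (ℓ n / C) ⊆ Λs n ∧ Λs n ⊆ ball 0 (ℓ n) ∧ FisherCond C (ℓ n) (Λs n)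

/-- `e` is the thermodynamic limit function of the liquid drop model. -/
def IsThermoLimit (e : ℝ → ℝ) : Prop :=
  ∀ ρ : ℝ, 0 ≤ ρ → ρ ≤ 1 →
    ∀ (r L C : ℝ) (Λs : ℕ → Set E3) (ℓ : ℕ → ℝ), 0 < r → 0 < L → 0 < C →
      IsAdmissibleSeq r L C Λs ℓ →
      Tendsto (fun n => EE (Λs n) ρ / vol (Λs n)) atTop (𝓝 (e ρ))

/-- The domain for the `N`-particle Jellium problem: `N^{1/3} Λ₁` with `Λ₁` the ball of
unit volume centered at the origin. -/
def jelDomain (N : ℕ) : Set E3 :=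
  ball (0:E3) ((N : ℝ) ^ ((1:ℝ)/3) * (3 / (4 * Real.pi)) ^ ((1:ℝ)/3))

/-- The `N`-particle Jellium ground state energy. -/
def jelN (N : ℕ) : ℝ :=
  sInf {t : ℝ | ∃ x : Fin N → E3, (∀ j, x j ∈ jelDomain N) ∧
    t = (∑ j : Fin N, ∑ k : Fin N, if j < k then 1 / ‖x j - x k‖ else 0)
      - (∑ j : Fin N, ∫ y in jelDomain N, 1 / ‖x j - y‖)
      + (1/2) * ∫ x' in jelDomain N, ∫ y in jelDomain N, 1 / ‖x' - y‖}

/-- `eJ` is the Jellium energy per particle in the thermodynamic limit. -/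
def IsJelliumLimit (eJ : ℝ) : Prop :=
  Tendsto (fun N : ℕ => jelN N / (N : ℝ)) atTop (𝓝 eJ)

/-- The grand-canonical liquid drop energy `F_Λ(ρ)`. -/
def FF (Λ : Set E3) (ρ : ℝ) : ℝ :=
  sInf {t : ℝ | ∃ Ω : Set E3, MeasurableSet Ω ∧ Ω ⊆ Λ ∧ HasFinPer Ω ∧
    t = ldEnergy Λ ρ Ω - muStar * vol Ω}

/-- A tetrahedron: the interior of the convex hull of four affinely independent points. -/
def IsTetra (Δ : Set E3) : Prop :=
  ∃ v : Fin 4 → E3, AffineIndependent ℝ v ∧ Δ = interior (convexHull ℝ (Set.range v))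

/-- The open cube `(-L/2, L/2)³`. -/
def cubeL (Lside : ℝ) : Set E3 := {x : E3 | ∀ i, |x i| < Lside / 2}

/-- The grand-canonical Jellium energy of point particles of charge `m` in the domain `S`
with a uniform background of density one. -/
def pointJellium (m : ℝ) (S : Set E3) : ℝ :=
  sInf {t : ℝ | ∃ (n : ℕ) (x : Fin n → E3), (∀ j, x j ∈ S) ∧
    t = (∑ j : Fin n, ∑ k : Fin n, if j < k then m^2 / ‖x j - x k‖ else 0)
      - m * (∑ j : Fin n, ∫ y in S, 1 / ‖x j - y‖)
      + (1/2) * ∫ x' in S, ∫ y in S, 1 / ‖x' - y‖}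

/-- The conclusions of the decomposition theorem for minimizing sequences. -/
def IsDecomp (Ω : ℕ → Set E3) (m : ℝ) (K : ℕ) (Ωs : Fin K → Set E3)
    (a : ℕ → Fin K → E3) (R : ℝ) (φ : ℕ → ℕ) : Prop :=
  StrictMono φ ∧ 0 < R ∧
  (∀ j k : Fin K, j ≠ k → Tendsto (fun n => ‖a n j - a n k‖) atTop atTop) ∧
  (∀ j, IsMinimizer (Ωs j)) ∧
  (∀ j, mStarStar ≤ vol (Ωs j) ∧ vol (Ωs j) ≤ mStar) ∧
  (∀ j, Tendsto
    (fun n => volume (symmDiff ({x : E3 | x + a n j ∈ Ω (φ n)} ∩ ball (0:E3) R) (Ωs j)))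
    atTop (𝓝 0)) ∧
  Tendsto (fun n => volume (Ω (φ n) \ ⋃ j, ball (a n j) R)) atTop (𝓝 0) ∧
  Tendsto (fun n => per (Ω (φ n) \ ⋃ j, ball (a n j) R)) atTop (𝓝 0) ∧
  m = ∑ j, vol (Ωs j) ∧
  (2 ≤ K → ∃ ε : ℕ → ℝ, Tendsto ε atTop (𝓝 0) ∧ ∀ n : ℕ,
    muStar * vol (Ω (φ n)) +
      (∑ j : Fin K, ∑ k : Fin K,
        if j < k then (vol (Ωs j) * vol (Ωs k) + ε n) / ‖a n j - a n k‖ else 0)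
      ≤ II (Ω (φ n)))

instance : MeasurableSpace (Matrix (Fin 3) (Fin 3) ℝ) :=
  (inferInstance : MeasurableSpace (Fin 3 → Fin 3 → ℝ))

/-- The rotation group SO(3), as a set of matrices. -/
def SO3 : Set (Matrix (Fin 3) (Fin 3) ℝ) := {R | R * R.transpose = 1 ∧ R.det = 1}

/-- The action of a matrix on Euclidean space. -/
def rot (R : Matrix (Fin 3) (Fin 3) ℝ) (x : E3) : E3 :=
  (EuclideanSpace.equiv (Fin 3) ℝ).symm (R.mulVec (EuclideanSpace.equiv (Fin 3) ℝ x))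

/-- The image of a set under the rigid motion `x ↦ Rx + τ`. -/
def rigidImage (R : Matrix (Fin 3) (Fin 3) ℝ) (τ : E3) (S : Set E3) : Set E3 :=
  (fun x => rot R x + τ) '' S

/-- `μ` is the normalized Haar measure of SO(3): a probability measure concentrated on SO(3)
which is invariant under left multiplication by rotations. -/
def IsHaarSO3 (μ : Measure (Matrix (Fin 3) (Fin 3) ℝ)) : Prop :=
  IsProbabilityMeasure μ ∧ μ SO3ᶜ = 0 ∧ ∀ S ∈ SO3, Measure.map (fun R => S * R) μ = μ

/-- The cube of the tiling of side length `ε` indexed by `z ∈ ℤ³`. -/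
def cubeZ (ε : ℝ) (z : Fin 3 → ℤ) : Set E3 := {x : E3 | ∀ i, |x i - ε * (z i : ℝ)| < ε / 2}

/-- The distance between two sets. -/
def setDist (s t : Set E3) : ℝ := sInf {d : ℝ | ∃ p ∈ s, ∃ q ∈ t, d = dist p q}

/-- The outer cubic boundary layer of `Λ` at scale `ε`. -/
def outerLayer (Λ : Set E3) (ε : ℝ) : Set E3 :=
  ⋃ z ∈ {z : Fin 3 → ℤ | setDist (cubeZ ε z) (frontier Λ) ≤ ε}, closure (cubeZ ε z \ Λ)

lemma divg_eq (φ : E3 → E3) (x : E3) :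
    divg φ x = ∑ i : Fin 3, (fderiv ℝ φ x (EuclideanSpace.single i 1)) i := by
  unfold divg
  rw [LinearMap.trace_eq_sum_inner _ (EuclideanSpace.basisFun (Fin 3) ℝ)]
  refine Finset.sum_congr rfl fun i _ => ?_
  simp [EuclideanSpace.basisFun_apply, EuclideanSpace.inner_single_left]

lemma fderiv_coord {φ : E3 → E3} {x : E3} (h : DifferentiableAt ℝ φ x) (i : Fin 3) (v : E3) :
    fderiv ℝ (fun y => φ y i) x v = (fderiv ℝ φ x v) i := by
  have h1 := (EuclideanSpace.proj (𝕜 := ℝ) i : E3 →L[ℝ] ℝ).hasFDerivAt.comp x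
    h.hasFDerivAt
  have h2 : HasFDerivAt (fun y => φ y i)
      ((EuclideanSpace.proj (𝕜 := ℝ) i : E3 →L[ℝ] ℝ).comp (fderiv ℝ φ x)) x := h1
  rw [h2.fderiv]; rfl

lemma contDiff_coord {φ : E3 → E3} (h : ContDiff ℝ 1 φ) (i : Fin 3) :
    ContDiff ℝ 1 (fun y => φ y i) :=
  (EuclideanSpace.proj (𝕜 := ℝ) i : E3 →L[ℝ] ℝ).contDiff.comp h

lemma hcs_coord {φ : E3 → E3} (h : HasCompactSupport φ) (i : Fin 3) :
    HasCompactSupport (fun y => φ y i) :=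
  h.comp_left (g := fun z : E3 => z i) rfl

lemma divg_continuous {φ : E3 → E3} (h : ContDiff ℝ 1 φ) : Continuous (divg φ) := by
  have : divg φ = fun x => ∑ i : Fin 3, (fderiv ℝ φ x (EuclideanSpace.single i 1)) i := by
    ext x; exact divg_eq φ x
  rw [this]
  have h1 : Continuous (fderiv ℝ φ) := h.continuous_fderiv (by norm_num)
  refine continuous_finsetSum _ fun i _ => ?_
  exact (EuclideanSpace.proj (𝕜 := ℝ) i : E3 →L[ℝ] ℝ).continuous.comp
    (h1.clm_apply continuous_const)

lemma divg_hcs {φ : E3 → E3} (h : HasCompactSupport φ) : HasCompactSupport (divg φ) := by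
  have := h.fderiv (𝕜 := ℝ)
  exact this.comp_left (g := fun A : E3 →L[ℝ] E3 => LinearMap.trace ℝ E3 (A : E3 →ₗ[ℝ] E3))
    (by simp)

lemma divg_integrable {φ : E3 → E3} (h : ContDiff ℝ 1 φ) (h' : HasCompactSupport φ) :
    Integrable (divg φ) :=
  (divg_continuous h).integrable_of_hasCompactSupport (divg_hcs h')

lemma divg_translate (φ : E3 → E3) (s x : E3) :
    divg (fun y => φ (y + s)) x = divg φ (x + s) := by
  unfold divg; rw [fderiv_comp_add_right]

lemma clm_sum (A : E3 →L[ℝ] ℝ) (v : E3) :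
    A v = ∑ i : Fin 3, A (EuclideanSpace.single i 1) * v i := by
  have : v = ∑ i : Fin 3, (v i) • (EuclideanSpace.single i (1:ℝ) : E3) := by
    ext j; fin_cases j <;> simp [Fin.sum_univ_three]
  conv_lhs => rw [this]
  rw [map_sum]
  refine Finset.sum_congr rfl fun i _ => ?_
  rw [map_smul, smul_eq_mul, mul_comm]

/-- Integration by parts against a compactly supported vector field. -/
lemma integral_mul_divg {v : E3 → ℝ} {φ : E3 → E3} (hv : ContDiff ℝ 1 v)
    (h : ContDiff ℝ 1 φ) (h' : HasCompactSupport φ) :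
    ∫ x, v x * divg φ x = - ∫ x, fderiv ℝ v x (φ x) := by
  have hcv : Continuous (fderiv ℝ v) := hv.continuous_fderiv (by norm_num)
  have hI1 : ∀ i : Fin 3, Integrable (fun x => fderiv ℝ v x (EuclideanSpace.single i 1) * φ x i) := by
    intro i
    refine Continuous.integrable_of_hasCompactSupport ?_ ?_
    · exact (hcv.clm_apply continuous_const).mul (contDiff_coord h i).continuous
    · exact (hcs_coord h' i).mul_left
  have hI2 : ∀ i : Fin 3, Integrable
      (fun x => v x * fderiv ℝ (fun y => φ y i) x (EuclideanSpace.single i 1)) := by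
    intro i
    refine Continuous.integrable_of_hasCompactSupport ?_ ?_
    · exact hv.continuous.mul
        (((contDiff_coord h i).continuous_fderiv (by norm_num)).clm_apply continuous_const)
    · refine HasCompactSupport.mul_left ?_
      exact ((hcs_coord h' i).fderiv (𝕜 := ℝ)).comp_left
        (g := fun A : E3 →L[ℝ] ℝ => A (EuclideanSpace.single i 1)) (by simp)
  have hI3 : ∀ i : Fin 3, Integrable (fun x => v x * φ x i) := by
    intro i
    refine Continuous.integrable_of_hasCompactSupport ?_ ?_
    · exact hv.continuous.mul (contDiff_coord h i).continuous
    · exact (hcs_coord h' i).mul_left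
  have key : ∀ i : Fin 3, ∫ x, v x * fderiv ℝ (fun y => φ y i) x (EuclideanSpace.single i 1)
      = - ∫ x, fderiv ℝ v x (EuclideanSpace.single i 1) * φ x i := fun i =>
    integral_mul_fderiv_eq_neg_fderiv_mul_of_integrable (hI1 i) (hI2 i) (hI3 i)
      (fun x _ => hv.differentiable (by norm_num) x)
      (fun x _ => (contDiff_coord h i).differentiable (by norm_num) x)
  have e1 : (fun x => v x * divg φ x) = fun x =>
      ∑ i : Fin 3, v x * fderiv ℝ (fun y => φ y i) x (EuclideanSpace.single i 1) := by
    ext x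
    rw [divg_eq, Finset.mul_sum]
    refine Finset.sum_congr rfl fun i _ => ?_
    rw [fderiv_coord (h.differentiable (by norm_num) x)]
  have e2 : (fun x => fderiv ℝ v x (φ x)) = fun x =>
      ∑ i : Fin 3, fderiv ℝ v x (EuclideanSpace.single i 1) * φ x i := by
    ext x; exact clm_sum _ _
  rw [e1, e2, integral_finsetSum _ (fun i _ => hI2 i), integral_finsetSum _ (fun i _ => hI1 i),
    ← Finset.sum_neg_distrib]
  exact Finset.sum_congr rfl fun i _ => key i

lemma zero_mem_perCand (Ω : Set E3) : (0:ℝ) ∈ perCand Ω := by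
  refine ⟨fun _ => 0, contDiff_const, HasCompactSupport.zero, by simp, ?_⟩
  have : divg (fun _ : E3 => (0:E3)) = fun _ => 0 := by
    ext x; simp [divg]
  rw [this]; simp

lemma per_nonneg (Ω : Set E3) : 0 ≤ per Ω := by
  unfold per
  by_cases h : BddAbove (perCand Ω)
  · exact le_csSup h (zero_mem_perCand Ω)
  · rw [Real.sSup_of_not_bddAbove h]

lemma le_per {Ω : Set E3} (hΩ : HasFinPer Ω) {φ : E3 → E3} (h : ContDiff ℝ 1 φ)
    (h' : HasCompactSupport φ) (h1 : ∀ x, ‖φ x‖ ≤ 1) : ∫ x in Ω, divg φ x ≤ per Ω :=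
  le_csSup hΩ ⟨φ, h, h', h1, rfl⟩

/-- A shrinking sequence of smooth bump functions. -/
def bmp (n : ℕ) : ContDiffBump (0 : E3) where
  rIn := 1 / ((n:ℝ) + 1)
  rOut := 2 / ((n:ℝ) + 1)
  rIn_pos := by positivity
  rIn_lt_rOut := by
    have : (0:ℝ) < (n:ℝ) + 1 := by positivity
    gcongr; norm_num

/-- Mollification of the characteristic function of a set. -/
def moll (n : ℕ) (Ω : Set E3) : E3 → ℝ :=
  convolution ((bmp n).normed volume) (Ω.indicator (fun _ => (1:ℝ)))
    (ContinuousLinearMap.lsmul ℝ ℝ) volume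

lemma moll_apply (n : ℕ) (Ω : Set E3) (x : E3) :
    moll n Ω x = ∫ t, (bmp n).normed volume t * Ω.indicator (fun _ => (1:ℝ)) (x - t) := by
  simp [moll, convolution_def]

lemma bmp_cont (n : ℕ) : Continuous ((bmp n).normed (volume : Measure E3)) :=
  ((bmp n).contDiff_normed (n := 0)).continuous

lemma bmp_integrable (n : ℕ) : Integrable ((bmp n).normed (volume : Measure E3)) :=
  (bmp n).integrable_normed

lemma ind_integrable {Ω : Set E3} (hΩ : MeasurableSet Ω) (hb : IsBounded Ω) :
    Integrable (Ω.indicator (fun _ => (1:ℝ))) :=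
  (integrable_indicator_iff hΩ).2 (integrableOn_const hb.measure_lt_top.ne)

lemma moll_contDiff (n : ℕ) {Ω : Set E3} (hΩ : MeasurableSet Ω) (hb : IsBounded Ω) :
    ContDiff ℝ 2 (moll n Ω) := by
  have := HasCompactSupport.contDiff_convolution_left (𝕜 := ℝ) (μ := (volume : Measure E3))
    (ContinuousLinearMap.lsmul ℝ ℝ) (n := 2)
    ((bmp n).hasCompactSupport_normed (μ := (volume : Measure E3)))
    ((bmp n).contDiff_normed (μ := (volume : Measure E3)))
    (ind_integrable hΩ hb).locallyIntegrable
  exact this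

lemma moll_hcs (n : ℕ) {Ω : Set E3} (hb : IsBounded Ω) :
    HasCompactSupport (moll n Ω) := by
  refine HasCompactSupport.convolution _ ((bmp n).hasCompactSupport_normed) ?_
  refine HasCompactSupport.intro (K := closure Ω) hb.isCompact_closure ?_
  intro x hx
  exact indicator_of_notMem (fun h => hx (subset_closure h)) _

lemma moll_nonneg (n : ℕ) (Ω : Set E3) (x : E3) : 0 ≤ moll n Ω x := by
  rw [moll_apply]
  refine integral_nonneg fun t => mul_nonneg ((bmp n).nonneg_normed t) ?_
  exact indicator_nonneg (fun _ _ => zero_le_one) _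

lemma moll_integrand_integrable (n : ℕ) {Ω : Set E3} (hΩ : MeasurableSet Ω) (x : E3) :
    Integrable (fun t => (bmp n).normed volume t * Ω.indicator (fun _ => (1:ℝ)) (x - t)) := by
  refine (bmp_integrable n).mul_bdd (c := 1) ?_ (Eventually.of_forall fun t => ?_)
  · exact ((measurable_const.indicator hΩ).comp (measurable_const.sub measurable_id)).aestronglyMeasurable
  · by_cases h : x - t ∈ Ω <;> simp [h]

lemma moll_le_one (n : ℕ) {Ω : Set E3} (hΩ : MeasurableSet Ω) (x : E3) : moll n Ω x ≤ 1 := by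
  rw [moll_apply]
  refine le_trans ?_ ((bmp n).integral_normed (μ := (volume : Measure E3))).le
  refine integral_mono (moll_integrand_integrable n hΩ x) (bmp_integrable n) fun t => ?_
  have : Ω.indicator (fun _ => (1:ℝ)) (x - t) ≤ 1 := by
    by_cases h : x - t ∈ Ω <;> simp [h]
  nlinarith [(bmp n).nonneg_normed (μ := (volume : Measure E3)) t]

lemma moll_tendsto {Ω : Set E3} (hΩ : MeasurableSet Ω) (hb : IsBounded Ω) :
    ∀ᵐ x : E3, Tendsto (fun n => moll n Ω x) atTop (𝓝 (Ω.indicator (fun _ => (1:ℝ)) x)) := by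
  refine ContDiffBump.ae_convolution_tendsto_right_of_locallyIntegrable (K := 2) ?_ ?_
    (ind_integrable hΩ hb).locallyIntegrable
  · have := tendsto_one_div_add_atTop_nhds_zero_nat (𝕜 := ℝ)
    have h2 := this.const_mul 2
    simp only [mul_zero] at h2
    refine h2.congr fun n => ?_
    simp [bmp]; ring
  · refine Eventually.of_forall fun n => ?_
    simp [bmp]; apply le_of_eq; ring

lemma moll_joint_integrable (n : ℕ) {Ω : Set E3} (hΩ : MeasurableSet Ω) {ψ : E3 → ℝ}
    (hψ : Integrable ψ) :
    Integrable (fun p : E3 × E3 => (bmp n).normed volume p.1 *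
      Ω.indicator (fun _ => (1:ℝ)) (p.2 - p.1) * ψ p.2) (volume.prod volume) := by
  have h1 : Integrable (fun p : E3 × E3 => (bmp n).normed volume p.1 * ψ p.2)
      (volume.prod volume) := (bmp_integrable n).mul_prod hψ
  have h2 := h1.bdd_mul (c := 1) (f := fun p : E3 × E3 => Ω.indicator (fun _ => (1:ℝ)) (p.2 - p.1))
    ((measurable_const.indicator hΩ).comp (measurable_snd.sub measurable_fst)).aestronglyMeasurable
    (Eventually.of_forall fun p => by by_cases h : p.2 - p.1 ∈ Ω <;> simp [h])
  refine h2.congr (Eventually.of_forall fun p => ?_)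
  simp only; ring

lemma moll_integral_mul (n : ℕ) {Ω : Set E3} (hΩ : MeasurableSet Ω) {ψ : E3 → ℝ}
    (hψ : Integrable ψ) :
    ∫ x, moll n Ω x * ψ x = ∫ t, (bmp n).normed volume t * ∫ x in Ω, ψ (x + t) := by
  have e1 : ∀ x, moll n Ω x * ψ x = ∫ t, (bmp n).normed volume t *
      Ω.indicator (fun _ => (1:ℝ)) (x - t) * ψ x := by
    intro x
    rw [moll_apply, integral_mul_const]
  simp_rw [e1]
  rw [integral_integral_swap (f := fun x t => (bmp n).normed volume t *
      Ω.indicator (fun _ => (1:ℝ)) (x - t) * ψ x) (moll_joint_integrable n hΩ hψ).swap]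
  refine integral_congr_ae (Eventually.of_forall fun t => ?_)
  simp only
  simp_rw [mul_assoc]
  rw [integral_const_mul, ← integral_indicator hΩ]
  congr 1
  rw [← integral_add_right_eq_self _ t]
  refine integral_congr_ae (Eventually.of_forall fun x => ?_)
  by_cases h : x ∈ Ω <;> simp [h]

lemma moll_test (n : ℕ) {Ω : Set E3} (hΩ : MeasurableSet Ω) (hf : HasFinPer Ω)
    {φ : E3 → E3} (h : ContDiff ℝ 1 φ) (h' : HasCompactSupport φ) (h1 : ∀ x, ‖φ x‖ ≤ 1) :
    ∫ x, moll n Ω x * divg φ x ≤ per Ω := by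
  rw [moll_integral_mul n hΩ (divg_integrable h h')]
  have hI := moll_joint_integrable n hΩ (divg_integrable h h')
  have e : (fun t => (bmp n).normed volume t * ∫ x in Ω, divg φ (x + t)) = fun t =>
      ∫ x, (bmp n).normed volume t * Ω.indicator (fun _ => (1:ℝ)) (x - t) * divg φ x := by
    ext t
    simp_rw [mul_assoc]
    rw [integral_const_mul, ← integral_indicator hΩ]
    congr 1
    rw [← integral_add_right_eq_self
      (fun x => Ω.indicator (fun _ => (1:ℝ)) (x - t) * divg φ x) t]
    refine integral_congr_ae (Eventually.of_forall fun x => ?_)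
    by_cases h : x ∈ Ω <;> simp [h]
  calc ∫ t, (bmp n).normed volume t * ∫ x in Ω, divg φ (x + t)
      ≤ ∫ t, (bmp n).normed volume t * per Ω := by
        refine integral_mono ?_ ((bmp_integrable n).mul_const _) fun t => ?_
        · rw [e]; exact hI.integral_prod_left
        · refine mul_le_mul_of_nonneg_left ?_ ((bmp n).nonneg_normed t)
          simp_rw [← divg_translate φ t]
          refine le_per hf (h.comp (contDiff_id.add contDiff_const)) ?_ fun x => h1 _
          exact h'.comp_homeomorph (Homeomorph.addRight t)
    _ = per Ω := by rw [integral_mul_const, (bmp n).integral_normed, one_mul]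

lemma moll_integral (n : ℕ) {Ω : Set E3} (hΩ : MeasurableSet Ω) (hb : IsBounded Ω) :
    ∫ x, moll n Ω x = vol Ω := by
  unfold moll
  rw [integral_convolution _ (bmp_integrable n) (ind_integrable hΩ hb)]
  rw [(bmp n).integral_normed, integral_indicator hΩ]
  simp [vol, Measure.real]

lemma moll_integrable (n : ℕ) {Ω : Set E3} (hΩ : MeasurableSet Ω) (hb : IsBounded Ω) :
    Integrable (moll n Ω) :=
  (moll_contDiff n hΩ hb).continuous.integrable_of_hasCompactSupport (moll_hcs n hb)

lemma moll_grad (n : ℕ) {Ω : Set E3} (hΩ : MeasurableSet Ω) (hb : IsBounded Ω)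
    (hf : HasFinPer Ω) : ∫ x, ‖fderiv ℝ (moll n Ω) x‖ ≤ per Ω := by
  set u := moll n Ω with hu
  have hu2 : ContDiff ℝ 2 u := moll_contDiff n hΩ hb
  have hus : HasCompactSupport u := moll_hcs n hb
  have hd1 : ContDiff ℝ 1 (fderiv ℝ u) := hu2.fderiv_right (by norm_num)
  have hds : HasCompactSupport (fderiv ℝ u) := hus.fderiv (𝕜 := ℝ)
  have hinteg : Integrable (fun x => ‖fderiv ℝ u x‖) :=
    hd1.continuous.norm.integrable_of_hasCompactSupport hds.norm
  set G : E3 → E3 := fun x => (InnerProductSpace.toDual ℝ E3).symm (fderiv ℝ u x) with hG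
  have hG1 : ContDiff ℝ 1 G :=
    ((InnerProductSpace.toDual ℝ E3).symm.toContinuousLinearEquiv.toContinuousLinearMap.contDiff).comp hd1
  have hGs : HasCompactSupport G := hds.comp_left (g := (InnerProductSpace.toDual ℝ E3).symm) (by simp)
  have hGn : ∀ x, ‖G x‖ = ‖fderiv ℝ u x‖ := fun x => by simp [hG]
  have hGu : ∀ x v, fderiv ℝ u x v = inner ℝ (G x) v := fun x v => by
    simp [hG]
  have main : ∀ κ : ℝ, 0 < κ →
      ∫ x, ‖fderiv ℝ u x‖ ≤ per Ω + κ * (volume (tsupport (fderiv ℝ u))).toReal := by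
    intro κ hκ
    set N : E3 → ℝ := fun x => Real.sqrt (‖G x‖ ^ 2 + κ ^ 2) with hN
    have hNpos : ∀ x, 0 < N x := fun x => Real.sqrt_pos.2 (by positivity)
    have hNG : ∀ x, ‖G x‖ ≤ N x := fun x => Real.le_sqrt_of_sq_le (by nlinarith [sq_nonneg κ])
    have hN1 : ContDiff ℝ 1 N :=
      ContDiff.sqrt ((hG1.norm_sq ℝ).add contDiff_const) (fun x => by positivity)
    set φ : E3 → E3 := fun x => (-(N x)⁻¹) • G x with hφ
    have hφ1 : ContDiff ℝ 1 φ := ((hN1.inv fun x => (hNpos x).ne').neg).smul hG1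
    have hφs : HasCompactSupport φ := by
      refine HasCompactSupport.intro (K := tsupport G) hGs fun x hx => ?_
      have h0 : G x = 0 := image_eq_zero_of_notMem_tsupport hx
      simp only [hφ, h0, smul_zero]
    have hφn : ∀ x, ‖φ x‖ ≤ 1 := by
      intro x
      simp only [hφ, norm_smul, norm_neg, norm_inv, Real.norm_eq_abs, abs_of_pos (hNpos x)]
      rw [inv_mul_le_iff₀ (hNpos x), mul_one]; exact hNG x
    have h1 := moll_test n hΩ hf hφ1 hφs hφn
    rw [integral_mul_divg (hu2.of_le (by norm_num)) hφ1 hφs, ← integral_neg] at h1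
    have hI1 : Integrable (fun x => -(fderiv ℝ u x) (φ x)) := by
      refine Continuous.integrable_of_hasCompactSupport
        ((hd1.continuous.clm_apply hφ1.continuous).neg) ?_
      refine HasCompactSupport.neg ?_
      refine HasCompactSupport.intro (K := tsupport φ) hφs fun x hx => ?_
      rw [image_eq_zero_of_notMem_tsupport hx, map_zero]
    have hI2 : Integrable ((tsupport (fderiv ℝ u)).indicator (fun _ => κ)) :=
      (integrable_indicator_iff (isClosed_tsupport _).measurableSet).2
        (integrableOn_const hds.measure_lt_top.ne)
    have h2 : ∫ x, ‖fderiv ℝ u x‖ ≤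
        ∫ x, (-(fderiv ℝ u x) (φ x) + (tsupport (fderiv ℝ u)).indicator (fun _ => κ) x) := by
      refine integral_mono hinteg (hI1.add hI2) fun x => ?_
      by_cases hx : x ∈ tsupport (fderiv ℝ u)
      · simp only [indicator_of_mem hx]
        rw [hGu]
        simp only [hφ, inner_smul_right, real_inner_self_eq_norm_sq, ← hGn]
        have hle : N x ≤ ‖G x‖ + κ := by
          refine Real.sqrt_le_iff.2 ⟨by positivity, ?_⟩
          nlinarith [norm_nonneg (G x)]
        have h3 : (N x)⁻¹ * (N x) = 1 := inv_mul_cancel₀ (hNpos x).ne'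
        have h4 : N x ^ 2 = ‖G x‖ ^ 2 + κ ^ 2 := Real.sq_sqrt (by positivity)
        have h5 : (N x)⁻¹ * κ ≤ 1 := by
          rw [inv_mul_le_iff₀ (hNpos x), mul_one]
          exact Real.le_sqrt_of_sq_le (by nlinarith [sq_nonneg ‖G x‖])
        have h6 : (N x)⁻¹ * ‖G x‖ ^ 2 = N x - (N x)⁻¹ * κ * κ := by
          have : ‖G x‖ ^ 2 = N x * N x - κ * κ := by nlinarith
          rw [this, mul_sub, ← mul_assoc, h3]; ring
        have := hNG x
        nlinarith
      · have : fderiv ℝ u x = 0 := image_eq_zero_of_notMem_tsupport hx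
        simp [this, indicator_of_notMem hx]
    rw [integral_add hI1 hI2, integral_indicator (isClosed_tsupport _).measurableSet] at h2
    simp only [integral_const, smul_eq_mul, Measure.real, Measure.restrict_apply_univ] at h2
    linarith
  refine le_of_forall_pos_le_add fun ε hε => ?_
  set M := (volume (tsupport (fderiv ℝ u))).toReal
  have hM : 0 ≤ M := ENNReal.toReal_nonneg
  refine (main (ε / (M + 1)) (by positivity)).trans ?_
  have : ε / (M + 1) * M ≤ ε := by
    rw [div_mul_eq_mul_div, div_le_iff₀ (by positivity)]; nlinarith
  linarith

/-- The part of the translate of `Ω` by `-τ` lying in `T`. -/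
def slc (Ω T : Set E3) (τ : E3) : Set E3 := {x | x ∈ T ∧ x + τ ∈ Ω}

lemma slc_meas {Ω T : Set E3} (hΩ : MeasurableSet Ω) (hT : MeasurableSet T) (τ : E3) :
    MeasurableSet (slc Ω T τ) :=
  hT.inter (hΩ.preimage (measurable_id.add measurable_const))

/-- The approximate perimeter of a localized set. -/
def perA (Ω T : Set E3) (n : ℕ) (τ : E3) : ℝ≥0∞ :=
  ∫⁻ x, (‖fderiv ℝ (moll n Ω) (x + τ)‖ₑ * ENNReal.ofReal (moll n T x) +
    ENNReal.ofReal (moll n Ω (x + τ)) * ‖fderiv ℝ (moll n T) x‖ₑ)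


lemma moll_fd_cont (n : ℕ) {Ω : Set E3} (hΩ : MeasurableSet Ω) (hbΩ : IsBounded Ω) :
    Continuous (fderiv ℝ (moll n Ω)) :=
  (moll_contDiff n hΩ hbΩ).continuous_fderiv (by norm_num)

lemma perA_joint_meas {Ω T : Set E3} (hΩ : MeasurableSet Ω) (hbΩ : IsBounded Ω)
    (hT : MeasurableSet T) (hbT : IsBounded T) (n : ℕ) :
    Measurable (fun p : E3 × E3 =>
      (‖fderiv ℝ (moll n Ω) (p.2 + p.1)‖ₑ * ENNReal.ofReal (moll n T p.2) +
        ENNReal.ofReal (moll n Ω (p.2 + p.1)) * ‖fderiv ℝ (moll n T) p.2‖ₑ)) := by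
  have c1 := (moll_fd_cont n hΩ hbΩ)
  have c2 := (moll_fd_cont n hT hbT)
  have c3 := (moll_contDiff n hΩ hbΩ).continuous
  have c4 := (moll_contDiff n hT hbT).continuous
  have hs : Continuous (fun p : E3 × E3 => p.2 + p.1) := continuous_snd.add continuous_fst
  have m1 := (c1.comp hs).enorm.measurable
  have m2 := ENNReal.measurable_ofReal.comp (c4.comp (continuous_snd : Continuous (Prod.snd : E3 × E3 → E3))).measurable
  have m3 := ENNReal.measurable_ofReal.comp (c3.comp hs).measurable
  have m4 := (c2.comp (continuous_snd : Continuous (Prod.snd : E3 × E3 → E3))).enorm.measurable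
  exact (m1.mul m2).add (m3.mul m4)

lemma perA_meas {Ω T : Set E3} (hΩ : MeasurableSet Ω) (hbΩ : IsBounded Ω)
    (hT : MeasurableSet T) (hbT : IsBounded T) (n : ℕ) : Measurable (perA Ω T n) :=
  Measurable.lintegral_prod_right' (perA_joint_meas hΩ hbΩ hT hbT n)

lemma moll_grad_l (n : ℕ) {Ω : Set E3} (hΩ : MeasurableSet Ω) (hb : IsBounded Ω)
    (hf : HasFinPer Ω) : ∫⁻ x, ‖fderiv ℝ (moll n Ω) x‖ₑ ≤ ENNReal.ofReal (per Ω) := by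
  have hinteg : Integrable (fderiv ℝ (moll n Ω)) :=
    (moll_fd_cont n hΩ hb).integrable_of_hasCompactSupport ((moll_hcs n hb).fderiv (𝕜 := ℝ))
  rw [← ofReal_integral_norm_eq_lintegral_enorm hinteg]
  exact ENNReal.ofReal_le_ofReal (moll_grad n hΩ hb hf)

lemma moll_int_l (n : ℕ) {Ω : Set E3} (hΩ : MeasurableSet Ω) (hb : IsBounded Ω) :
    ∫⁻ x, ENNReal.ofReal (moll n Ω x) = ENNReal.ofReal (vol Ω) := by
  rw [← moll_integral n hΩ hb, ofReal_integral_eq_lintegral_ofReal (moll_integrable n hΩ hb)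
    (Eventually.of_forall fun x => moll_nonneg n Ω x)]

lemma vol_nonneg (Ω : Set E3) : 0 ≤ vol Ω := ENNReal.toReal_nonneg

lemma perA_lintegral {Ω T : Set E3} (hΩ : MeasurableSet Ω) (hbΩ : IsBounded Ω)
    (hT : MeasurableSet T) (hbT : IsBounded T) (hfΩ : HasFinPer Ω) (hfT : HasFinPer T) (n : ℕ) :
    ∫⁻ τ, perA Ω T n τ ≤ ENNReal.ofReal (vol T * per Ω + per T * vol Ω) := by
  unfold perA
  rw [lintegral_lintegral_swap (perA_joint_meas hΩ hbΩ hT hbT n).aemeasurable]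
  have c1 := (moll_fd_cont n hΩ hbΩ)
  have c3 := (moll_contDiff n hΩ hbΩ).continuous
  have e : ∀ x : E3, ∫⁻ τ, (‖fderiv ℝ (moll n Ω) (x + τ)‖ₑ * ENNReal.ofReal (moll n T x) +
      ENNReal.ofReal (moll n Ω (x + τ)) * ‖fderiv ℝ (moll n T) x‖ₑ) ≤
      ENNReal.ofReal (per Ω) * ENNReal.ofReal (moll n T x) +
      ENNReal.ofReal (vol Ω) * ‖fderiv ℝ (moll n T) x‖ₑ := by
    intro x
    have m1 : Measurable (fun τ : E3 => ‖fderiv ℝ (moll n Ω) (x + τ)‖ₑ) :=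
      (c1.comp (continuous_const.add continuous_id)).enorm.measurable
    have m2 : Measurable (fun τ : E3 => ENNReal.ofReal (moll n Ω (x + τ))) :=
      ENNReal.measurable_ofReal.comp (c3.comp (continuous_const.add continuous_id)).measurable
    rw [lintegral_add_left (m1.mul_const _), lintegral_mul_const _ m1, lintegral_mul_const _ m2,
      lintegral_add_left_eq_self (fun z => ‖fderiv ℝ (moll n Ω) z‖ₑ) x,
      lintegral_add_left_eq_self (fun z => ENNReal.ofReal (moll n Ω z)) x,
      moll_int_l n hΩ hbΩ]
    gcongr
    exact moll_grad_l n hΩ hbΩ hfΩ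
  refine (lintegral_mono e).trans ?_
  have m3 : Measurable (fun x : E3 => ENNReal.ofReal (moll n T x)) :=
    ENNReal.measurable_ofReal.comp (moll_contDiff n hT hbT).continuous.measurable
  have m4 : Measurable (fun x : E3 => ‖fderiv ℝ (moll n T) x‖ₑ) :=
    (moll_fd_cont n hT hbT).enorm.measurable
  rw [lintegral_add_left (m3.const_mul _), lintegral_const_mul _ m3, lintegral_const_mul _ m4,
    moll_int_l n hT hbT]
  rw [ENNReal.ofReal_add (mul_nonneg (vol_nonneg _) (per_nonneg _))
    (mul_nonneg (per_nonneg _) (vol_nonneg _)),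
    mul_comm (vol T), mul_comm (per T), ENNReal.ofReal_mul (per_nonneg _),
    ENNReal.ofReal_mul (vol_nonneg _)]
  gcongr
  exact moll_grad_l n hT hbT hfT

lemma moll_prod_bound {Ω T : Set E3} (hΩ : MeasurableSet Ω) (hbΩ : IsBounded Ω)
    (hT : MeasurableSet T) (hbT : IsBounded T) (n : ℕ) (τ : E3) {φ : E3 → E3}
    (h : ContDiff ℝ 1 φ) (h' : HasCompactSupport φ) (h1 : ∀ x, ‖φ x‖ ≤ 1) :
    ENNReal.ofReal (∫ x, moll n Ω (x + τ) * moll n T x * divg φ x) ≤ perA Ω T n τ := by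
  set u := moll n Ω
  set χ := moll n T
  have hu : ContDiff ℝ 1 (fun x => u (x + τ)) :=
    ((moll_contDiff n hΩ hbΩ).of_le (by norm_num)).comp (contDiff_id.add contDiff_const)
  have hχ : ContDiff ℝ 1 χ := (moll_contDiff n hT hbT).of_le (by norm_num)
  have hv : ContDiff ℝ 1 (fun x => u (x + τ) * χ x) := hu.mul hχ
  rw [integral_mul_divg hv h h']
  calc ENNReal.ofReal (-∫ x, fderiv ℝ (fun x => u (x + τ) * χ x) x (φ x))
      ≤ ‖∫ x, fderiv ℝ (fun x => u (x + τ) * χ x) x (φ x)‖ₑ := by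
        rw [← ofReal_norm]
        exact ENNReal.ofReal_le_ofReal (neg_le_abs _)
    _ ≤ ∫⁻ x, ‖fderiv ℝ (fun x => u (x + τ) * χ x) x (φ x)‖ₑ := enorm_integral_le_lintegral_enorm _
    _ ≤ perA Ω T n τ := by
        refine lintegral_mono fun x => ?_
        have hd1 : DifferentiableAt ℝ (fun x => u (x + τ)) x := hu.differentiable (by norm_num) x
        have hd2 : DifferentiableAt ℝ χ x := hχ.differentiable (by norm_num) x
        have e : fderiv ℝ (fun x => u (x + τ) * χ x) x =
            u (x + τ) • fderiv ℝ χ x + χ x • fderiv ℝ u (x + τ) := by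
          rw [fderiv_fun_mul hd1 hd2, fderiv_comp_add_right]
        have hun : 0 ≤ u (x + τ) := moll_nonneg _ _ _
        have hχn : 0 ≤ χ x := moll_nonneg _ _ _
        have : ‖fderiv ℝ (fun x => u (x + τ) * χ x) x (φ x)‖ ≤
            ‖fderiv ℝ u (x + τ)‖ * χ x + u (x + τ) * ‖fderiv ℝ χ x‖ := by
          refine (ContinuousLinearMap.le_opNorm _ _).trans ?_
          refine (mul_le_of_le_one_right (norm_nonneg _) (h1 x)).trans ?_
          rw [e]
          refine (norm_add_le _ _).trans ?_
          rw [norm_smul, norm_smul, Real.norm_of_nonneg hun, Real.norm_of_nonneg hχn]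
          linarith
        calc ‖fderiv ℝ (fun x => u (x + τ) * χ x) x (φ x)‖ₑ
            ≤ ENNReal.ofReal (‖fderiv ℝ u (x + τ)‖ * χ x + u (x + τ) * ‖fderiv ℝ χ x‖) := by
              rw [← ofReal_norm]; exact ENNReal.ofReal_le_ofReal this
          _ = _ := by
              rw [ENNReal.ofReal_add (by positivity) (by positivity),
                ENNReal.ofReal_mul (norm_nonneg _), ENNReal.ofReal_mul hun,
                ofReal_norm, ofReal_norm]

lemma moll_prod_tendsto {Ω T : Set E3} (hΩ : MeasurableSet Ω) (hbΩ : IsBounded Ω)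
    (hT : MeasurableSet T) (hbT : IsBounded T) (τ : E3) {ψ : E3 → ℝ} (hψ : Integrable ψ) :
    Tendsto (fun n => ∫ x, moll n Ω (x + τ) * moll n T x * ψ x) atTop
      (𝓝 (∫ x in slc Ω T τ, ψ x)) := by
  rw [← integral_indicator (slc_meas hΩ hT τ)]
  refine tendsto_integral_of_dominated_convergence (fun x => ‖ψ x‖) ?_ hψ.norm ?_ ?_
  · intro n
    refine AEStronglyMeasurable.mul ?_ hψ.aestronglyMeasurable
    exact (((moll_contDiff n hΩ hbΩ).continuous.comp (continuous_id.add continuous_const)).mul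
      (moll_contDiff n hT hbT).continuous).aestronglyMeasurable
  · intro n
    refine Eventually.of_forall fun x => ?_
    rw [norm_mul]
    refine mul_le_of_le_one_left (norm_nonneg _) ?_
    rw [norm_mul, Real.norm_of_nonneg (moll_nonneg _ _ _), Real.norm_of_nonneg (moll_nonneg _ _ _)]
    exact mul_le_one₀ (moll_le_one n hΩ _) (moll_nonneg _ _ _) (moll_le_one n hT _)
  · have h1 : ∀ᵐ x : E3, Tendsto (fun n => moll n Ω (x + τ)) atTop
        (𝓝 (Ω.indicator (fun _ => (1:ℝ)) (x + τ))) :=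
      (measurePreserving_add_right volume τ).quasiMeasurePreserving.ae (moll_tendsto hΩ hbΩ)
    filter_upwards [h1, moll_tendsto hT hbT] with x hx1 hx2
    have := (hx1.mul hx2).mul_const (ψ x)
    convert this using 2
    by_cases hxT : x ∈ T <;> by_cases hxΩ : x + τ ∈ Ω <;> simp [slc, hxT, hxΩ]

/-- Averaged perimeter of localizations. -/
lemma exists_perA {Ω T : Set E3} (hΩ : MeasurableSet Ω) (hbΩ : IsBounded Ω)
    (hT : MeasurableSet T) (hbT : IsBounded T) (hfΩ : HasFinPer Ω) (hfT : HasFinPer T) :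
    ∃ A : E3 → ℝ≥0∞, Measurable A ∧
      ∫⁻ τ, A τ ≤ ENNReal.ofReal (vol T * per Ω + per T * vol Ω) ∧
      ∀ τ, A τ < ⊤ → HasFinPer (slc Ω T τ) ∧ per (slc Ω T τ) ≤ (A τ).toReal := by
  refine ⟨fun τ => liminf (fun n => perA Ω T n τ) atTop,
    Measurable.liminf (perA_meas hΩ hbΩ hT hbT), ?_, ?_⟩
  · refine (lintegral_liminf_le (perA_meas hΩ hbΩ hT hbT)).trans ?_
    refine (liminf_le_liminf (v := fun _ : ℕ => ENNReal.ofReal (vol T * per Ω + per T * vol Ω))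
      (Eventually.of_forall fun n => perA_lintegral hΩ hbΩ hT hbT hfΩ hfT n)).trans ?_
    simp
  · intro τ hτ
    have key : ∀ a ∈ perCand (slc Ω T τ), a ≤ (liminf (fun n => perA Ω T n τ) atTop).toReal := by
      rintro a ⟨φ, h, h', h1, rfl⟩
      have ht := (ENNReal.continuous_ofReal.tendsto _).comp
        (moll_prod_tendsto hΩ hbΩ hT hbT τ (divg_integrable h h'))
      have h2 : ENNReal.ofReal (∫ x in slc Ω T τ, divg φ x) ≤
          liminf (fun n => perA Ω T n τ) atTop := by
        rw [← ht.liminf_eq]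
        exact liminf_le_liminf (Eventually.of_forall fun n =>
          moll_prod_bound hΩ hbΩ hT hbT n τ h h' h1)
      exact (ENNReal.ofReal_le_iff_le_toReal hτ.ne).1 h2
    exact ⟨⟨_, key⟩, csSup_le ⟨0, zero_mem_perCand _⟩ key⟩

lemma vol_mono {A B : Set E3} (h : A ⊆ B) (hB : volume B ≠ ⊤) : vol A ≤ vol B :=
  ENNReal.toReal_mono hB (measure_mono h)

lemma convex_overlap {K : Set E3} (hm : MeasurableSet K) (hb : IsBounded K) (hK : Convex ℝ K)
    {c : E3} {r : ℝ} (hr : 0 < r) (hc : ball c r ⊆ K) (z : E3) :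
    vol {x | x ∈ K ∧ x + z ∉ K} ≤ 6 * vol K / r * ‖z‖ := by
  have hfin : volume K ≠ ⊤ := hb.measure_lt_top.ne
  have hv := vol_nonneg K
  have htriv : vol {x | x ∈ K ∧ x + z ∉ K} ≤ vol K := vol_mono (fun x hx => hx.1) hfin
  set s : ℝ := 2 * ‖z‖ / r with hs
  have hs0 : 0 ≤ s := by positivity
  have hgoal : 6 * vol K / r * ‖z‖ = 3 * s * vol K := by rw [hs]; ring
  rw [hgoal]
  by_cases hs1 : 1 < s
  · nlinarith
  push Not at hs1
  have hsub : AffineMap.homothety c (1 - s) '' K ⊆ {x | x ∈ K ∧ x + z ∈ K} := by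
    rintro _ ⟨y, hy, rfl⟩
    have hcK : c ∈ K := hc (mem_ball_self hr)
    have e : AffineMap.homothety c (1 - s) y = (1 - s) • y + s • c := by
      simp only [AffineMap.homothety_apply, vsub_eq_sub, vadd_eq_add, smul_sub, sub_smul, one_smul]
      abel
    rw [e]
    refine ⟨hK hy hcK (by linarith) hs0 (by ring), ?_⟩
    by_cases hz : z = 0
    · rw [hz, add_zero]; exact hK hy hcK (by linarith) hs0 (by ring)
    have hz' : 0 < ‖z‖ := norm_pos_iff.2 hz
    have hspos : 0 < s := by positivity
    have e2 : (1 - s) • y + s • c + z = (1 - s) • y + s • (c + s⁻¹ • z) := by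
      rw [smul_add, smul_smul, mul_inv_cancel₀ hspos.ne', one_smul, add_assoc]
    show _ ∈ K
    rw [e2]
    refine hK hy (hc ?_) (by linarith) hs0 (by ring)
    rw [mem_ball, dist_eq_norm, add_sub_cancel_left, norm_smul, norm_inv, Real.norm_of_nonneg hs0,
      hs]
    have : (2 * ‖z‖ / r)⁻¹ * ‖z‖ = r / 2 := by field_simp
    rw [this]; linarith
  have hms : MeasurableSet {x | x ∈ K ∧ x + z ∈ K} :=
    hm.inter (hm.preimage (measurable_id.add measurable_const))
  have h1 : (1 - s) ^ 3 * vol K ≤ vol {x | x ∈ K ∧ x + z ∈ K} := by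
    have h2 := vol_mono hsub (ne_top_of_le_ne_top hfin (measure_mono fun x hx => hx.1))
    have h3 : vol (AffineMap.homothety c (1 - s) '' K) = (1 - s) ^ 3 * vol K := by
      unfold vol
      rw [Measure.addHaar_image_homothety, ENNReal.toReal_mul, finrank_euclideanSpace_fin,
        ENNReal.toReal_ofReal (abs_nonneg _), abs_of_nonneg (pow_nonneg (by linarith) 3)]
    rwa [h3] at h2
  have h4 : vol {x | x ∈ K ∧ x + z ∉ K} + vol {x | x ∈ K ∧ x + z ∈ K} = vol K := by
    unfold vol
    rw [← ENNReal.toReal_add (ne_top_of_le_ne_top hfin (measure_mono fun x hx => hx.1))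
      (ne_top_of_le_ne_top hfin (measure_mono fun x hx => hx.1)),
      ← measure_union _ hms]
    · congr 2; ext x; simp only [mem_union, mem_ofPred_eq]; tauto
    · rw [Set.disjoint_left]; rintro x ⟨_, h1⟩ ⟨_, h2⟩; exact h1 h2
  have h5 : 1 - 3 * s ≤ (1 - s) ^ 3 := by nlinarith [mul_nonneg hs0 hs0, mul_nonneg (mul_nonneg hs0 hs0) (sub_nonneg.2 hs1)]
  nlinarith

lemma convex_shift_int {K : Set E3} (hm : MeasurableSet K) (hb : IsBounded K) (hK : Convex ℝ K)
    {c : E3} {r : ℝ} (hr : 0 < r) (hc : ball c r ⊆ K) {ψ : E3 → ℝ} (hψ : Integrable ψ)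
    (h1 : ∀ x, |ψ x| ≤ 1) (z : E3) :
    |(∫ x in K, ψ (x + z)) - ∫ x in K, ψ x| ≤ 12 * vol K / r * ‖z‖ := by
  have hfin : volume K ≠ ⊤ := hb.measure_lt_top.ne
  set D1 : Set E3 := {x | x ∈ K ∧ x + (-z) ∉ K}
  set D2 : Set E3 := {x | x ∈ K ∧ x + z ∉ K}
  have hD1 : MeasurableSet D1 := hm.inter (hm.preimage (measurable_id.add measurable_const)).compl
  have hD2 : MeasurableSet D2 := hm.inter (hm.preimage (measurable_id.add measurable_const)).compl
  have hfD1 : volume D1 ≠ ⊤ := ne_top_of_le_ne_top hfin (measure_mono fun x hx => hx.1)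
  have hfD2 : volume D2 ≠ ⊤ := ne_top_of_le_ne_top hfin (measure_mono fun x hx => hx.1)
  have hψz : Integrable (fun x => ψ (x + z)) := hψ.comp_add_right z
  -- cancel the common part
  have iD1 : Integrable (D1.indicator ψ) := hψ.indicator hD1
  have iD2 : Integrable (D2.indicator (fun x => ψ (x + z))) := hψz.indicator hD2
  set M : Set E3 := {x | x ∈ K ∧ x + z ∈ K}
  have hM : MeasurableSet M := hm.inter (hm.preimage (measurable_id.add measurable_const))
  set M' : Set E3 := {x | x ∈ K ∧ x + (-z) ∈ K}
  have hM' : MeasurableSet M' := hm.inter (hm.preimage (measurable_id.add measurable_const))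
  have e1 : ∫ x in K, ψ (x + z) = (∫ x in M, ψ (x + z)) + ∫ x in D2, ψ (x + z) := by
    rw [← setIntegral_union _ hD2 hψz.integrableOn hψz.integrableOn]
    · congr 2; ext x; simp only [mem_union, M, D2, mem_ofPred_eq]; tauto
    · rw [Set.disjoint_left]; rintro x ⟨_, h1⟩ ⟨_, h2⟩; exact h2 h1
  have e2 : ∫ x in K, ψ x = (∫ x in M', ψ x) + ∫ x in D1, ψ x := by
    rw [← setIntegral_union _ hD1 hψ.integrableOn hψ.integrableOn]
    · congr 2; ext x; simp only [mem_union, M', D1, mem_ofPred_eq]; tauto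
    · rw [Set.disjoint_left]; rintro x ⟨_, h1⟩ ⟨_, h2⟩; exact h2 h1
  have e3 : ∫ x in M, ψ (x + z) = ∫ x in M', ψ x := by
    rw [← integral_indicator hM, ← integral_indicator hM', 
      ← integral_add_right_eq_self (M'.indicator ψ) z]
    refine integral_congr_ae (Eventually.of_forall fun x => ?_)
    have hx : x + z ∈ M' ↔ x ∈ M := by
      show (x + z ∈ K ∧ x + z + -z ∈ K) ↔ (x ∈ K ∧ x + z ∈ K)
      rw [add_neg_cancel_right]; exact and_comm
    by_cases h : x ∈ M
    · simp only [indicator_of_mem h, indicator_of_mem (hx.2 h)]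
    · simp only [indicator_of_notMem h, indicator_of_notMem (fun h' => h (hx.1 h'))]
  have b1 : ‖∫ x in D1, ψ x‖ ≤ 1 * vol D1 :=
    norm_setIntegral_le_of_norm_le_const hfD1.lt_top fun x _ => h1 x
  have b2 : ‖∫ x in D2, ψ (x + z)‖ ≤ 1 * vol D2 :=
    norm_setIntegral_le_of_norm_le_const hfD2.lt_top fun x _ => h1 _
  have c1 := convex_overlap hm hb hK hr hc (-z)
  have c2 := convex_overlap hm hb hK hr hc z
  rw [norm_neg] at c1
  rw [e1, e2, e3]
  rw [Real.norm_eq_abs] at b1 b2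
  have e12 : 12 * vol K / r * ‖z‖ = 6 * vol K / r * ‖z‖ + 6 * vol K / r * ‖z‖ := by ring
  rw [e12]
  refine le_trans (le_of_eq ?_) ((abs_sub _ _).trans (add_le_add (b2.trans ?_) (b1.trans ?_)))
  · congr 1; ring
  · rw [one_mul]; exact c2
  · rw [one_mul]; exact c1

lemma convex_perCand {K : Set E3} (hm : MeasurableSet K) (hb : IsBounded K) (hK : Convex ℝ K)
    {c : E3} {r : ℝ} (hr : 0 < r) (hc : ball c r ⊆ K) {a : ℝ} (ha : a ∈ perCand K) :
    a ≤ 36 * vol K / r := by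
  obtain ⟨φ, h, h', h1, rfl⟩ := ha
  have hfin : volume K ≠ ⊤ := hb.measure_lt_top.ne
  have key : ∀ i : Fin 3, Integrable
      (fun x => (fderiv ℝ φ x (EuclideanSpace.single i 1)) i) (volume.restrict K) ∧
      ∫ x in K, (fderiv ℝ φ x (EuclideanSpace.single i 1)) i ≤ 12 * vol K / r := by
    intro i
    set e : E3 := EuclideanSpace.single i 1
    have he : ‖e‖ = 1 := by simp [e]
    set ψ : E3 → ℝ := fun x => φ x i with hψ
    have hψ1 : ContDiff ℝ 1 ψ := contDiff_coord h i
    have hψs : HasCompactSupport ψ := hcs_coord h' i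
    have hψi : Integrable ψ := hψ1.continuous.integrable_of_hasCompactSupport hψs
    have hcont : Continuous (fderiv ℝ ψ) := hψ1.continuous_fderiv (by norm_num)
    obtain ⟨C, hC⟩ := (hψs.fderiv (𝕜 := ℝ)).exists_bound_of_continuous hcont
    have hb1 : ∀ x, |ψ x| ≤ 1 := fun x => (PiLp.norm_apply_le (φ x) i).trans (h1 x)
    have hder := hasDerivAt_integral_of_dominated_loc_of_deriv_le (μ := volume.restrict K)
      (F := fun (t : ℝ) x => ψ (x + t • e)) (F' := fun t x => fderiv ℝ ψ (x + t • e) e)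
      (x₀ := (0:ℝ)) (s := univ) (bound := fun _ => C) Filter.univ_mem
      (Eventually.of_forall fun t => (hψ1.continuous.comp
        (continuous_id.add continuous_const)).aestronglyMeasurable)
      (by simp only [zero_smul, add_zero]; exact hψi.restrict)
      ((hcont.comp (continuous_id.add continuous_const)).clm_apply
        continuous_const).aestronglyMeasurable
      (Eventually.of_forall fun x t _ => by
        refine (ContinuousLinearMap.le_opNorm _ _).trans ?_
        rw [he, mul_one]; exact hC _)
      (integrableOn_const hfin)
      (Eventually.of_forall fun x t _ => by
        have h2 : HasFDerivAt ψ (fderiv ℝ ψ (x + t • e)) (x + t • e) :=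
          (hψ1.differentiable (by norm_num) _).hasFDerivAt
        have h3 : HasDerivAt (fun t : ℝ => x + t • e) e t := by
          simpa using ((hasDerivAt_id t).smul_const e).const_add x
        exact h2.comp_hasDerivAt t h3)
    have e2 : ∀ x, fderiv ℝ ψ x e = (fderiv ℝ φ x e) i := fun x =>
      fderiv_coord (h.differentiable (by norm_num) x) i e
    simp only [zero_smul, add_zero, e2] at hder
    refine ⟨hder.1, ?_⟩
    have h4 := hder.2.le_of_lip' (C := 12 * vol K / r)
      (by have := vol_nonneg K; positivity) (Eventually.of_forall fun t => by
        have := convex_shift_int hm hb hK hr hc hψi hb1 (t • e)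
        rw [norm_smul, he, mul_one] at this
        simpa using this)
    exact (le_abs_self _).trans h4
  have : (fun x => divg φ x) = fun x => ∑ i : Fin 3,
    (fderiv ℝ φ x (EuclideanSpace.single i 1)) i := by ext x; exact divg_eq φ x
  rw [this, integral_finsetSum _ fun i _ => (key i).1]
  refine (Finset.sum_le_sum fun i _ => (key i).2).trans (le_of_eq ?_)
  simp; ring

lemma convex_finPer {K : Set E3} (hm : MeasurableSet K) (hb : IsBounded K) (hK : Convex ℝ K)
    {c : E3} {r : ℝ} (hr : 0 < r) (hc : ball c r ⊆ K) :
    HasFinPer K ∧ per K ≤ 36 * vol K / r :=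
  ⟨⟨_, fun _ ha => convex_perCand hm hb hK hr hc ha⟩,
    csSup_le ⟨0, zero_mem_perCand _⟩ fun _ ha => convex_perCand hm hb hK hr hc ha⟩

/-- Bounded measurable functions of bounded support. -/
structure Adm (f : E3 → ℝ) : Prop where
  meas : Measurable f
  le_one : ∀ x, |f x| ≤ 1
  supp : ∃ R : ℝ, ∀ x, f x ≠ 0 → x ∈ ball (0 : E3) R

lemma lint_inv_norm (R : ℝ) : ∫⁻ w in ball (0 : E3) R, ENNReal.ofReal (‖w‖⁻¹) < ⊤ := by
  have h : IntegrableOn (fun w : E3 => ‖w‖⁻¹) (ball 0 R) := by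
    have hl : LocallyIntegrable (fun w : E3 => ‖w‖⁻¹) := by
      refine locallyIntegrable_of_norm_le_rpow (E := E3) (C := 1) (α := 1)
        (by rw [finrank_euclideanSpace_fin]; norm_num)
        (by rw [finrank_euclideanSpace_fin]; norm_num) ?_
        (by fun_prop)
      refine Eventually.of_forall fun x => ?_
      rw [Real.rpow_neg_one, one_mul, norm_inv, norm_norm]
    exact (hl.integrableOn_isCompact (isCompact_closedBall 0 R)).mono_set ball_subset_closedBall
  have := h.2
  rw [hasFiniteIntegral_iff_norm] at this
  refine lt_of_le_of_lt (lintegral_mono fun w => ?_) this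
  rw [Real.norm_of_nonneg (by positivity)]

lemma pair_integrable {f : E3 → ℝ} (hf : Adm f) {k : E3 × E3 → ℝ} (hk : Measurable k) 
    (hb : ∀ p, |k p| ≤ ‖p.1 - p.2‖⁻¹) :
    Integrable (fun p : E3 × E3 => f p.1 * f p.2 * k p) := by
  obtain ⟨R, hR⟩ := hf.supp
  refine ⟨(((hf.meas.comp measurable_fst).mul (hf.meas.comp measurable_snd)).mul hk).aestronglyMeasurable, ?_⟩
  rw [hasFiniteIntegral_iff_norm]
  have hg : Measurable (fun p : E3 × E3 => (ball (0:E3) R).indicator (fun _ => (1:ℝ≥0∞)) p.1 *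
      ((ball (0:E3) (2 * R)).indicator (fun w => ENNReal.ofReal (‖w‖⁻¹)) (p.1 - p.2))) := by
    refine Measurable.mul ?_ ?_
    · exact (measurable_const.indicator measurableSet_ball).comp measurable_fst
    · exact (Measurable.indicator (by fun_prop) measurableSet_ball).comp (measurable_fst.sub measurable_snd)
  refine lt_of_le_of_lt (lintegral_mono (g := fun p : E3 × E3 => (ball (0:E3) R).indicator (fun _ => (1:ℝ≥0∞)) p.1 *
      ((ball (0:E3) (2 * R)).indicator (fun w => ENNReal.ofReal (‖w‖⁻¹)) (p.1 - p.2))) fun p => ?_) ?_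
  · by_cases h0 : f p.1 * f p.2 = 0
    · simp [h0]
    have h1 := hR _ (left_ne_zero_of_mul h0)
    have h2 := hR _ (right_ne_zero_of_mul h0)
    have h3 : p.1 - p.2 ∈ ball (0:E3) (2 * R) := by
      rw [mem_ball_zero_iff] at *
      have := norm_sub_le p.1 p.2
      linarith
    simp only [indicator_of_mem h1, indicator_of_mem h3, one_mul]
    refine ENNReal.ofReal_le_ofReal ?_
    rw [norm_mul, norm_mul]
    have := hf.le_one p.1
    have h4 := hf.le_one p.2
    have h5 : |f p.1| * |f p.2| ≤ 1 := by nlinarith [abs_nonneg (f p.1), abs_nonneg (f p.2)]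
    simp only [Real.norm_eq_abs]
    nlinarith [hb p, abs_nonneg (k p), abs_nonneg (f p.1), abs_nonneg (f p.2)]
  · rw [Measure.volume_eq_prod, lintegral_prod _ hg.aemeasurable]
    have : ∀ x : E3, ∫⁻ y, (ball (0:E3) R).indicator (fun _ => (1:ℝ≥0∞)) x *
      ((ball (0:E3) (2 * R)).indicator (fun w => ENNReal.ofReal (‖w‖⁻¹)) (x - y)) =
        (ball (0:E3) R).indicator (fun _ => (1:ℝ≥0∞)) x * ∫⁻ w in ball (0 : E3) (2*R), ENNReal.ofReal (‖w‖⁻¹) := by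
      intro x
      rw [lintegral_const_mul', lintegral_sub_left_eq_self (fun w => (ball (0:E3) (2 * R)).indicator (fun w => ENNReal.ofReal (‖w‖⁻¹)) w) x, lintegral_indicator measurableSet_ball]
      by_cases h : x ∈ ball (0:E3) R <;> simp [h]
    simp only [this]
    rw [lintegral_mul_const' _ _ (lint_inv_norm _).ne, lintegral_indicator measurableSet_ball]
    simp only [lintegral_const, one_mul, Measure.restrict_apply MeasurableSet.univ, univ_inter]
    exact ENNReal.mul_lt_top measure_ball_lt_top (lint_inv_norm _)

lemma mix_joint {T : Type*} [MeasurableSpace T] (ν : Measure T) [SFinite ν] {f : E3 → ℝ} (hf : Adm f)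
    {k : T → E3 × E3 → ℝ} (hk : Measurable (fun q : T × (E3 × E3) => k q.1 q.2)) (hk0 : ∀ t p, 0 ≤ k t p)
    {K : E3 × E3 → ℝ} (hK : ∀ᵐ p : E3 × E3, Integrable (fun t => k t p) ν ∧ ∫ t, k t p ∂ν = K p)
    (hinteg : Integrable (fun p : E3 × E3 => f p.1 * f p.2 * K p)) :
    Integrable (fun q : T × (E3 × E3) => f q.2.1 * f q.2.2 * k q.1 q.2) (ν.prod volume) := by
  have hm : Measurable (fun q : T × (E3 × E3) => f q.2.1 * f q.2.2 * k q.1 q.2) :=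
    ((hf.meas.comp (measurable_fst.comp measurable_snd)).mul
      (hf.meas.comp (measurable_snd.comp measurable_snd))).mul hk
  rw [integrable_prod_iff' hm.aestronglyMeasurable]
  constructor
  · filter_upwards [hK] with p hp
    exact hp.1.const_mul _
  · refine hinteg.norm.congr ?_
    filter_upwards [hK] with p hp
    have : ∀ t, ‖f p.1 * f p.2 * k t p‖ = ‖f p.1 * f p.2‖ * k t p := fun t => by
      rw [norm_mul, Real.norm_of_nonneg (hk0 t p)]
    simp only [this]
    have hKp : 0 ≤ K p := by rw [← hp.2]; exact integral_nonneg (fun t => hk0 t p)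
    rw [integral_const_mul, hp.2, norm_mul _ (K p), Real.norm_of_nonneg hKp]

lemma mix_aux {T : Type*} [MeasurableSpace T] (ν : Measure T) [SFinite ν] {f : E3 → ℝ} (hf : Adm f)
    {k : T → E3 × E3 → ℝ} (hk : Measurable (fun q : T × (E3 × E3) => k q.1 q.2)) (hk0 : ∀ t p, 0 ≤ k t p)
    {K : E3 × E3 → ℝ} (hK : ∀ᵐ p : E3 × E3, Integrable (fun t => k t p) ν ∧ ∫ t, k t p ∂ν = K p)
    (hinteg : Integrable (fun p : E3 × E3 => f p.1 * f p.2 * K p)) :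
    ∫ p : E3 × E3, f p.1 * f p.2 * K p = ∫ t, ∫ p : E3 × E3, f p.1 * f p.2 * k t p ∂volume ∂ν := by
  have hI := mix_joint ν hf hk hk0 hK hinteg
  rw [integral_integral_swap (f := fun t (p : E3 × E3) => f p.1 * f p.2 * k t p) hI]
  refine integral_congr_ae ?_
  filter_upwards [hK] with p hp
  rw [integral_const_mul, hp.2]

lemma mix_left {T : Type*} [MeasurableSpace T] (ν : Measure T) [SFinite ν] {f : E3 → ℝ} (hf : Adm f)
    {k : T → E3 × E3 → ℝ} (hk : Measurable (fun q : T × (E3 × E3) => k q.1 q.2)) (hk0 : ∀ t p, 0 ≤ k t p)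
    {K : E3 × E3 → ℝ} (hK : ∀ᵐ p : E3 × E3, Integrable (fun t => k t p) ν ∧ ∫ t, k t p ∂ν = K p)
    (hinteg : Integrable (fun p : E3 × E3 => f p.1 * f p.2 * K p)) :
    Integrable (fun t => ∫ p : E3 × E3, f p.1 * f p.2 * k t p ∂volume) ν :=
  (mix_joint ν hf hk hk0 hK hinteg).integral_prod_left

lemma mix {T : Type*} [MeasurableSpace T] (ν : Measure T) [SFinite ν] {f : E3 → ℝ} (hf : Adm f)
    {k : T → E3 × E3 → ℝ} (hk : Measurable (fun q : T × (E3 × E3) => k q.1 q.2)) (hk0 : ∀ t p, 0 ≤ k t p)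
    {K : E3 × E3 → ℝ} (hK : ∀ᵐ p : E3 × E3, Integrable (fun t => k t p) ν ∧ ∫ t, k t p ∂ν = K p)
    (hinteg : Integrable (fun p : E3 × E3 => f p.1 * f p.2 * K p))
    (hQ : ∀ t, 0 ≤ ∫ p : E3 × E3, f p.1 * f p.2 * k t p) :
    0 ≤ ∫ p : E3 × E3, f p.1 * f p.2 * K p := by
  rw [mix_aux ν hf hk hk0 hK hinteg]
  exact integral_nonneg hQ

lemma disc_area (q : ℝ) : volume {u : Fin 2 → ℝ | u 0 ^ 2 + u 1 ^ 2 < q} = ENNReal.ofReal (Real.pi * q) := by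
  by_cases hq : q ≤ 0
  · have : {u : Fin 2 → ℝ | u 0 ^ 2 + u 1 ^ 2 < q} = ∅ := by
      ext u; simp only [mem_ofPred_eq, mem_empty_iff_false, iff_false, not_lt]
      nlinarith [sq_nonneg (u 0), sq_nonneg (u 1)]
    rw [this, measure_empty, ENNReal.ofReal_of_nonpos]
    nlinarith [Real.pi_pos]
  push Not at hq
  have h := (EuclideanSpace.volume_preserving_symm_measurableEquiv_toLp (Fin 2)).measure_preimage_equiv
    {u : Fin 2 → ℝ | u 0 ^ 2 + u 1 ^ 2 < q}
  rw [← h]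
  have : (MeasurableEquiv.toLp 2 (Fin 2 → ℝ)).symm ⁻¹' {u : Fin 2 → ℝ | u 0 ^ 2 + u 1 ^ 2 < q}
      = ball (0 : EuclideanSpace ℝ (Fin 2)) (√q) := by
    ext u
    simp only [mem_preimage, mem_ofPred_eq, mem_ball_zero_iff, EuclideanSpace.norm_eq, Fin.sum_univ_two,
      Real.norm_eq_abs, sq_abs]
    rw [Real.sqrt_lt_sqrt_iff (by positivity)]
    rfl
  rw [this, EuclideanSpace.volume_ball_fin_two, ← ENNReal.ofReal_pow (by positivity), Real.sq_sqrt hq.le,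
    mul_comm, ENNReal.ofReal_mul Real.pi_pos.le]

/-- Volume of the intersection of two balls of radius `s` at distance `r`. -/
def lensV (s r : ℝ) : ℝ := if r < 2 * s then Real.pi / 12 * ((2 * s - r) ^ 2 * (4 * s + r)) else 0

lemma lens_slice (s r : ℝ) (hs : 0 < s) (hr : 0 ≤ r) :
    ∫⁻ t : ℝ, ENNReal.ofReal (Real.pi * (s ^ 2 - max (t ^ 2) ((t + r) ^ 2))) = ENNReal.ofReal (lensV s r) := by
  have e1 : ∫⁻ t : ℝ, ENNReal.ofReal (Real.pi * (s ^ 2 - max (t ^ 2) ((t + r) ^ 2))) =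
      ∫⁻ t : ℝ, ENNReal.ofReal (max 0 (Real.pi * (s ^ 2 - (|t| + r/2)^2))) := by
    rw [← lintegral_add_right_eq_self _ (-(r/2))]
    refine lintegral_congr fun t => ?_
    have : max ((t + -(r/2)) ^ 2) ((t + -(r/2) + r) ^ 2) = (|t| + r/2)^2 := by
      rcases le_total 0 t with h | h
      · rw [abs_of_nonneg h, max_eq_right (by nlinarith)]; ring
      · rw [abs_of_nonpos h, max_eq_left (by nlinarith)]; ring
    rw [this]
    rcases le_total 0 (Real.pi * (s ^ 2 - (|t| + r/2)^2)) with h | h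
    · rw [max_eq_right h]
    · rw [max_eq_left h, ENNReal.ofReal_of_nonpos h, ENNReal.ofReal_zero]
  have hcont : Continuous fun t : ℝ => max 0 (Real.pi * (s ^ 2 - (|t| + r/2)^2)) := by fun_prop
  have hsup : HasCompactSupport fun t : ℝ => max 0 (Real.pi * (s ^ 2 - (|t| + r/2)^2)) := by
    refine HasCompactSupport.of_support_subset_isCompact (isCompact_Icc (a := -s) (b := s)) ?_
    intro t ht
    by_contra hts
    apply ht
    have : s < |t| := by
      rw [mem_Icc, ← abs_le] at hts; linarith
    refine max_eq_left ?_
    have h2 : s ^ 2 - (|t| + r/2)^2 ≤ 0 := by nlinarith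
    nlinarith [Real.pi_pos]
  have hinteg := hcont.integrable_of_hasCompactSupport hsup (μ := volume)
  rw [e1, ← ofReal_integral_eq_lintegral_ofReal hinteg (Eventually.of_forall fun t => le_max_left _ _)]
  congr 1
  rw [integral_comp_abs (f := fun t => max 0 (Real.pi * (s ^ 2 - (t + r/2)^2)))]
  unfold lensV
  split_ifs with h
  · have e2 : ∫ t in Ioi (0:ℝ), max 0 (Real.pi * (s ^ 2 - (t + r/2)^2)) =
        ∫ t in Ioc (0:ℝ) (s - r/2), Real.pi * (s ^ 2 - (t + r/2)^2) := by
      rw [setIntegral_eq_of_subset_of_forall_sdiff_eq_zero (f := fun t => max 0 (Real.pi * (s ^ 2 - (t + r/2)^2)))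
        measurableSet_Ioi (s := Ioc (0:ℝ) (s - r/2)) (fun x hx => hx.1)]
      · refine setIntegral_congr_fun measurableSet_Ioc fun t ht => ?_
        refine max_eq_right (mul_nonneg Real.pi_pos.le ?_)
        nlinarith [ht.1, ht.2]
      · intro t ht
        have h1 : 0 < t := ht.1
        have h2 : s - r/2 < t := by
          by_contra h3; exact ht.2 ⟨h1, by linarith⟩
        refine max_eq_left (mul_nonpos_of_nonneg_of_nonpos Real.pi_pos.le ?_)
        nlinarith
    rw [e2, ← intervalIntegral.integral_of_le (by linarith)]
    rw [intervalIntegral.integral_eq_sub_of_hasDerivAt (f := fun t => Real.pi * (s^2 * t - (t + r/2)^3/3))]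
    · ring
    · intro t _
      have := ((((hasDerivAt_id t).const_mul (s^2)).sub ((((hasDerivAt_id t).add_const (r/2)).pow 3).div_const 3)).const_mul Real.pi)
      refine this.congr_deriv ?_
      show Real.pi * (s ^ 2 * 1 - ((3 : ℕ) : ℝ) * (t + r / 2) ^ 2 * 1 / 3) = _
      push_cast; ring
    · exact (Continuous.intervalIntegrable (by fun_prop) _ _)
  · rw [setIntegral_eq_zero_of_forall_eq_zero, mul_zero]
    intro t ht
    have h1 : 0 < t := ht
    push Not at h
    refine max_eq_left (mul_nonpos_of_nonneg_of_nonpos Real.pi_pos.le ?_)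
    nlinarith

lemma lens_axis (s r : ℝ) (hs : 0 < s) (hr : 0 ≤ r) :
    volume {z : E3 | ‖z‖ < s ∧ ‖z + EuclideanSpace.single 0 r‖ < s} = ENNReal.ofReal (lensV s r) := by
  set e := (EuclideanSpace.volume_preserving_symm_measurableEquiv_toLp (Fin 3))
  set e' := volume_preserving_piFinSuccAbove (fun _ : Fin 3 => ℝ) 0
  set A : Set (ℝ × (Fin 2 → ℝ)) := {p | p.1^2 + (p.2 0 ^ 2 + p.2 1 ^ 2) < s^2 ∧ (p.1 + r)^2 + (p.2 0 ^ 2 + p.2 1 ^ 2) < s^2} with hA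
  have hmA : MeasurableSet A := by
    have o1 : IsOpen {p : ℝ × (Fin 2 → ℝ) | p.1^2 + (p.2 0 ^ 2 + p.2 1 ^ 2) < s^2} :=
      isOpen_lt (by fun_prop) (by fun_prop)
    have o2 : IsOpen {p : ℝ × (Fin 2 → ℝ) | (p.1 + r)^2 + (p.2 0 ^ 2 + p.2 1 ^ 2) < s^2} :=
      isOpen_lt (by fun_prop) (by fun_prop)
    exact (o1.inter o2).measurableSet
  have h1 : {z : E3 | ‖z‖ < s ∧ ‖z + EuclideanSpace.single 0 r‖ < s} =
      (MeasurableEquiv.toLp 2 (Fin 3 → ℝ)).symm ⁻¹' ((MeasurableEquiv.piFinSuccAbove (fun _ : Fin 3 => ℝ) 0) ⁻¹' A) := by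
    ext z
    have hn : ∀ z : E3, ‖z‖ < s ↔ z 0 ^ 2 + (z 1 ^ 2 + z 2 ^ 2) < s ^ 2 := by
      intro z
      rw [EuclideanSpace.norm_eq, Real.sqrt_lt' hs, Fin.sum_univ_three]
      simp only [Real.norm_eq_abs, sq_abs, add_assoc]
    simp only [mem_ofPred_eq, hn]
    simp only [mem_preimage, hA, mem_ofPred_eq, MeasurableEquiv.piFinSuccAbove_apply]
    simp [Fin.insertNthEquiv]
    rfl
  rw [h1, e.measure_preimage_equiv, e'.measure_preimage_equiv, Measure.volume_eq_prod, Measure.prod_apply hmA,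
    ← lens_slice s r hs hr]
  refine lintegral_congr fun t => ?_
  rw [← disc_area]
  congr 1
  ext u
  simp only [mem_preimage, hA, mem_ofPred_eq, lt_sub_iff_add_lt]
  rw [← max_add_add_left, max_lt_iff]
  constructor <;> rintro ⟨h1, h2⟩ <;> constructor <;> linarith

lemma exists_isometry (w : E3) : ∃ T : E3 ≃ₗᵢ[ℝ] E3, T w = EuclideanSpace.single 0 ‖w‖ := by
  refine ⟨(ℝ ∙ (w - EuclideanSpace.single (0 : Fin 3) ‖w‖))ᗮ.reflection, ?_⟩
  refine Submodule.reflection_sub ?_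
  simp

lemma lens_volume (s : ℝ) (hs : 0 < s) (w : E3) :
    volume {z : E3 | ‖z‖ < s ∧ ‖z + w‖ < s} = ENNReal.ofReal (lensV s ‖w‖) := by
  obtain ⟨T, hT⟩ := exists_isometry w
  rw [← lens_axis s ‖w‖ hs (norm_nonneg w), ← T.measurePreserving.measure_preimage_emb
    T.toMeasurableEquiv.measurableEmbedding {z : E3 | ‖z‖ < s ∧ ‖z + EuclideanSpace.single 0 ‖w‖‖ < s}]
  congr 1
  ext z
  simp only [mem_preimage, mem_ofPred_eq, ← hT]
  simp only [← map_add, LinearIsometryEquiv.norm_map]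

lemma lensV_nonneg (s r : ℝ) (hr : 0 ≤ r) : 0 ≤ lensV s r := by
  unfold lensV; split_ifs with h
  · have := Real.pi_pos
    have : 0 ≤ 4 * s + r := by linarith
    positivity
  · exact le_rfl

lemma lensV_meas : Measurable (fun q : ℝ × ℝ => lensV q.1 q.2) := by
  unfold lensV
  exact Measurable.ite (measurableSet_lt (by fun_prop) (by fun_prop)) (by fun_prop) (by fun_prop)

lemma adm_integrable {f : E3 → ℝ} (hf : Adm f) : Integrable f := by
  obtain ⟨R, hR⟩ := hf.supp
  have h : IntegrableOn f (ball 0 R) := by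
    refine Measure.integrableOn_of_bounded (M := 1) measure_ball_lt_top.ne hf.meas.aestronglyMeasurable
      (Eventually.of_forall fun x => hf.le_one x)
  refine (integrableOn_iff_integrable_of_support_subset ?_).1 h
  exact fun x hx => hR x hx

lemma lens_pos {f : E3 → ℝ} (hf : Adm f) (s : ℝ) (hs : 0 < s) :
    0 ≤ ∫ p : E3 × E3, f p.1 * f p.2 * lensV s ‖p.1 - p.2‖ := by
  have hset : ∀ p : E3 × E3, MeasurableSet (ball p.1 s ∩ ball p.2 s) := fun p =>
    measurableSet_ball.inter measurableSet_ball
  refine mix (T := E3) volume hf (k := fun z p => (ball p.1 s ∩ ball p.2 s).indicator (fun _ => (1:ℝ)) z)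
    ?_ (fun z p => indicator_nonneg (fun _ _ => zero_le_one) _) (Eventually.of_forall fun p => ?_) ?_ ?_
  · have hm : MeasurableSet {q : E3 × (E3 × E3) | q.1 ∈ ball q.2.1 s ∩ ball q.2.2 s} := by
      refine MeasurableSet.inter ?_ ?_
      · exact measurableSet_lt (f := fun q : E3 × (E3 × E3) => dist q.1 q.2.1) (by fun_prop) (by fun_prop)
      · exact measurableSet_lt (f := fun q : E3 × (E3 × E3) => dist q.1 q.2.2) (by fun_prop) (by fun_prop)
    exact (measurable_const (a := (1:ℝ))).indicator hm
  · have hv : volume (ball p.1 s ∩ ball p.2 s) = ENNReal.ofReal (lensV s ‖p.1 - p.2‖) := by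
      rw [← lens_volume s hs, ← measure_preimage_add_right volume (p.1)]
      congr 1
      ext z
      simp only [mem_preimage, mem_inter_iff, mem_ball, dist_eq_norm, mem_ofPred_eq, add_sub_cancel_right, add_sub_assoc]
    refine ⟨(integrable_indicator_iff (hset p)).2 (integrableOn_const (by rw [hv]; exact ENNReal.ofReal_ne_top)), ?_⟩
    rw [integral_indicator (hset p)]
    simp only [integral_const, smul_eq_mul, mul_one, Measure.real, Measure.restrict_apply_univ]
    rw [hv, ENNReal.toReal_ofReal (lensV_nonneg _ _ (norm_nonneg _))]
  · refine Integrable.mul_bdd (c := Real.pi / 12 * ((2 * s) ^ 2 * (6 * s))) ((adm_integrable hf).mul_prod (adm_integrable hf)) ?_ ?_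
    · exact (lensV_meas.comp (measurable_const.prodMk (measurable_fst.sub measurable_snd).norm)).aestronglyMeasurable
    · refine Eventually.of_forall fun p => ?_
      have hr := norm_nonneg (p.1 - p.2)
      rw [Real.norm_of_nonneg (lensV_nonneg _ _ hr)]
      have hpi := Real.pi_pos
      unfold lensV
      split_ifs with h
      · gcongr <;> linarith
      · positivity
  · intro z
    have : ∀ p : E3 × E3, f p.1 * f p.2 * (ball p.1 s ∩ ball p.2 s).indicator (fun _ => (1:ℝ)) z
       = (f p.1 * (ball z s).indicator (fun _ => (1:ℝ)) p.1) * (f p.2 * (ball z s).indicator (fun _ => (1:ℝ)) p.2) := by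
      intro p
      by_cases h1 : z ∈ ball p.1 s <;> by_cases h2 : z ∈ ball p.2 s <;>
        simp [indicator, mem_inter_iff, h1, h2, mem_ball_comm (x := p.1), mem_ball_comm (x := p.2)]
    simp only [this]
    rw [Measure.volume_eq_prod, integral_prod_mul (fun x => f x * (ball z s).indicator (fun _ => (1:ℝ)) x) (fun x => f x * (ball z s).indicator (fun _ => (1:ℝ)) x)]
    exact mul_self_nonneg _

/-- weight of the ball decomposition -/
def wt (m s : ℝ) : ℝ := if s ≤ 0 then 0 else if s < m then 1 / (4 * Real.pi * m ^ 3 * s ^ 2) else 1 / (Real.pi * s ^ 5)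

def Km (m r : ℝ) : ℝ := if 2 * m ≤ r then 1 / r else (1 - (1 - r / (2 * m)) ^ 3) / r

lemma wt_nonneg (m s : ℝ) : 0 ≤ wt m s := by
  have := Real.pi_pos
  unfold wt; split_ifs with h1 h2
  · exact le_rfl
  · push Not at h1
    have : 0 < m := h1.trans h2
    positivity
  · push Not at h1; positivity

lemma wt_meas (m : ℝ) : Measurable (wt m) := by
  unfold wt
  refine Measurable.ite measurableSet_Iic (by fun_prop) (Measurable.ite measurableSet_Iio (by fun_prop) (by fun_prop))

lemma tail_int (r b : ℝ) (hr : 0 < r) (hb : r / 2 ≤ b) :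
    IntegrableOn (fun s : ℝ => 1 / (Real.pi * s ^ 5) * (Real.pi / 12 * ((2 * s - r) ^ 2 * (4 * s + r)))) (Ioi b) ∧
    ∫ s in Ioi b, 1 / (Real.pi * s ^ 5) * (Real.pi / 12 * ((2 * s - r) ^ 2 * (4 * s + r)))
      = (1 / 12) * (16 / b - 6 * r / b ^ 2 + r ^ 3 / (4 * b ^ 4)) := by
  have hb0 : 0 < b := by linarith
  have hpi := Real.pi_pos
  have hd : ∀ s ∈ Ici b, HasDerivAt (fun s : ℝ => -((1 / 12) * (16 * s⁻¹ - 6 * r * (s⁻¹) ^ 2 + r ^ 3 / 4 * (s⁻¹) ^ 4)))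
      (1 / (Real.pi * s ^ 5) * (Real.pi / 12 * ((2 * s - r) ^ 2 * (4 * s + r)))) s := by
    intro s hs
    have hs0 : s ≠ 0 := (hb0.trans_le hs).ne'
    have hi := hasDerivAt_inv hs0
    have := ((((hi.const_mul 16).sub ((hi.pow 2).const_mul (6 * r))).add ((hi.pow 4).const_mul (r^3/4))).const_mul (1/12)).neg
    refine this.congr_deriv ?_
    show -(1 / 12 * (16 * -(s ^ 2)⁻¹ - 6 * r * (((2 : ℕ) : ℝ) * s⁻¹ ^ 1 * -(s ^ 2)⁻¹)
      + r ^ 3 / 4 * (((4 : ℕ) : ℝ) * s⁻¹ ^ 3 * -(s ^ 2)⁻¹))) = _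
    push_cast
    field_simp
    ring
  have hpos : ∀ s ∈ Ioi b, 0 ≤ 1 / (Real.pi * s ^ 5) * (Real.pi / 12 * ((2 * s - r) ^ 2 * (4 * s + r))) := by
    intro s hs
    have : 0 < s := hb0.trans hs
    positivity
  have hlim : Tendsto (fun s : ℝ => -((1 / 12) * (16 * s⁻¹ - 6 * r * (s⁻¹) ^ 2 + r ^ 3 / 4 * (s⁻¹) ^ 4))) atTop (𝓝 0) := by
    have hi := tendsto_inv_atTop_zero (𝕜 := ℝ)
    have := ((((hi.const_mul 16).sub ((hi.pow 2).const_mul (6 * r))).add ((hi.pow 4).const_mul (r^3/4))).const_mul (1/12)).neg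
    simpa using this
  refine ⟨integrableOn_Ioi_deriv_of_nonneg' hd hpos hlim, ?_⟩
  rw [integral_Ioi_of_hasDerivAt_of_nonneg' hd hpos hlim]
  field_simp
  ring

lemma mid_int (r m : ℝ) (hr : 0 < r) (hb : r / 2 < m) :
    IntegrableOn (fun s : ℝ => 1 / (4 * Real.pi * m ^ 3 * s ^ 2) * (Real.pi / 12 * ((2 * s - r) ^ 2 * (4 * s + r)))) (Ioc (r/2) m) ∧
    ∫ s in Ioc (r/2) m, 1 / (4 * Real.pi * m ^ 3 * s ^ 2) * (Real.pi / 12 * ((2 * s - r) ^ 2 * (4 * s + r)))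
      = (1 / (48 * m ^ 3)) * ((8 * m ^ 2 - 12 * r * m - r ^ 3 / m) + 6 * r ^ 2) := by
  have hm0 : 0 < m := by linarith
  have hpi := Real.pi_pos
  have hii : IntervalIntegrable (fun s : ℝ => 1 / (4 * Real.pi * m ^ 3 * s ^ 2) * (Real.pi / 12 * ((2 * s - r) ^ 2 * (4 * s + r)))) volume (r/2) m := by
    refine ContinuousOn.intervalIntegrable ?_
    rw [uIcc_of_le hb.le]
    intro s hs
    have hs0 : 0 < s := by have := hs.1; linarith
    refine ContinuousAt.continuousWithinAt ?_
    fun_prop (disch := positivity)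
  refine ⟨(intervalIntegrable_iff_integrableOn_Ioc_of_le hb.le).1 hii, ?_⟩
  rw [← intervalIntegral.integral_of_le hb.le]
  rw [intervalIntegral.integral_eq_sub_of_hasDerivAt (f := fun s : ℝ => (1 / (48 * m ^ 3)) * (8 * s ^ 2 - 12 * r * s - r ^ 3 * s⁻¹)) _ hii]
  · field_simp
    ring
  · intro s hs
    rw [uIcc_of_le hb.le] at hs
    have hs0 : s ≠ 0 := by have := hs.1; intro h; linarith
    have := (((((hasDerivAt_id s).pow 2).const_mul 8).sub ((hasDerivAt_id s).const_mul (12 * r))).sub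
      ((hasDerivAt_inv hs0).const_mul (r ^ 3))).const_mul (1 / (48 * m ^ 3))
    refine this.congr_deriv ?_
    simp only [Nat.cast_ofNat, id]
    field_simp
    ring

lemma kint (m r : ℝ) (hm : 0 ≤ m) (hr : 0 < r) :
    Integrable (fun s => wt m s * lensV s r) ∧ ∫ s, wt m s * lensV s r = Km m r := by
  have hz : ∀ s ∉ Ioi (r / 2), wt m s * lensV s r = 0 := by
    intro s hs
    rw [mem_Ioi, not_lt] at hs
    rw [lensV, if_neg (by linarith), mul_zero]
  have htail : ∀ b, m ≤ b → r / 2 ≤ b → EqOn (fun s : ℝ => 1 / (Real.pi * s ^ 5) * (Real.pi / 12 * ((2 * s - r) ^ 2 * (4 * s + r))))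
      (fun s => wt m s * lensV s r) (Ioi b) := by
    intro b h1 h2 s hs
    have hs : b < s := hs
    simp only [wt, lensV]
    rw [if_neg (by linarith), if_neg (by linarith), if_pos (by linarith)]
  rw [← setIntegral_eq_integral_of_forall_compl_eq_zero hz]
  rw [← integrableOn_iff_integrable_of_support_subset (s := Ioi (r/2)) (fun s hs => by
    by_contra h; exact hs (hz s h))]
  by_cases h : 2 * m ≤ r
  · obtain ⟨h1, h2⟩ := tail_int r (r/2) hr le_rfl
    have he := htail (r/2) (by linarith) le_rfl
    refine ⟨h1.congr_fun he measurableSet_Ioi, ?_⟩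
    rw [← setIntegral_congr_fun measurableSet_Ioi he, h2, Km, if_pos h]
    field_simp
    ring
  · push Not at h
    have hb : r / 2 < m := by linarith
    obtain ⟨h1, h2⟩ := tail_int r m hr hb.le
    obtain ⟨h3, h4⟩ := mid_int r m hr hb
    have he := htail m le_rfl hb.le
    have he2 : EqOn (fun s : ℝ => 1 / (4 * Real.pi * m ^ 3 * s ^ 2) * (Real.pi / 12 * ((2 * s - r) ^ 2 * (4 * s + r))))
      (fun s => wt m s * lensV s r) (Ioo (r/2) m) := by
      intro s hs
      simp only [wt, lensV]
      rw [if_neg (by linarith [hs.1]), if_pos hs.2, if_pos (by linarith [hs.1])]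
    have h3' := h3.mono_set (Ioo_subset_Ioc_self)
    have i1 := h1.congr_fun he measurableSet_Ioi
    have i2 := (h3'.congr_fun he2 measurableSet_Ioo)
    rw [← integrableOn_Ioc_iff_integrableOn_Ioo] at i2
    rw [← Ioc_union_Ioi_eq_Ioi hb.le]
    refine ⟨i2.union i1, ?_⟩
    rw [setIntegral_union Ioc_disjoint_Ioi_same measurableSet_Ioi i2 i1,
      ← setIntegral_congr_fun measurableSet_Ioi he, h2, integral_Ioc_eq_integral_Ioo,
      ← setIntegral_congr_fun measurableSet_Ioo he2, ← integral_Ioc_eq_integral_Ioo, h4, Km, if_neg (by linarith)]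
    have : 0 < m := by linarith
    field_simp
    ring

lemma Km_meas (m : ℝ) : Measurable (Km m) := by
  unfold Km
  exact Measurable.ite measurableSet_Ici (by fun_prop) (by fun_prop)

lemma Km_nonneg (m r : ℝ) (hm : 0 ≤ m) (hr : 0 ≤ r) : 0 ≤ Km m r := by
  unfold Km; split_ifs with h
  · positivity
  · refine div_nonneg ?_ hr
    push Not at h
    have h1 : 0 ≤ r / (2 * m) := by positivity
    have h2 : r / (2 * m) ≤ 1 := by rw [div_le_one (by linarith)]; linarith
    have : (1 - r / (2 * m)) ^ 3 ≤ 1 := pow_le_one₀ (by linarith) (by linarith)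
    linarith

lemma Km_le (m r : ℝ) (hm : 0 ≤ m) (hr : 0 ≤ r) : Km m r ≤ r⁻¹ := by
  unfold Km; split_ifs with h
  · rw [one_div]
  · rw [div_eq_mul_inv]
    push Not at h
    have h2 : r / (2 * m) ≤ 1 := by rw [div_le_one (by linarith)]; linarith
    have : 0 ≤ (1 - r / (2 * m)) ^ 3 := pow_nonneg (by linarith) 3
    have : 0 ≤ r⁻¹ := by positivity
    nlinarith

lemma Km_pos {f : E3 → ℝ} (hf : Adm f) (m : ℝ) (hm : 0 ≤ m) :
    0 ≤ ∫ p : E3 × E3, f p.1 * f p.2 * Km m ‖p.1 - p.2‖ := by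
  refine mix (T := ℝ) volume hf (k := fun s p => wt m s * lensV s ‖p.1 - p.2‖) ?_
    (fun s p => mul_nonneg (wt_nonneg _ _) (lensV_nonneg _ _ (norm_nonneg _))) ?_ ?_ ?_
  · exact ((wt_meas m).comp measurable_fst).mul (lensV_meas.comp (measurable_fst.prodMk
      ((measurable_fst.comp measurable_snd).sub (measurable_snd.comp measurable_snd)).norm))
  · have hd : ∀ᵐ p : E3 × E3, p.1 ≠ p.2 := by
      have hms : MeasurableSet {p : E3 × E3 | p.1 ≠ p.2} :=
        (isOpen_ne_fun continuous_fst continuous_snd).measurableSet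
      rw [Measure.volume_eq_prod, Measure.ae_prod_iff_ae_ae hms]
      refine Eventually.of_forall fun x => ?_
      have : ∀ᵐ y : E3, y ≠ x := by
        rw [ae_iff]; simp
      filter_upwards [this] with y hy using hy.symm
    filter_upwards [hd] with p hp
    exact kint m _ hm (norm_pos_iff.2 (sub_ne_zero.2 hp))
  · refine pair_integrable hf ((Km_meas m).comp (measurable_fst.sub measurable_snd).norm) fun p => ?_
    rw [abs_of_nonneg (Km_nonneg _ _ hm (norm_nonneg _))]
    exact Km_le _ _ hm (norm_nonneg _)
  · intro s
    by_cases hs : 0 < s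
    · have : ∀ p : E3 × E3, f p.1 * f p.2 * (wt m s * lensV s ‖p.1 - p.2‖)
          = wt m s * (f p.1 * f p.2 * lensV s ‖p.1 - p.2‖) := fun p => by ring
      simp only [this]
      rw [integral_const_mul]
      exact mul_nonneg (wt_nonneg _ _) (lens_pos hf s hs)
    · have : wt m s = 0 := if_pos (by linarith)
      simp [this]

/-- The Graf-Schenker radial kernel. -/
def Ka (a r : ℝ) : ℝ := (1 - (max 0 (1 - a * r)) ^ 3) / r

lemma Ka_pos {f : E3 → ℝ} (hf : Adm f) (a : ℝ) (ha : 0 ≤ a) :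
    0 ≤ ∫ p : E3 × E3, f p.1 * f p.2 * Ka a ‖p.1 - p.2‖ := by
  rcases ha.eq_or_lt with rfl | ha
  · simp [Ka]
  have h : ∀ r, 0 ≤ r → Ka a r = Km (1 / (2 * a)) r := by
    intro r hr
    have e : 2 * (1 / (2 * a)) = 1 / a := by field_simp
    unfold Ka Km
    rw [e]
    have e2 : r / (1 / a) = a * r := by field_simp
    rw [e2]
    split_ifs with h
    · rw [div_le_iff₀ ha] at h
      rw [max_eq_left (by linarith)]; ring
    · rw [div_le_iff₀ ha] at h
      rw [max_eq_right (by linarith)]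
  have := Km_pos hf (1 / (2 * a)) (by positivity)
  simpa only [h _ (norm_nonneg _)] using this

lemma coulomb_pos {f : E3 → ℝ} (hf : Adm f) :
    0 ≤ ∫ p : E3 × E3, f p.1 * f p.2 * ‖p.1 - p.2‖⁻¹ := by
  have := Km_pos hf 0 le_rfl
  have h : ∀ r : ℝ, 0 ≤ r → Km 0 r = r⁻¹ := fun r hr => by
    rw [Km, if_pos (by simpa using hr), one_div]
  simpa only [h _ (norm_nonneg _)] using this

lemma tetra_smul {Δ : Set E3} (h : IsTetra Δ) {l : ℝ} (hl : 0 < l) : IsTetra (l • Δ) := by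
  obtain ⟨v, hv, rfl⟩ := h
  refine ⟨fun i => l • v i, ?_, ?_⟩
  · have := hv.map' ((LinearEquiv.smulOfNeZero ℝ E3 l hl.ne').toAffineEquiv : E3 →ᵃ[ℝ] E3)
      (LinearEquiv.smulOfNeZero ℝ E3 l hl.ne').injective
    exact this
  · rw [← interior_smul₀ hl.ne', ← convexHull_smul]
    congr 2
    ext x; simp [mem_smul_set]

lemma tetra_open {Δ : Set E3} (h : IsTetra Δ) : IsOpen Δ := by
  obtain ⟨v, hv, rfl⟩ := h; exact isOpen_interior

lemma tetra_convex {Δ : Set E3} (h : IsTetra Δ) : Convex ℝ Δ := by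
  obtain ⟨v, hv, rfl⟩ := h; exact (convex_convexHull ℝ _).interior

lemma tetra_bounded {Δ : Set E3} (h : IsTetra Δ) : IsBounded Δ := by
  obtain ⟨v, hv, rfl⟩ := h
  exact (isBounded_convexHull.2 (finite_range v).isBounded).subset interior_subset

lemma tetra_cov {T : Set E3} (h : IsTetra T) : ∃ p : E3 → ℝ, Continuous p ∧ (∀ w, 0 ≤ p w) ∧
    (∀ t : ℝ, 0 ≤ t → ∀ w, p (t • w) = t * p w) ∧
    ∀ w, vol (slc T T w) = (max 0 (1 - p w)) ^ 3 * vol T := by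
  obtain ⟨v, hv, rfl⟩ := h
  let b : AffineBasis (Fin 4) ℝ E3 := ⟨v, hv, by
    rw [hv.affineSpan_eq_top_iff_card_eq_finrank_add_one]; simp⟩
  have hT : interior (convexHull ℝ (range v)) = {x | ∀ i, 0 < b.coord i x} := b.interior_convexHull
  set T := interior (convexHull ℝ (range v))
  have hadd : ∀ i x w, b.coord i (x + w) = b.coord i x + (b.coord i).linear w := by
    intro i x w
    have := (b.coord i).map_vadd x w
    rw [vadd_eq_add, vadd_eq_add] at this
    rw [add_comm x w, this, add_comm]
  have h0 : ∀ i x, b.coord i x = b.coord i 0 + (b.coord i).linear x := fun i x => by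
    have := hadd i 0 x; rwa [zero_add] at this
  set mm : E3 → Fin 4 → ℝ := fun w i => max 0 (-(b.coord i).linear w) with hmm
  set p : E3 → ℝ := fun w => ∑ i, mm w i with hp
  have hset : ∀ w x, x ∈ slc T T w ↔ ∀ i, mm w i < b.coord i x := by
    intro w x
    show x ∈ T ∧ x + w ∈ T ↔ _
    rw [hT]
    simp only [mem_ofPred_eq, hadd, hmm, max_lt_iff]
    constructor
    · rintro ⟨h1, h2⟩ i; exact ⟨h1 i, by linarith [h2 i]⟩
    · intro h; exact ⟨fun i => (h i).1, fun i => by linarith [(h i).2]⟩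
  refine ⟨p, ?_, fun w => Finset.sum_nonneg fun i _ => le_max_left _ _, ?_, ?_⟩
  · refine continuous_finsetSum _ fun i _ => ?_
    have : Continuous ((b.coord i).linear) := LinearMap.continuous_of_finiteDimensional _
    exact continuous_const.max this.neg
  · intro t ht w
    simp only [hp, hmm, Finset.mul_sum, map_smul, smul_eq_mul]
    refine Finset.sum_congr rfl fun i _ => ?_
    rw [mul_max_of_nonneg _ _ ht]; simp
  · intro w
    have hm0 : ∀ i, 0 ≤ mm w i := fun i => le_max_left _ _
    by_cases hp1 : p w < 1
    · set t := 1 - p w with ht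
      have ht0 : 0 < t := by linarith
      rw [max_eq_right ht0.le]
      set q : E3 := ∑ i, mm w i • v i with hq
      have hΦ : ∀ i y, b.coord i (t • y + q) = t * b.coord i y + mm w i := by
        intro i y
        have hlv : ∀ j, (b.coord i).linear (v j) = (if i = j then 1 else 0) - b.coord i 0 := by
          intro j
          have h1 := h0 i (b j)
          rw [b.coord_apply] at h1
          rw [h1]; show (b.coord i).linear (b j) = _; ring
        rw [hadd, h0 i (t • y), h0 i y, hq, map_sum, map_smul]
        simp only [map_smul, smul_eq_mul, hlv, mul_sub, mul_ite, mul_one, mul_zero]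
        rw [Finset.sum_sub_distrib, Finset.sum_ite_eq, if_pos (Finset.mem_univ _), ← Finset.sum_mul]
        have : ∑ j, mm w j = 1 - t := by rw [ht]; simp [hp]
        rw [this]; ring
      have himg : slc T T w = (fun x => x - q) ⁻¹' (t • T) := by
        ext x
        rw [hset, mem_preimage, mem_smul_set_iff_inv_smul_mem₀ ht0.ne', hT, mem_ofPred_eq]
        refine forall_congr' fun i => ?_
        have h1 := hΦ i (t⁻¹ • (x - q))
        rw [smul_smul, mul_inv_cancel₀ ht0.ne', one_smul, sub_add_cancel] at h1
        rw [h1]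
        constructor
        · intro h; exact pos_of_mul_pos_right (by linarith : 0 < t * _) ht0.le
        · intro h; have := mul_pos ht0 h; linarith
      rw [himg]
      unfold vol
      simp only [sub_eq_add_neg]
      rw [measure_preimage_add_right, Measure.addHaar_smul, ENNReal.toReal_mul, finrank_euclideanSpace_fin,
        ENNReal.toReal_ofReal (abs_nonneg _), abs_of_nonneg (by positivity)]
    · have : slc T T w = ∅ := by
        ext x
        rw [hset]
        simp only [mem_empty_iff_false, iff_false]
        intro h
        apply hp1
        rw [← b.sum_coord_apply_eq_one x]
        exact Finset.sum_lt_sum_of_nonempty Finset.univ_nonempty fun i _ => h i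
      rw [this, max_eq_left (by linarith)]
      simp [vol]

/-- The charge density. -/
def chg (Λ : Set E3) (ρ : ℝ) (Ω : Set E3) (x : E3) : ℝ :=
  Set.indicator Ω (fun _ => (1:ℝ)) x - ρ * Set.indicator Λ (fun _ => (1:ℝ)) x

/-- Twice the Coulomb energy. -/
def DD (f : E3 → ℝ) : ℝ := ∫ p : E3 × E3, f p.1 * f p.2 * ‖p.1 - p.2‖⁻¹

lemma coul_integrable {f : E3 → ℝ} (hf : Adm f) :
    Integrable (fun p : E3 × E3 => f p.1 * f p.2 * ‖p.1 - p.2‖⁻¹) :=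
  pair_integrable hf (k := fun p => ‖p.1 - p.2‖⁻¹) (measurable_fst.sub measurable_snd).norm.inv (fun p => by
    rw [abs_of_nonneg (by positivity)])

lemma chg_adm {Λ Ω : Set E3} {ρ : ℝ} (h0 : 0 ≤ ρ) (h1 : ρ ≤ 1) (hΛ : MeasurableSet Λ) (hΩ : MeasurableSet Ω)
    (hb : IsBounded Λ) (hs : Ω ⊆ Λ) : Adm (chg Λ ρ Ω) := by
  refine ⟨?_, ?_, ?_⟩
  · exact (measurable_const.indicator hΩ).sub ((measurable_const.indicator hΛ).const_mul ρ)
  · intro x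
    unfold chg
    by_cases hx : x ∈ Ω
    · rw [indicator_of_mem hx, indicator_of_mem (hs hx), abs_le]; constructor <;> linarith
    · rw [indicator_of_notMem hx]
      by_cases hx' : x ∈ Λ
      · rw [indicator_of_mem hx', abs_le]; constructor <;> linarith
      · rw [indicator_of_notMem hx']; simp
  · obtain ⟨R, hR⟩ := hb.subset_ball (0 : E3)
    refine ⟨R, fun x hx => hR ?_⟩
    by_contra h
    apply hx
    have : x ∉ Ω := fun h' => h (hs h')
    simp [chg, h, this]

lemma ldEnergy_eq {Λ Ω : Set E3} {ρ : ℝ} (hf : Adm (chg Λ ρ Ω)) :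
    ldEnergy Λ ρ Ω = per Ω + (1/2) * DD (chg Λ ρ Ω) := by
  unfold ldEnergy DD
  congr 2
  rw [Measure.volume_eq_prod, integral_prod _ (by rw [← Measure.volume_eq_prod]; exact coul_integrable hf)]
  simp only [div_eq_mul_inv, chg]

lemma DD_nonneg {f : E3 → ℝ} (hf : Adm f) : 0 ≤ DD f := coulomb_pos hf

lemma muStar_nonneg : 0 ≤ muStar := by
  refine Real.sInf_nonneg ?_
  rintro t ⟨Ω, _, _, _, _, rfl⟩
  refine div_nonneg (add_nonneg (per_nonneg _) (mul_nonneg (by norm_num) ?_)) (vol_nonneg _)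
  exact integral_nonneg fun x => integral_nonneg fun y => by positivity

lemma FF_le {T : Set E3} {ρ : ℝ} (h0 : 0 ≤ ρ) (h1 : ρ ≤ 1) (hT : MeasurableSet T) (hbT : IsBounded T)
    {A : Set E3} (hA : MeasurableSet A) (hAT : A ⊆ T) (hfA : HasFinPer A) :
    FF T ρ ≤ per A + (1/2) * DD (chg T ρ A) - muStar * vol A := by
  rw [← ldEnergy_eq (chg_adm h0 h1 hT hA hbT hAT)]
  refine csInf_le ⟨-(muStar * vol T), ?_⟩ ⟨A, hA, hAT, hfA, rfl⟩
  rintro t ⟨B, hB, hBT, hfB, rfl⟩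
  have hadm := chg_adm h0 h1 hT hB hbT hBT
  rw [ldEnergy_eq hadm]
  have a1 := per_nonneg B
  have a2 := DD_nonneg hadm
  have a3 := vol_mono hBT hbT.measure_lt_top.ne
  have a4 := muStar_nonneg
  nlinarith

/-- the localization kernel -/
def locK (T : Set E3) (τ : E3) (p : E3 × E3) : ℝ :=
  T.indicator (fun _ => (1:ℝ)) (p.1 - τ) * T.indicator (fun _ => (1:ℝ)) (p.2 - τ) * ‖p.1 - p.2‖⁻¹

lemma locK_meas {T : Set E3} (hT : MeasurableSet T) :
    Measurable (fun q : E3 × (E3 × E3) => locK T q.1 q.2) := by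
  unfold locK
  have m : Measurable (T.indicator (fun _ => (1:ℝ))) := measurable_const.indicator hT
  refine ((m.comp (by fun_prop)).mul (m.comp (by fun_prop))).mul ?_
  exact ((measurable_fst.comp measurable_snd).sub (measurable_snd.comp measurable_snd)).norm.inv

lemma locK_nonneg (T : Set E3) (τ : E3) (p : E3 × E3) : 0 ≤ locK T τ p :=
  mul_nonneg (mul_nonneg (indicator_nonneg (fun _ _ => zero_le_one) _)
    (indicator_nonneg (fun _ _ => zero_le_one) _)) (by positivity)

lemma slc_subset (Ω T : Set E3) (τ : E3) : slc Ω T τ ⊆ T := fun _ hx => hx.1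

lemma locK_int {T : Set E3} (hT : MeasurableSet T) (hb : IsBounded T) (p : E3 × E3) :
    Integrable (fun τ => locK T τ p) ∧ ∫ τ, locK T τ p = vol (slc T T (p.2 - p.1)) * ‖p.1 - p.2‖⁻¹ := by
  have e : ∀ τ, locK T τ p = ((fun τ => p.1 - τ) ⁻¹' slc T T (p.2 - p.1)).indicator (fun _ => (1:ℝ)) τ * ‖p.1 - p.2‖⁻¹ := by
    intro τ
    unfold locK
    congr 1
    have hs : τ ∈ (fun τ => p.1 - τ) ⁻¹' slc T T (p.2 - p.1) ↔ p.1 - τ ∈ T ∧ p.2 - τ ∈ T := by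
      show p.1 - τ ∈ T ∧ p.1 - τ + (p.2 - p.1) ∈ T ↔ _
      rw [show p.1 - τ + (p.2 - p.1) = p.2 - τ by abel]
    by_cases h1 : p.1 - τ ∈ T
    · by_cases h2 : p.2 - τ ∈ T
      · rw [indicator_of_mem h1, indicator_of_mem h2, indicator_of_mem (hs.2 ⟨h1, h2⟩), one_mul]
      · rw [indicator_of_notMem h2, indicator_of_notMem (fun h => h2 (hs.1 h).2), mul_zero]
    · rw [indicator_of_notMem h1, indicator_of_notMem (fun h => h1 (hs.1 h).1), zero_mul]
  have hv : volume ((fun τ => p.1 - τ) ⁻¹' slc T T (p.2 - p.1)) = volume (slc T T (p.2 - p.1)) :=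
    (Measure.measurePreserving_sub_left volume p.1).measure_preimage (slc_meas hT hT _).nullMeasurableSet
  have hm : MeasurableSet ((fun τ => p.1 - τ) ⁻¹' slc T T (p.2 - p.1)) :=
    (slc_meas hT hT _).preimage (measurable_const.sub measurable_id)
  have hfin : volume (slc T T (p.2 - p.1)) ≠ ⊤ :=
    ne_top_of_le_ne_top hb.measure_lt_top.ne (measure_mono (slc_subset _ _ _))
  simp only [e]
  constructor
  · refine Integrable.mul_const ((integrable_indicator_iff hm).2 (integrableOn_const (by rw [hv]; exact hfin))) _
  · rw [integral_mul_const, integral_indicator hm]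
    simp only [integral_const, smul_eq_mul, mul_one, Measure.real, Measure.restrict_apply_univ]
    rw [hv]; rfl

lemma cov_integrable {T : Set E3} (hT : MeasurableSet T) (hb : IsBounded T) {f : E3 → ℝ} (hf : Adm f) :
    Integrable (fun p : E3 × E3 => f p.1 * f p.2 * (vol (slc T T (p.2 - p.1)) * ‖p.1 - p.2‖⁻¹)) := by
  have h := (coul_integrable hf).mul_const (vol T)
  have hm : Measurable (fun p : E3 × E3 => f p.1 * f p.2 * (vol (slc T T (p.2 - p.1)) * ‖p.1 - p.2‖⁻¹)) := by
    refine ((hf.meas.comp measurable_fst).mul (hf.meas.comp measurable_snd)).mul ?_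
    have : (fun p : E3 × E3 => vol (slc T T (p.2 - p.1)) * ‖p.1 - p.2‖⁻¹) = fun p => ∫ τ, locK T τ p := by
      ext p; exact (locK_int hT hb p).2.symm
    rw [this]
    exact (((locK_meas hT).comp measurable_swap).stronglyMeasurable.integral_prod_right' (ν := volume)).measurable
  refine h.mono hm.aestronglyMeasurable (Eventually.of_forall fun p => ?_)
  have hv : vol (slc T T (p.2 - p.1)) ≤ vol T := vol_mono (slc_subset _ _ _) hb.measure_lt_top.ne
  rw [norm_mul, norm_mul, norm_mul (_ * _) (vol T), norm_mul _ (‖_‖⁻¹), norm_mul _ (‖_‖⁻¹), Real.norm_of_nonneg (vol_nonneg T), Real.norm_of_nonneg (vol_nonneg _)]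
  have := mul_le_mul_of_nonneg_left hv (by positivity : 0 ≤ ‖f p.1 * f p.2‖ * ‖‖p.1 - p.2‖⁻¹‖)
  simp only [norm_mul] at this ⊢
  linarith

lemma DD_slc {Λ Ω T : Set E3} {ρ : ℝ} {τ : E3} (hT : ∀ x ∈ T, x + τ ∈ Λ) :
    DD (chg T ρ (slc Ω T τ)) = ∫ p : E3 × E3, chg Λ ρ Ω p.1 * chg Λ ρ Ω p.2 * locK T τ p := by
  unfold DD
  have : (volume : Measure (E3 × E3)).IsAddRightInvariant :=
    inferInstanceAs ((volume.prod volume : Measure (E3 × E3)).IsAddRightInvariant)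
  rw [← integral_add_right_eq_self (fun p : E3 × E3 => chg Λ ρ Ω p.1 * chg Λ ρ Ω p.2 * locK T τ p) ((τ, τ) : E3 × E3)]
  refine integral_congr_ae (Eventually.of_forall fun p => ?_)
  have e : ∀ x, chg T ρ (slc Ω T τ) x = T.indicator (fun _ => (1:ℝ)) x * chg Λ ρ Ω (x + τ) := by
    intro x
    unfold chg
    by_cases hx : x ∈ T
    · rw [indicator_of_mem hx, indicator_of_mem (hT x hx), one_mul]
      by_cases h : x + τ ∈ Ω
      · rw [indicator_of_mem h, indicator_of_mem (show x ∈ slc Ω T τ from ⟨hx, h⟩)]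
      · rw [indicator_of_notMem h, indicator_of_notMem (fun h' : x ∈ slc Ω T τ => h h'.2)]
    · rw [indicator_of_notMem hx, indicator_of_notMem (fun h' : x ∈ slc Ω T τ => hx h'.1)]; ring
  simp only [e, locK, Prod.fst_add, Prod.snd_add, add_sub_cancel_right, add_sub_add_right_eq_sub]
  ring

lemma vol_slc_meas {Ω T : Set E3} (hΩ : MeasurableSet Ω) (hT : MeasurableSet T) :
    Measurable (fun τ => volume (slc Ω T τ)) := by
  have hm : MeasurableSet {q : E3 × E3 | q.2 ∈ T ∧ q.2 + q.1 ∈ Ω} :=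
    (hT.preimage measurable_snd).inter (hΩ.preimage (measurable_snd.add measurable_fst))
  exact measurable_measure_prodMk_left hm

lemma vol_slc_int {Ω T S S' : Set E3} (hΩ : MeasurableSet Ω) (hT : MeasurableSet T) (hS : MeasurableSet S)
    (h2 : ∀ z ∈ S', ∀ x ∈ T, z - x ∈ S) :
    volume T * volume (Ω ∩ S') ≤ ∫⁻ τ in S, volume (slc Ω T τ) := by
  have hm : MeasurableSet {q : E3 × E3 | q.1 ∈ S ∧ q.2 ∈ T ∧ q.2 + q.1 ∈ Ω} :=
    (hS.preimage measurable_fst).inter ((hT.preimage measurable_snd).inter (hΩ.preimage (measurable_snd.add measurable_fst)))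
  have e1 : ∫⁻ τ in S, volume (slc Ω T τ) = (volume.prod volume) {q : E3 × E3 | q.1 ∈ S ∧ q.2 ∈ T ∧ q.2 + q.1 ∈ Ω} := by
    rw [Measure.prod_apply hm, ← lintegral_indicator hS]
    refine lintegral_congr fun τ => ?_
    by_cases h : τ ∈ S
    · rw [indicator_of_mem h]; congr 1; ext x; simp [slc, h]
    · rw [indicator_of_notMem h]; simp [h]
  rw [e1, Measure.prod_apply_symm hm, mul_comm, ← setLIntegral_const, ← lintegral_indicator hT]
  refine lintegral_mono fun x => ?_
  by_cases h : x ∈ T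
  · rw [indicator_of_mem h]
    rw [← measure_preimage_add volume x]
    refine measure_mono fun τ hτ => ?_
    have h3 : x + τ ∈ Ω := hτ.1
    have h4 := h2 _ hτ.2 x h
    rw [add_sub_cancel_left] at h4
    exact ⟨h4, h, h3⟩
  · rw [indicator_of_notMem h]; exact zero_le

lemma locK_pos {T : Set E3} (hT : MeasurableSet T) {f : E3 → ℝ} (hf : Adm f) (τ : E3) :
    0 ≤ ∫ p : E3 × E3, f p.1 * f p.2 * locK T τ p := by
  have hg : Adm (fun x => f x * T.indicator (fun _ => (1:ℝ)) (x - τ)) := by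
    refine ⟨?_, ?_, ?_⟩
    · exact hf.meas.mul ((measurable_const.indicator hT).comp (measurable_id.sub measurable_const))
    · intro x
      by_cases h : x - τ ∈ T
      · simp only [indicator_of_mem h, mul_one]; exact hf.le_one x
      · simp [indicator_of_notMem h]
    · obtain ⟨R, hR⟩ := hf.supp
      exact ⟨R, fun x hx => hR x (left_ne_zero_of_mul hx)⟩
  have := coulomb_pos hg
  refine this.trans (le_of_eq (integral_congr_ae (Eventually.of_forall fun p => ?_)))
  simp only [locK]; ring

lemma lemmaA {Λ Ω T S S' : Set E3} {ρ : ℝ} (h0 : 0 ≤ ρ) (h1 : ρ ≤ 1)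
    (hΛ : MeasurableSet Λ) (hbΛ : IsBounded Λ) (hΩ : MeasurableSet Ω) (hΩΛ : Ω ⊆ Λ) (hfΩ : HasFinPer Ω)
    (hT : MeasurableSet T) (hbT : IsBounded T) (hfT : HasFinPer T)
    (hS : MeasurableSet S) (hbS : IsBounded S)
    (hST : ∀ τ ∈ S, ∀ x ∈ T, x + τ ∈ Λ) (hSS : ∀ z ∈ S', ∀ x ∈ T, z - x ∈ S) :
    vol S * FF T ρ + muStar * (vol T * vol (Ω ∩ S')) ≤ vol T * per Ω + per T * vol Ω +
      (1/2) * ∫ p : E3 × E3, chg Λ ρ Ω p.1 * chg Λ ρ Ω p.2 * (vol (slc T T (p.2 - p.1)) * ‖p.1 - p.2‖⁻¹) := by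
  have hf := chg_adm h0 h1 hΛ hΩ hbΛ hΩΛ
  have hbΩ := hbΛ.subset hΩΛ
  obtain ⟨A, hAm, hAi, hA⟩ := exists_perA hΩ hbΩ hT hbT hfΩ hfT
  have hAne : ∫⁻ τ, A τ ≠ ⊤ := ne_top_of_le_ne_top ENNReal.ofReal_ne_top hAi
  have hAae := ae_lt_top hAm hAne
  have hSfin : volume S ≠ ⊤ := hbS.measure_lt_top.ne
  have hTfin : volume T ≠ ⊤ := hbT.measure_lt_top.ne
  set G : E3 → ℝ := fun τ => ∫ p : E3 × E3, chg Λ ρ Ω p.1 * chg Λ ρ Ω p.2 * locK T τ p with hG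
  have hGint : Integrable G := mix_left volume hf (locK_meas hT) (locK_nonneg T)
    (Eventually.of_forall fun p => locK_int hT hbT p) (cov_integrable hT hbT hf)
  have hGeq := mix_aux volume hf (locK_meas hT) (locK_nonneg T)
    (Eventually.of_forall fun p => locK_int hT hbT p) (cov_integrable hT hbT hf)
  have hAint : Integrable (fun τ => (A τ).toReal) := integrable_toReal_of_lintegral_ne_top hAm.aemeasurable hAne
  have hVint : IntegrableOn (fun τ => vol (slc Ω T τ)) S := by
    refine Measure.integrableOn_of_bounded (M := vol T) hSfin (vol_slc_meas hΩ hT).ennreal_toReal.aestronglyMeasurable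
      (Eventually.of_forall fun τ => ?_)
    rw [Real.norm_of_nonneg (vol_nonneg _)]
    exact vol_mono (slc_subset _ _ _) hbT.measure_lt_top.ne
  have hμ := muStar_nonneg
  -- pointwise bound, integrated
  have hI : ∫ τ in S, FF T ρ ≤ ∫ τ in S, ((A τ).toReal + (1/2) * G τ - muStar * vol (slc Ω T τ)) := by
    refine setIntegral_mono_ae_restrict (integrableOn_const hSfin)
      ((hAint.integrableOn.add (hGint.integrableOn.const_mul _)).sub (hVint.const_mul _)) ?_
    filter_upwards [ae_restrict_of_ae hAae, ae_restrict_mem hS] with τ hτ hτS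
    obtain ⟨hp1, hp2⟩ := hA τ hτ
    have := FF_le h0 h1 hT hbT (slc_meas hΩ hT τ) (slc_subset Ω T τ) hp1
    rw [DD_slc (hST τ hτS)] at this
    simp only [hG]
    linarith
  have i1 : IntegrableOn (fun τ => (A τ).toReal + (1/2) * G τ) S :=
    hAint.integrableOn.add (hGint.integrableOn.const_mul _)
  rw [integral_sub i1 (hVint.const_mul _), integral_add hAint.integrableOn (hGint.integrableOn.const_mul _),
    integral_const_mul, integral_const_mul, setIntegral_const, smul_eq_mul] at hI
  have b1 : ∫ τ in S, (A τ).toReal ≤ vol T * per Ω + per T * vol Ω := by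
    refine (setIntegral_le_integral hAint (Eventually.of_forall fun τ => ENNReal.toReal_nonneg)).trans ?_
    rw [integral_toReal hAm.aemeasurable hAae]
    refine ENNReal.toReal_le_of_le_ofReal ?_ hAi
    have := per_nonneg Ω
    have := per_nonneg T
    have := vol_nonneg T
    have := vol_nonneg Ω
    positivity
  have b2 : ∫ τ in S, G τ ≤ ∫ τ, G τ :=
    setIntegral_le_integral hGint (Eventually.of_forall fun τ => locK_pos hT hf τ)
  have b3 : vol T * vol (Ω ∩ S') ≤ ∫ τ in S, vol (slc Ω T τ) := by
    have h := vol_slc_int hΩ hT hS hSS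
    have hlt : ∫⁻ τ in S, volume (slc Ω T τ) ≠ ⊤ := by
      refine ne_top_of_le_ne_top (ENNReal.mul_ne_top hTfin hSfin)
        ((lintegral_mono fun τ => measure_mono (slc_subset Ω T τ)).trans (le_of_eq ?_))
      rw [lintegral_const, Measure.restrict_apply_univ]
    have h' := ENNReal.toReal_mono hlt h
    rw [ENNReal.toReal_mul] at h'
    unfold vol
    rw [integral_toReal (vol_slc_meas hΩ hT).aemeasurable]
    · exact h'
    · exact Eventually.of_forall fun τ => lt_of_le_of_lt (measure_mono (slc_subset Ω T τ)) hbT.measure_lt_top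
  have b4 := mul_le_mul_of_nonneg_left b3 hμ
  rw [hGeq]
  have : (volume.real S) = vol S := rfl
  rw [this] at hI
  simp only [hG] at *
  linarith

/-- The orthogonal group, as a topological group. -/
abbrev OG : Type := unitary (E3 →L[ℝ] E3)

instance contStarE3 : ContinuousStar (E3 →L[ℝ] E3) :=
  ⟨(ContinuousLinearMap.adjoint (𝕜 := ℝ) (E := E3) (F := E3)).continuous⟩

instance compactOG : CompactSpace OG := by
  refine (isCompact_iff_compactSpace (s := ((unitary (E3 →L[ℝ] E3) : Submonoid _) : Set (E3 →L[ℝ] E3)))).1 ?_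
  refine Metric.isCompact_of_isClosed_isBounded isClosed_unitary ?_
  refine (Metric.isBounded_iff_subset_closedBall 0).2 ⟨1, fun u hu => ?_⟩
  rw [mem_closedBall_zero_iff]
  refine ContinuousLinearMap.opNorm_le_bound _ zero_le_one fun x => ?_
  rw [one_mul]
  exact (Unitary.norm_map ⟨u, hu⟩ x).le

/-- Normalized Haar measure on the orthogonal group. -/
def haarOG : Measure OG := Measure.haarMeasure ⊤

instance probOG : IsProbabilityMeasure haarOG := by
  constructor
  have := Measure.haarMeasure_self (G := OG) (K₀ := ⊤)
  simpa [haarOG] using this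

instance invOG : Measure.IsMulLeftInvariant haarOG := by
  unfold haarOG; infer_instance

lemma cube_bd (x : ℝ) (h : 0 ≤ x) : 0 ≤ 1 - (max 0 (1 - x)) ^ 3 ∧ 1 - (max 0 (1 - x)) ^ 3 ≤ 1 := by
  have h1 : 0 ≤ max 0 (1 - x) := le_max_left _ _
  have h2 : max 0 (1 - x) ≤ 1 := max_le zero_le_one (by linarith)
  have := pow_le_one₀ (n := 3) h1 h2
  have := pow_nonneg h1 3
  constructor <;> linarith

lemma avg_exists {G : Type*} [MeasurableSpace G] (ν : Measure G) [IsProbabilityMeasure ν]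
    {a : G → E3 → ℝ} (hmeas : Measurable (fun q : G × E3 => a q.1 q.2)) (ha : ∀ R w, 0 ≤ a R w) (e0 : E3)
    (hinv0 : ∀ w : E3, ∃ m : G → G, (∀ h : G → ℝ, ∫ R, h (m R) ∂ν = ∫ R, h R ∂ν) ∧
      ∀ R, a (m R) w = a R e0 * ‖w‖) {f : E3 → ℝ} (hf : Adm f) :
    ∃ R : G, 0 ≤ ∫ p : E3 × E3, f p.1 * f p.2 * ((1 - (max 0 (1 - a R (p.2 - p.1))) ^ 3) * ‖p.1 - p.2‖⁻¹) := by
  let k : G → E3 × E3 → ℝ := fun R p => (1 - (max 0 (1 - a R (p.2 - p.1))) ^ 3) * ‖p.1 - p.2‖⁻¹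
  let k' : G → E3 × E3 → ℝ := fun R p => Ka (a R e0) ‖p.1 - p.2‖
  have hk : Measurable (fun q : G × (E3 × E3) => k q.1 q.2) := by
    refine Measurable.mul ?_ ((measurable_fst.comp measurable_snd).sub (measurable_snd.comp measurable_snd)).norm.inv
    have : Measurable (fun q : G × (E3 × E3) => a q.1 (q.2.2 - q.2.1)) :=
      hmeas.comp (measurable_fst.prodMk ((measurable_snd.comp measurable_snd).sub (measurable_fst.comp measurable_snd)))
    exact ((measurable_const.max (this.const_sub 1)).pow_const 3).const_sub 1
  have hk' : Measurable (fun q : G × (E3 × E3) => k' q.1 q.2) := by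
    have h1 : Measurable (fun q : G × (E3 × E3) => a q.1 e0) :=
      hmeas.comp (measurable_fst.prodMk measurable_const)
    have h2 : Measurable (fun q : G × (E3 × E3) => ‖q.2.1 - q.2.2‖) :=
      ((measurable_fst.comp measurable_snd).sub (measurable_snd.comp measurable_snd)).norm
    exact (((measurable_const.max ((h1.mul h2).const_sub 1)).pow_const 3).const_sub 1).div h2
  have hk0 : ∀ R p, 0 ≤ k R p := fun R p => mul_nonneg (cube_bd _ (ha _ _)).1 (by positivity)
  have hk1 : ∀ R p, k R p ≤ ‖p.1 - p.2‖⁻¹ := fun R p =>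
    mul_le_of_le_one_left (by positivity) (cube_bd _ (ha _ _)).2
  have hk0' : ∀ R p, 0 ≤ k' R p := fun R p =>
    div_nonneg (cube_bd _ (mul_nonneg (ha _ _) (norm_nonneg _))).1 (norm_nonneg _)
  have hk1' : ∀ R p, k' R p ≤ ‖p.1 - p.2‖⁻¹ := fun R p => by
    show _ / _ ≤ _
    rw [div_eq_mul_inv]
    exact mul_le_of_le_one_left (by positivity) (cube_bd _ (mul_nonneg (ha _ _) (norm_nonneg _))).2
  have hki : ∀ p, Integrable (fun R => k R p) ν := fun p =>
    Integrable.of_bound (hk.comp (measurable_id.prodMk measurable_const)).aestronglyMeasurable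
      (‖p.1 - p.2‖⁻¹) (Eventually.of_forall fun R => by
        rw [Real.norm_of_nonneg (hk0 R p)]; exact hk1 R p)
  have hki' : ∀ p, Integrable (fun R => k' R p) ν := fun p =>
    Integrable.of_bound (hk'.comp (measurable_id.prodMk measurable_const)).aestronglyMeasurable
      (‖p.1 - p.2‖⁻¹) (Eventually.of_forall fun R => by
        rw [Real.norm_of_nonneg (hk0' R p)]; exact hk1' R p)
  let K : E3 × E3 → ℝ := fun p => ∫ R, k R p ∂ν
  have hKm : Measurable K := (hk.stronglyMeasurable.integral_prod_left' (μ := ν)).measurable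
  have hinteg : Integrable (fun p : E3 × E3 => f p.1 * f p.2 * K p) := by
    refine pair_integrable hf hKm fun p => ?_
    rw [abs_of_nonneg (integral_nonneg fun R => hk0 R p)]
    refine (integral_mono (hki p) (integrable_const _) fun R => hk1 R p).trans (le_of_eq ?_)
    simp
  have hinv : ∀ p, ∫ R, k' R p ∂ν = K p := by
    intro p
    obtain ⟨m, hm1, hm2⟩ := hinv0 (p.2 - p.1)
    show _ = ∫ R, k R p ∂ν
    rw [← hm1 (fun R => k R p)]
    refine integral_congr_ae (Eventually.of_forall fun R => ?_)
    simp only [k, k']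
    rw [hm2, Ka, div_eq_mul_inv, norm_sub_rev p.2 p.1]
  have hpos := mix ν hf hk' hk0' (Eventually.of_forall fun p => ⟨hki' p, hinv p⟩) hinteg
    (fun R => Ka_pos hf _ (ha _ _))
  have hK : ∀ᵐ p : E3 × E3, Integrable (fun t => k t p) ν ∧ ∫ t, k t p ∂ν = K p :=
    Eventually.of_forall fun p => ⟨hki p, rfl⟩
  rw [mix_aux ν hf hk hk0 hK hinteg] at hpos
  obtain ⟨R, hR⟩ := exists_integral_le (mix_left ν hf hk hk0 hK hinteg)
  exact ⟨R, hpos.trans hR⟩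

lemma exists_rot {T : Set E3} (hT : IsTetra T) {f : E3 → ℝ} (hf : Adm f) :
    ∃ R : E3 ≃ₗᵢ[ℝ] E3, ∫ p : E3 × E3, f p.1 * f p.2 * (vol (slc T T (R (p.2 - p.1))) * ‖p.1 - p.2‖⁻¹)
      ≤ vol T * DD f := by
  obtain ⟨P, hPc, hP0, hPh, hPv⟩ := tetra_cov hT
  have hcont : Continuous (fun q : OG × E3 => P (((q.1⁻¹ : OG) : E3 →L[ℝ] E3) q.2)) :=
    hPc.comp ((continuous_subtype_val.comp (continuous_inv.comp continuous_fst)).clm_apply continuous_snd)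
  obtain ⟨R, hR0⟩ := avg_exists haarOG (a := fun R w => P (((R⁻¹ : OG) : E3 →L[ℝ] E3) w)) hcont.measurable
    (fun R w => hP0 _) (EuclideanSpace.single 0 1) (by
      intro w
      obtain ⟨U, hU⟩ := exists_isometry w
      let u : OG := Unitary.linearIsometryEquiv.symm U
      have hu : ((u : OG) : E3 →L[ℝ] E3) w = ‖w‖ • EuclideanSpace.single 0 (1:ℝ) := by
        show U w = _
        rw [hU]
        ext i
        by_cases hi : i = 0 <;> simp [hi]
      refine ⟨fun R => u⁻¹ * R, fun h => integral_mul_left_eq_self (μ := haarOG) h u⁻¹, fun R => ?_⟩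
      simp only [mul_inv_rev, inv_inv, Submonoid.coe_mul, mul_apply_eq_comp]
      rw [hu, map_smul, hPh _ (norm_nonneg _), mul_comm]) hf
  refine ⟨Unitary.linearIsometryEquiv R⁻¹, ?_⟩
  have hV := vol_nonneg T
  set r : E3 ≃ₗᵢ[ℝ] E3 := Unitary.linearIsometryEquiv R⁻¹ with hr
  have hrr : ∀ w, ((R⁻¹ : OG) : E3 →L[ℝ] E3) w = r w := fun w => rfl
  simp only [hrr] at hR0
  have hi2 : Integrable (fun p : E3 × E3 => f p.1 * f p.2 * ((1 - (max 0 (1 - P (r (p.2 - p.1)))) ^ 3) * ‖p.1 - p.2‖⁻¹)) := by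
    refine pair_integrable hf ?_ fun p => ?_
    · refine Measurable.mul ?_ (measurable_fst.sub measurable_snd).norm.inv
      have : Measurable (fun p : E3 × E3 => P (r (p.2 - p.1))) :=
        (hPc.comp (r.continuous.comp (continuous_snd.sub continuous_fst))).measurable
      exact ((measurable_const.max (this.const_sub 1)).pow_const 3).const_sub 1
    · have hb := cube_bd _ (hP0 (r (p.2 - p.1)))
      rw [abs_of_nonneg (mul_nonneg hb.1 (by positivity))]
      exact mul_le_of_le_one_left (by positivity) hb.2
  have e : ∀ p : E3 × E3, f p.1 * f p.2 * (vol (slc T T (r (p.2 - p.1))) * ‖p.1 - p.2‖⁻¹)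
      = vol T * (f p.1 * f p.2 * ‖p.1 - p.2‖⁻¹) - vol T * (f p.1 * f p.2 * ((1 - (max 0 (1 - P (r (p.2 - p.1)))) ^ 3) * ‖p.1 - p.2‖⁻¹)) := by
    intro p
    rw [hPv]
    ring
  simp_rw [e]
  rw [integral_sub ((coul_integrable hf).const_mul _) (hi2.const_mul _), integral_const_mul, integral_const_mul]
  have := mul_nonneg hV hR0
  unfold DD
  linarith

lemma perCand_iso (R : E3 ≃ₗᵢ[ℝ] E3) (Ω : Set E3) : perCand (R.symm ⁻¹' Ω) ⊆ perCand Ω := by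
  rintro a ⟨φ, hφ, hcs, hb, rfl⟩
  refine ⟨fun x => R.symm (φ (R x)), ?_, ?_, ?_, ?_⟩
  · exact R.symm.toContinuousLinearEquiv.contDiff.comp (hφ.comp R.toContinuousLinearEquiv.contDiff)
  · have h1 : HasCompactSupport (fun x => φ (R x)) := hcs.comp_homeomorph R.toHomeomorph
    exact h1.comp_left (g := R.symm) (map_zero _)
  · intro x
    rw [LinearIsometryEquiv.norm_map]; exact hb _
  · have hd : ∀ x, divg (fun x => R.symm (φ (R x))) x = divg φ (R x) := by
      intro x
      unfold divg
      have h1 : HasFDerivAt (fun x => R.symm (φ (R x)))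
          (((R.symm.toContinuousLinearEquiv : E3 ≃L[ℝ] E3) : E3 →L[ℝ] E3).comp ((fderiv ℝ φ (R x)).comp ((R.toContinuousLinearEquiv : E3 ≃L[ℝ] E3) : E3 →L[ℝ] E3))) x := by
        have h2 := ((hφ.differentiable (by norm_num)) (R x)).hasFDerivAt
        have h3 := (R.toContinuousLinearEquiv : E3 ≃L[ℝ] E3).hasFDerivAt (x := x)
        have h4 := (R.symm.toContinuousLinearEquiv : E3 ≃L[ℝ] E3).hasFDerivAt (x := φ (R x))
        exact h4.comp x (h2.comp x h3)
      rw [h1.fderiv]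
      have := LinearMap.trace_conj' (R := ℝ) (fderiv ℝ φ (R x) : E3 →ₗ[ℝ] E3) R.symm.toLinearEquiv
      rw [← this]
      rfl
    simp_rw [hd]
    have hmp := R.measurePreserving
    have := hmp.setIntegral_preimage_emb R.toHomeomorph.measurableEmbedding (divg φ) (R.symm ⁻¹' Ω)
    rw [← this]
    congr 2
    ext x; simp

lemma vol_iso (R : E3 ≃ₗᵢ[ℝ] E3) {A : Set E3} (hA : MeasurableSet A) : vol (R.symm ⁻¹' A) = vol A := by
  unfold vol
  rw [R.symm.measurePreserving.measure_preimage hA.nullMeasurableSet]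

lemma lemmaB {Λ Ω T S S' : Set E3} {ρ D : ℝ} (h0 : 0 ≤ ρ) (h1 : ρ ≤ 1)
    (hΛ : MeasurableSet Λ) (hbΛ : IsBounded Λ) (hΩ : MeasurableSet Ω) (hΩΛ : Ω ⊆ Λ) (hfΩ : HasFinPer Ω)
    (hT : IsTetra T) (hfT : HasFinPer T) (hTD : T ⊆ ball 0 D)
    (hS : MeasurableSet S) (hbS : IsBounded S) (hS' : MeasurableSet S')
    (hST : ∀ τ ∈ S, ∀ x ∈ ball (0:E3) D, x + τ ∈ Λ) (hSS : ∀ z ∈ S', ∀ x ∈ ball (0:E3) D, z - x ∈ S) :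
    vol S * FF T ρ + muStar * (vol T * vol (Ω ∩ S')) ≤ vol T * ldEnergy Λ ρ Ω + per T * vol Ω := by
  have hf := chg_adm h0 h1 hΛ hΩ hbΛ hΩΛ
  obtain ⟨R, hR⟩ := exists_rot hT hf
  have hm : Measurable R.symm := R.symm.continuous.measurable
  have hbd : ∀ A : Set E3, IsBounded A → IsBounded (R.symm ⁻¹' A) := fun A hA => by
    rw [← R.image_eq_preimage_symm]
    exact R.lipschitz.isBounded_image hA
  have hball : ∀ x ∈ T, R.symm x ∈ ball (0:E3) D := fun x hx => by
    have := hTD hx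
    rw [mem_ball_zero_iff] at this ⊢
    rwa [LinearIsometryEquiv.norm_map]
  have hA := lemmaA (Λ := R.symm ⁻¹' Λ) (Ω := R.symm ⁻¹' Ω) (T := T) (S := R.symm ⁻¹' S) (S' := R.symm ⁻¹' S')
    h0 h1 (hm hΛ) (hbd _ hbΛ) (hm hΩ) (preimage_mono hΩΛ) (hfΩ.mono (perCand_iso R Ω))
    (tetra_open hT).measurableSet (tetra_bounded hT) hfT (hm hS) (hbd _ hbS)
    (fun τ hτ x hx => by
      rw [mem_preimage, map_add]; exact hST _ hτ _ (hball x hx))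
    (fun z hz x hx => by
      rw [mem_preimage, map_sub]; exact hSS _ hz _ (hball x hx))
  rw [← preimage_inter, vol_iso R hS, vol_iso R (hΩ.inter hS'), vol_iso R hΩ] at hA
  have hper : per (R.symm ⁻¹' Ω) ≤ per Ω := csSup_le_csSup hfΩ ⟨0, zero_mem_perCand _⟩ (perCand_iso R Ω)
  have hmp : MeasurePreserving (Prod.map R R) (volume : Measure (E3 × E3)) volume :=
    R.measurePreserving.prod R.measurePreserving
  have hI : ∫ p : E3 × E3, chg (R.symm ⁻¹' Λ) ρ (R.symm ⁻¹' Ω) p.1 * chg (R.symm ⁻¹' Λ) ρ (R.symm ⁻¹' Ω) p.2 *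
        (vol (slc T T (p.2 - p.1)) * ‖p.1 - p.2‖⁻¹)
      = ∫ p : E3 × E3, chg Λ ρ Ω p.1 * chg Λ ρ Ω p.2 * (vol (slc T T (R (p.2 - p.1))) * ‖p.1 - p.2‖⁻¹) := by
    rw [← hmp.integral_comp (R.toHomeomorph.prodCongr R.toHomeomorph).measurableEmbedding]
    refine integral_congr_ae (Eventually.of_forall fun p => ?_)
    have hc : ∀ x, chg (R.symm ⁻¹' Λ) ρ (R.symm ⁻¹' Ω) (R x) = chg Λ ρ Ω x := by
      intro x
      have hmem : ∀ A : Set E3, (R.symm ⁻¹' A).indicator (fun _ => (1:ℝ)) (R x) = A.indicator (fun _ => (1:ℝ)) x := by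
        intro A
        have h : R x ∈ R.symm ⁻¹' A ↔ x ∈ A := by rw [mem_preimage, R.symm_apply_apply]
        by_cases hx : x ∈ A
        · rw [indicator_of_mem (h.2 hx), indicator_of_mem hx]
        · rw [indicator_of_notMem (fun h' => hx (h.1 h')), indicator_of_notMem hx]
      simp only [chg, hmem]
    simp only [Prod.map_fst, Prod.map_snd, hc, ← map_sub, LinearIsometryEquiv.norm_map]
  rw [hI] at hA
  rw [ldEnergy_eq hf]
  have := mul_le_mul_of_nonneg_left hper (vol_nonneg T)
  nlinarith

lemma cube_eq (a : ℝ) : cubeL a = (WithLp.ofLp : E3 → (Fin 3 → ℝ)) ⁻¹' (Set.univ.pi fun _ => Ioo (-(a/2)) (a/2)) := by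
  ext x
  simp only [cubeL, mem_ofPred_eq, mem_preimage, mem_univ_pi, mem_Ioo, abs_lt]

lemma cube_meas (a : ℝ) : MeasurableSet (cubeL a) := by
  rw [cube_eq]
  exact (PiLp.volume_preserving_ofLp (Fin 3)).measurable (MeasurableSet.univ_pi fun _ => measurableSet_Ioo)

lemma cube_volume (a : ℝ) : volume (cubeL a) = ENNReal.ofReal a ^ 3 := by
  rw [cube_eq, (PiLp.volume_preserving_ofLp (Fin 3)).measure_preimage
    (MeasurableSet.univ_pi fun _ => measurableSet_Ioo).nullMeasurableSet, Real.volume_pi_Ioo]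
  simp

lemma cube_vol {a : ℝ} (ha : 0 ≤ a) : vol (cubeL a) = a ^ 3 := by
  rw [vol, cube_volume, ENNReal.toReal_pow, ENNReal.toReal_ofReal ha]

lemma coord_le_norm (x : E3) (i : Fin 3) : |x i| ≤ ‖x‖ := by
  have := PiLp.norm_apply_le x i
  rwa [Real.norm_eq_abs] at this

lemma cube_bdd (a : ℝ) : IsBounded (cubeL a) := by
  refine (Metric.isBounded_iff_subset_closedBall 0).2 ⟨Real.sqrt (3 * (a / 2) ^ 2), fun x hx => ?_⟩
  rw [mem_closedBall_zero_iff, EuclideanSpace.norm_eq]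
  refine Real.sqrt_le_sqrt ?_
  have h : ∀ i, ‖x i‖ ^ 2 ≤ (a / 2) ^ 2 := fun i => by
    have := hx i
    rw [Real.norm_eq_abs]
    exact pow_le_pow_left₀ (abs_nonneg _) this.le 2
  rw [Fin.sum_univ_three]
  linarith [h 0, h 1, h 2]

lemma cube_convex (a : ℝ) : Convex ℝ (cubeL a) := by
  rw [cube_eq]
  exact (convex_pi fun i _ => convex_Ioo _ _).linear_preimage (WithLp.linearEquiv 2 ℝ (Fin 3 → ℝ)).toLinearMap

lemma cube_ball (a : ℝ) : ball (0:E3) (a/2) ⊆ cubeL a := fun x hx i => by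
  rw [mem_ball_zero_iff] at hx
  exact (coord_le_norm x i).trans_lt hx

lemma cube_finPer {a : ℝ} (ha : 0 < a) : HasFinPer (cubeL a) :=
  (convex_finPer (cube_meas a) (cube_bdd a) (cube_convex a) (by positivity) (cube_ball a)).1

lemma empty_finPer : HasFinPer ∅ := by
  refine ⟨0, ?_⟩
  rintro a ⟨φ, _, _, _, rfl⟩
  simp

lemma cube_add {a D : ℝ} {τ x : E3} (hτ : τ ∈ cubeL (a - 2 * D)) (hx : x ∈ ball (0:E3) D) : x + τ ∈ cubeL a := by
  intro i
  have h1 := hτ i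
  rw [mem_ball_zero_iff] at hx
  have h2 := (coord_le_norm x i).trans_lt hx
  have h3 : |x i + τ i| ≤ |x i| + |τ i| := abs_add_le _ _
  show |x i + τ i| < a / 2
  linarith

lemma cube_mono {a b : ℝ} (h : a ≤ b) : cubeL a ⊆ cubeL b := fun x hx i => (hx i).trans_le (by linarith)

lemma EE_nonempty {ρ L : ℝ} (h0 : 0 ≤ ρ) (h1 : ρ ≤ 1) (hL : 0 < L) :
    {t : ℝ | ∃ Ω : Set E3, MeasurableSet Ω ∧ Ω ⊆ cubeL L ∧ HasFinPer Ω ∧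
      vol Ω = ρ * vol (cubeL L) ∧ t = ldEnergy (cubeL L) ρ Ω}.Nonempty := by
  rcases h0.eq_or_lt with rfl | h
  · exact ⟨_, ∅, MeasurableSet.empty, empty_subset _, empty_finPer, by simp [vol], rfl⟩
  · have hs : 0 < ρ ^ ((1:ℝ)/3) := Real.rpow_pos_of_pos h _
    have hs1 : ρ ^ ((1:ℝ)/3) ≤ 1 := Real.rpow_le_one h0 h1 (by norm_num)
    have hs3 : (ρ ^ ((1:ℝ)/3)) ^ 3 = ρ := by
      rw [← Real.rpow_natCast, ← Real.rpow_mul h0]; norm_num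
    refine ⟨_, cubeL (ρ ^ ((1:ℝ)/3) * L), cube_meas _, cube_mono (mul_le_of_le_one_left hL.le hs1),
      cube_finPer (by positivity), ?_, rfl⟩
    rw [cube_vol (by positivity), cube_vol hL.le, mul_pow, hs3]

lemma vol_scale {Δ : Set E3} (hΔ : volume Δ = 1) {l : ℝ} (hl : 0 < l) : vol (l • Δ) = l ^ 3 := by
  unfold vol
  rw [Measure.addHaar_smul, hΔ, finrank_euclideanSpace_fin, mul_one, ENNReal.toReal_ofReal (abs_nonneg _),
    abs_of_pos (by positivity)]

/-- The main estimate for a single competitor when the tetrahedron is small compared to the cube. -/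
lemma main_small {Δ : Set E3} (hΔ : IsTetra Δ) (hv : volume Δ = 1) {d r0 : ℝ} {c : E3} (hd : Δ ⊆ ball 0 d)
    (hd0 : 0 < d) (hr0 : 0 < r0) (hc : ball c r0 ⊆ Δ) {ρ l L : ℝ} (h0 : 0 ≤ ρ) (h1 : ρ ≤ 1) (hl : 0 < l) (hL : 0 < L)
    (hlL : 4 * d * l < L) {Ω : Set E3} (hΩ : MeasurableSet Ω) (hΩΛ : Ω ⊆ cubeL L) (hfΩ : HasFinPer Ω)
    (hvol : vol Ω = ρ * L ^ 3) :
    L ^ 3 * FF (l • Δ) ρ - 6 * d * l * L ^ 2 * |FF (l • Δ) ρ| + muStar * (l ^ 3 * (ρ * L ^ 3 - 12 * d * l * L ^ 2))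
      ≤ l ^ 3 * ldEnergy (cubeL L) ρ Ω + 36 * l ^ 2 / r0 * (ρ * L ^ 3) := by
  have hT := tetra_smul hΔ hl
  have hbT : ball (l • c) (l * r0) ⊆ l • Δ := by
    have := smul_ball hl.ne' c r0
    rw [Real.norm_of_nonneg hl.le] at this
    rw [← this]
    exact smul_set_mono hc
  have hTD : l • Δ ⊆ ball 0 (l * d) := by
    have := smul_ball hl.ne' (0:E3) d
    rw [Real.norm_of_nonneg hl.le, smul_zero] at this
    rw [← this]
    exact smul_set_mono hd
  obtain ⟨hfT, hpT⟩ := convex_finPer (tetra_open hT).measurableSet (tetra_bounded hT) (tetra_convex hT)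
    (mul_pos hl hr0) hbT
  have hVT := vol_scale hv hl
  have hdl : 0 < d * l := mul_pos hd0 hl
  have hB := lemmaB (S := cubeL (L - 2 * (l * d))) (S' := cubeL (L - 2 * (l * d) - 2 * (l * d))) h0 h1
    (cube_meas L) (cube_bdd L) hΩ hΩΛ hfΩ hT hfT hTD (cube_meas _) (cube_bdd _) (cube_meas _)
    (fun τ hτ x hx => cube_add hτ hx)
    (fun z hz x hx => by
      have : -x ∈ ball (0:E3) (l * d) := by simpa using hx
      have := cube_add hz this
      rwa [neg_add_eq_sub] at this)
  rw [hVT] at hB hpT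
  set F := FF (l • Δ) ρ
  have hVS := cube_vol (a := L - 2 * (l * d)) (by linarith)
  have hVS' := cube_vol (a := L - 2 * (l * d) - 2 * (l * d)) (by linarith)
  set x := d * l with hx
  have e1 : L - 2 * (l * d) = L - 2 * x := by rw [hx]; ring
  have e2 : L - 2 * (l * d) - 2 * (l * d) = L - 4 * x := by rw [hx]; ring
  rw [e1] at hVS
  rw [e2] at hVS' hB
  rw [e1] at hB
  have hxL : 4 * x < L := by rw [hx]; linarith
  have hΩS : ρ * L ^ 3 - 12 * x * L ^ 2 ≤ vol (Ω ∩ cubeL (L - 4 * x)) := by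
    have hsub : Ω ⊆ (Ω ∩ cubeL (L - 4 * x)) ∪ (cubeL L \ cubeL (L - 4 * x)) := by
      intro y hy
      by_cases h : y ∈ cubeL (L - 4 * x)
      · exact Or.inl ⟨hy, h⟩
      · exact Or.inr ⟨hΩΛ hy, h⟩
    have hfin : ∀ A : Set E3, A ⊆ cubeL L → volume A ≠ ⊤ := fun A hA =>
      ((cube_bdd L).subset hA).measure_lt_top.ne
    have h2 : volume.real Ω ≤ volume.real (Ω ∩ cubeL (L - 4 * x)) + volume.real (cubeL L \ cubeL (L - 4 * x)) :=
      (measureReal_mono hsub (hfin _ (union_subset (inter_subset_left.trans hΩΛ) sdiff_subset))).trans (measureReal_union_le _ _)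
    have h3 : volume.real (cubeL L \ cubeL (L - 4 * x)) = vol (cubeL L) - vol (cubeL (L - 4 * x)) :=
      measureReal_sdiff (cube_mono (by linarith)) (cube_meas _) (hfin _ (cube_mono (by linarith)))
    have h4 : volume.real Ω = vol Ω := rfl
    have h5 : volume.real (Ω ∩ cubeL (L - 4 * x)) = vol (Ω ∩ cubeL (L - 4 * x)) := rfl
    rw [h3, h4, h5, hvol, hVS', cube_vol hL.le] at h2
    have : (L - 4 * x) ^ 3 ≥ L ^ 3 - 12 * x * L ^ 2 := by
      nlinarith [mul_pos hdl hdl, mul_nonneg (mul_pos hdl hdl).le (show 0 ≤ 48 * L - 64 * x by linarith)]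
    linarith
  have hSF : L ^ 3 * F - 6 * x * L ^ 2 * |F| ≤ vol (cubeL (L - 2 * x)) * F := by
    rw [hVS]
    have ha : L ^ 3 - (L - 2 * x) ^ 3 ≤ 6 * x * L ^ 2 := by
      nlinarith [mul_nonneg (mul_pos hdl hdl).le (show 0 ≤ 12 * L - 8 * x by linarith)]
    have hb : 0 ≤ L ^ 3 - (L - 2 * x) ^ 3 := by
      have := pow_le_pow_left₀ (show 0 ≤ L - 2 * x by linarith) (show L - 2 * x ≤ L by linarith) 3
      linarith
    have hc1 : (L ^ 3 - (L - 2 * x) ^ 3) * F ≤ (L ^ 3 - (L - 2 * x) ^ 3) * |F| :=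
      mul_le_mul_of_nonneg_left (le_abs_self F) hb
    have hc2 := mul_le_mul_of_nonneg_right ha (abs_nonneg F)
    linarith
  have hP : per (l • Δ) * vol Ω ≤ 36 * l ^ 2 / r0 * (ρ * L ^ 3) := by
    rw [hvol]
    refine mul_le_mul_of_nonneg_right (hpT.trans (le_of_eq ?_)) (by positivity)
    field_simp
  have hM := mul_le_mul_of_nonneg_left (mul_le_mul_of_nonneg_left hΩS (pow_nonneg hl.le 3)) muStar_nonneg
  have e3 : 6 * d * l * L ^ 2 * |F| = 6 * x * L ^ 2 * |F| := by rw [hx]; ring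
  have e4 : 12 * d * l * L ^ 2 = 12 * x * L ^ 2 := by rw [hx]; ring
  rw [e3, e4]
  linarith

/-- **Finite volume Graf–Schenker bound**: for a tetrahedron `Δ` of unit volume there is a
constant `C` depending only on `Δ` such that for every `ρ ∈ [0,1]` and all `ℓ, L > 0`,
`E_{Λ_L}(ρ)/L³ − μ*ρ ≥ F_{ℓΔ}(ρ)/ℓ³ − C(μ* + |F_{ℓΔ}(ρ)|/ℓ³)(ℓ/L) − Cρ/ℓ`. -/
theorem graf_schenker_finite_volume (Δ : Set E3) (hΔ : IsTetra Δ) (hΔvol : volume Δ = 1) :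
    ∃ C : ℝ, 0 < C ∧ ∀ ρ : ℝ, 0 ≤ ρ → ρ ≤ 1 → ∀ ℓ L : ℝ, 0 < ℓ → 0 < L →
      FF (ℓ • Δ) ρ / ℓ^3 - C * (muStar + |FF (ℓ • Δ) ρ| / ℓ^3) * (ℓ / L) - C * ρ / ℓ
        ≤ EE (cubeL L) ρ / L^3 - muStar * ρ := by
  obtain ⟨d, hd0, hd⟩ : ∃ d : ℝ, 0 < d ∧ Δ ⊆ ball 0 d := by
    obtain ⟨d, hd⟩ := (tetra_bounded hΔ).subset_ball (0:E3)
    exact ⟨max d 1, by positivity, hd.trans (ball_subset_ball (le_max_left _ _))⟩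
  obtain ⟨c, hcΔ⟩ : Δ.Nonempty := nonempty_of_measure_ne_zero (μ := volume) (by rw [hΔvol]; exact one_ne_zero)
  obtain ⟨r0, hr0, hc⟩ := Metric.isOpen_iff.1 (tetra_open hΔ) c hcΔ
  have hq : 0 < 36 / r0 := by positivity
  refine ⟨12 * d + 36 / r0, by positivity, fun ρ h0 h1 l L hl hL => ?_⟩
  set F := FF (l • Δ) ρ with hF
  have hμ := muStar_nonneg
  have hA : 0 ≤ |F| / l ^ 3 := by positivity
  have hx : 0 < l / L := by positivity
  have hy : 0 ≤ ρ / l := by positivity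
  rcases lt_or_ge (4 * d * l) L with hlL | hlL
  · have hE : (L ^ 3 * F - 6 * d * l * L ^ 2 * |F| + muStar * (l ^ 3 * (ρ * L ^ 3 - 12 * d * l * L ^ 2))
        - 36 * l ^ 2 / r0 * (ρ * L ^ 3)) / l ^ 3 ≤ EE (cubeL L) ρ := by
      refine le_csInf (EE_nonempty h0 h1 hL) ?_
      rintro t ⟨Ω, hΩ, hΩΛ, hfΩ, hvol, rfl⟩
      rw [cube_vol hL.le] at hvol
      have := main_small hΔ hΔvol hd hd0 hr0 hc h0 h1 hl hL hlL hΩ hΩΛ hfΩ hvol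
      rw [div_le_iff₀ (by positivity)]
      linarith
    have hE' := div_le_div_of_nonneg_right hE (show 0 ≤ L ^ 3 by positivity)
    have e : (L ^ 3 * F - 6 * d * l * L ^ 2 * |F| + muStar * (l ^ 3 * (ρ * L ^ 3 - 12 * d * l * L ^ 2))
        - 36 * l ^ 2 / r0 * (ρ * L ^ 3)) / l ^ 3 / L ^ 3
        = F / l ^ 3 - 6 * d * (|F| / l ^ 3 * (l / L)) + muStar * ρ - 12 * d * (muStar * (l / L)) - 36 / r0 * (ρ / l) := by
      field_simp
      ring
    rw [e] at hE'
    have p1 : 0 ≤ |F| / l ^ 3 * (l / L) := by positivity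
    have p2 : 0 ≤ muStar * (l / L) := by positivity
    have q1 := mul_nonneg hd0.le p1
    have q2 := mul_nonneg hq.le p1
    have q3 := mul_nonneg hq.le p2
    have q4 := mul_nonneg hd0.le hy
    have e1 : (12 * d + 36 / r0) * (muStar + |F| / l ^ 3) * (l / L) = 12 * (d * (muStar * (l / L)))
      + 12 * (d * (|F| / l ^ 3 * (l / L))) + 36 / r0 * (muStar * (l / L)) + 36 / r0 * (|F| / l ^ 3 * (l / L)) := by ring
    have e2 : (12 * d + 36 / r0) * ρ / l = 12 * (d * (ρ / l)) + 36 / r0 * (ρ / l) := by ring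
    rw [e1, e2]
    linarith
  · have hE : 0 ≤ EE (cubeL L) ρ := by
      refine Real.sInf_nonneg ?_
      rintro t ⟨Ω, hΩ, hΩΛ, hfΩ, hvol, rfl⟩
      have hf := chg_adm h0 h1 (cube_meas L) hΩ (cube_bdd L) hΩΛ
      rw [ldEnergy_eq hf]
      have := DD_nonneg hf
      have := per_nonneg Ω
      positivity
    have hE' : 0 ≤ EE (cubeL L) ρ / L ^ 3 := by positivity
    have hC : 1 ≤ (12 * d + 36 / r0) * (l / L) := by
      have h4 : 1 ≤ 4 * d * l / L := by rw [le_div_iff₀ hL]; linarith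
      have h5 : (12 * d + 36 / r0) * (l / L) = 3 * (4 * d * l / L) + 36 / r0 * (l / L) := by ring
      have := mul_pos hq hx
      linarith
    have h6 := mul_le_mul_of_nonneg_right hC (add_nonneg hμ hA)
    have h7 : F / l ^ 3 ≤ |F| / l ^ 3 := div_le_div_of_nonneg_right (le_abs_self F) (by positivity)
    have h8 : muStar * ρ ≤ muStar := mul_le_of_le_one_right hμ h1
    have h9 : 0 ≤ (12 * d + 36 / r0) * ρ / l := by positivity
    have e1 : (12 * d + 36 / r0) * (muStar + |F| / l ^ 3) * (l / L) = (12 * d + 36 / r0) * (l / L) * (muStar + |F| / l ^ 3) := by ring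
    rw [e1]
    linarith

end
end

section
/- Let r* > 0, let Ω* ⊂ B(0,r*) be a measurable set with |Ω*| = m, let z ∈ ℝ³, and let Λ ⊂ ℝ³ be a bounded measurable set. Then the rotation-averaged interaction with the background satisfies ⨍_{SO(3)} ∬_{(z+RΩ*)×Λ} |x − y|⁻¹ dx dy dR ≥ m ∫_Λ |z − y|⁻¹ dy − 2π r*² m, where ⨍ denotes the average with respect to the Haar probability measure on SO(3). -/
open MeasureTheory Metric Set Filter Bornology
open scoped Topology ENNReal NNReal Pointwise

noncomputable section

/-- The lower bound for the averaged Coulomb potential. -/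
def gB (t a : ℝ) : ℝ := (1 / √(a^2 + t^2)) * (1 + a^2 * t^2 / (2 * (a^2 + t^2)^2))

/-- The loss. -/
def lossB (t a : ℝ) : ℝ := 1 / a - gB t a

lemma rsqrt_tangent (x : ℝ) (h1 : -1 ≤ x) (h2 : x < 1) :
    1 + x/2 + 3/8*x^2 + 5/16*x^3 ≤ 1 / √(1 - x) := by
  have h : 0 < 1 - x := by linarith
  have hs : 0 < √(1-x) := Real.sqrt_pos.mpr h
  rw [le_div_iff₀ hs]
  have hsq : √(1-x)^2 = 1 - x := Real.sq_sqrt h.le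
  refine le_of_abs_le ((sq_le_one_iff_abs_le_one _).1 ?_)
  rw [mul_pow, hsq]
  have hq : 0 ≤ 35/64 + 14/64*x + 35/256*x^2 + 25/256*x^3 := by
    nlinarith [sq_nonneg x, mul_nonneg (sq_nonneg x) (by linarith : 0 ≤ 1 + x)]
  have : (1 + x/2 + 3/8*x^2 + 5/16*x^3)^2 * (1-x) = 1 - x^4 * (35/64 + 14/64*x + 35/256*x^2 + 25/256*x^3) := by ring
  rw [this]
  have : 0 ≤ x^4 := by positivity
  nlinarith [mul_nonneg this hq]

lemma rsqrt_scaled (N s : ℝ) (hN : 0 < N) (h1 : -N ≤ 2*s) (h2 : 2*s < N) :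
    (1/√N) * (1 + s/N + 3/2*s^2/N^2 + 5/2*s^3/N^3) ≤ 1 / √(N - 2*s) := by
  have h := rsqrt_tangent (2*s/N) (by rw [le_div_iff₀ hN]; linarith) (by rw [div_lt_iff₀ hN]; linarith)
  have e : N - 2*s = N * (1 - 2*s/N) := by field_simp
  rw [e, Real.sqrt_mul hN.le, one_div_mul_eq_div, one_div, mul_inv, ← one_div, ← one_div, one_div_mul_eq_div]
  have hs : 0 < √N := Real.sqrt_pos.mpr hN
  gcongr
  calc _ = 1 + (2*s/N)/2 + 3/8*(2*s/N)^2 + 5/16*(2*s/N)^3 := by field_simp; ring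
    _ ≤ _ := h

lemma lossB_nonneg (t a : ℝ) (ha : 0 < a) : 0 ≤ lossB t a := by
  unfold lossB gB
  have hN : 0 < a^2 + t^2 := by positivity
  set c := √(a^2+t^2) with hc
  have hcp : 0 < c := Real.sqrt_pos.mpr hN
  have hc2 : c^2 = a^2 + t^2 := Real.sq_sqrt hN.le
  have hac : a ≤ c := by apply Real.le_sqrt_of_sq_le; nlinarith [sq_nonneg t]
  rw [← hc2, sub_nonneg]
  have ht : t^2 = c^2 - a^2 := by linarith
  rw [ht, one_div_mul_eq_div, div_le_div_iff₀ hcp ha]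
  have h1 : a^2 * (c^2-a^2) / (2*(c^2)^2) ≤ (c - a) / c := by
    rw [div_le_div_iff₀ (by positivity) hcp]
    have : a^2 * (c + a) ≤ 2 * c^3 := by nlinarith [mul_le_mul hac hac ha.le hcp.le, mul_nonneg ha.le (sub_nonneg.2 hac)]
    nlinarith [mul_le_mul_of_nonneg_left this (mul_nonneg (sub_nonneg.2 hac) hcp.le)]
  have h2 : a * ((c - a)/c) ≤ c - a := by
    rw [mul_div_assoc', div_le_iff₀ hcp]; nlinarith [sub_nonneg.2 hac]
  nlinarith [mul_le_mul_of_nonneg_left h1 ha.le]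

lemma gB_nonneg (t a : ℝ) : 0 ≤ gB t a := by unfold gB; positivity

/-- antiderivative -/
def aB (t a : ℝ) : ℝ :=
  a^2/2 - a * √(a^2+t^2)/2 + t^2*a/(2*√(a^2+t^2)) + t^2*a^3/(6*√(a^2+t^2)^3)

lemma aB_deriv (t a : ℝ) (ht : 0 < t) : HasDerivAt (aB t) (a - a^2 * gB t a) a := by
  have hN : 0 < a^2 + t^2 := by positivity
  have hcp : 0 < √(a^2+t^2) := Real.sqrt_pos.mpr hN
  have hd : HasDerivAt (fun a : ℝ => √(a^2+t^2)) (a / √(a^2+t^2)) a := by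
    have := (((hasDerivAt_id a).pow 2).add_const (t^2)).sqrt (by simpa using hN.ne')
    refine this.congr_deriv ?_
    simp only [id, Pi.pow_apply]
    norm_num
    field_simp
  have hid := hasDerivAt_id' a
  have H := ((((hid.pow 2).div_const 2).sub ((hid.mul hd).div_const 2)).add
    ((hid.const_mul (t^2)).div (hd.const_mul 2) (by positivity))).add
    (((hid.pow 3).const_mul (t^2)).div ((hd.pow 3).const_mul 6) (by simp; positivity))
  refine H.congr_deriv ?_
  unfold gB
  have hc2 : √(a^2+t^2)^2 = a^2 + t^2 := Real.sq_sqrt hN.le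
  simp only [Pi.pow_apply]
  rw [← hc2]
  simp only [Real.sqrt_sq hcp.le]
  have ht : t^2 = √(a^2+t^2)^2 - a^2 := by linarith
  generalize √(a^2+t^2) = c at *
  rw [ht]
  field_simp
  ring

lemma aB_le (t a : ℝ) (ht : 0 < t) (ha : 0 ≤ a) : aB t a ≤ t^2/2 := by
  unfold aB
  have hN : 0 < a^2 + t^2 := by positivity
  set c := √(a^2+t^2) with hc
  have hcp : 0 < c := Real.sqrt_pos.mpr hN
  have hc2 : c^2 = a^2 + t^2 := Real.sq_sqrt hN.le
  have hac : a ≤ c := by apply Real.le_sqrt_of_sq_le; nlinarith [sq_nonneg t]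
  obtain ⟨x, hx⟩ : ∃ x, x = a / c := ⟨_, rfl⟩
  have hx0 : 0 ≤ x := by rw [hx]; positivity
  have hx1 : x ≤ 1 := by rw [hx]; exact (div_le_one hcp).2 hac
  have hax : a = x * c := by rw [hx]; field_simp
  have ht2 : t^2 = c^2 * (1 - x^2) := by rw [mul_sub, ← mul_pow, mul_comm c x, ← hax] ; linarith
  rw [ht2, hax]
  have : (x * c) ^ 2 / 2 - x * c * c / 2 + c ^ 2 * (1 - x ^ 2) * (x * c) / (2 * c) + c ^ 2 * (1 - x ^ 2) * (x * c) ^ 3 / (6 * c ^ 3)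
     = c^2 * (1-x) * (-x/2 + (1+x)*x/2 + (1+x)*x^3/6) := by
    field_simp; ring
  rw [this]
  have : c ^ 2 * (1 - x ^ 2) / 2 = c^2*(1-x) * ((1+x)/2) := by ring
  rw [this]
  apply mul_le_mul_of_nonneg_left
  · have h2 : x^2 ≤ 1 := pow_le_one₀ hx0 hx1
    have h3 : x^3 ≤ 1 := pow_le_one₀ hx0 hx1
    have h4 : x^4 ≤ 1 := pow_le_one₀ hx0 hx1
    nlinarith [pow_le_pow_of_le_one hx0 hx1 (show 1 ≤ 3 by norm_num), pow_le_pow_of_le_one hx0 hx1 (show 1 ≤ 4 by norm_num)]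
  · exact mul_nonneg (by positivity) (by linarith)

lemma gB_cont (t : ℝ) (ht : 0 < t) : Continuous (gB t) := by
  unfold gB
  have h : ∀ a : ℝ, √(a^2+t^2) ≠ 0 := fun a => (Real.sqrt_pos.mpr (by positivity)).ne'
  have h2 : ∀ a : ℝ, 2 * (a^2+t^2)^2 ≠ 0 := fun a => by positivity
  fun_prop (disch := assumption)

lemma coulomb_ball (M : ℝ) : IntegrableOn (fun w : E3 => 1 / ‖w‖) (ball 0 M) := by
  rw [integrableOn_fun_norm_addHaar volume (f := fun a => 1 / a)]
  have : IntegrableOn (fun y : ℝ => y) (Ioo 0 M) :=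
    (continuous_id.integrableOn_Icc).mono_set Ioo_subset_Icc_self
  refine this.congr_fun (fun y hy => ?_) measurableSet_Ioo
  have := hy.1
  simp
  field_simp

lemma loss_ball (t : ℝ) (ht : 0 < t) (M : ℝ) (hM : 0 < M) :
    ∫ w in ball (0:E3) M, lossB t ‖w‖ ≤ 2 * Real.pi * t^2 := by
  have e1 : ∫ w in ball (0:E3) M, lossB t ‖w‖ = ∫ w : E3, (Iio M).indicator (lossB t) ‖w‖ := by
    rw [← integral_indicator measurableSet_ball]
    congr 1 with w
    simp [indicator]
  have e2 : ∫ y in Ioi (0:ℝ), y^2 * (Iio M).indicator (lossB t) y = ∫ y in (0:ℝ)..M, (y - y^2 * gB t y) := by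
    rw [intervalIntegral.integral_of_le hM.le, integral_Ioc_eq_integral_Ioo,
      ← integral_indicator measurableSet_Ioi, ← integral_indicator measurableSet_Ioo]
    congr 1 with y
    by_cases h1 : 0 < y <;> by_cases h2 : y < M <;> simp [indicator, h1, h2, lossB]
    field_simp
  have e3 : ∫ y in (0:ℝ)..M, (y - y^2 * gB t y) = aB t M - aB t 0 := by
    apply intervalIntegral.integral_eq_sub_of_hasDerivAt (fun x _ => aB_deriv t x ht)
    apply Continuous.intervalIntegrable
    have := gB_cont t ht
    fun_prop
  have e4 : aB t 0 = 0 := by simp [aB]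
  rw [e1, integral_fun_norm_addHaar volume]
  simp only [finrank_euclideanSpace, Fintype.card_fin, smul_eq_mul, nsmul_eq_mul]
  norm_num only
  rw [e2, e3, e4, Measure.real, EuclideanSpace.volume_ball_fin_three]
  have := aB_le t M ht hM.le
  simp
  rw [ENNReal.toReal_ofReal (by positivity)]
  nlinarith [Real.pi_pos]

lemma rot_apply (R : Matrix (Fin 3) (Fin 3) ℝ) (x : E3) (i : Fin 3) :
    rot R x i = R i 0 * x 0 + R i 1 * x 1 + R i 2 * x 2 := by
  simp [rot, Matrix.mulVec, dotProduct, Fin.sum_univ_three]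

lemma rot_mul (S R : Matrix (Fin 3) (Fin 3) ℝ) (x : E3) : rot (S * R) x = rot S (rot R x) := by
  ext i
  simp only [rot_apply, Matrix.mul_apply, Fin.sum_univ_three]
  ring

lemma norm_sq3 (x : E3) : ‖x‖^2 = x 0^2 + x 1^2 + x 2^2 := by
  rw [EuclideanSpace.norm_sq_eq]; simp [Fin.sum_univ_three]

lemma rot_norm {R : Matrix (Fin 3) (Fin 3) ℝ} (hR : R ∈ SO3) (x : E3) : ‖rot R x‖ = ‖x‖ := by
  have h1 : R.transpose * R = 1 := mul_eq_one_comm.mp hR.1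
  have e : ∀ i j, (R.transpose * R) i j = (1 : Matrix (Fin 3) (Fin 3) ℝ) i j := fun i j => by rw [h1]
  simp only [Matrix.mul_apply, Matrix.transpose_apply, Fin.sum_univ_three] at e
  have e00 := e 0 0
  have e01 := e 0 1
  have e02 := e 0 2
  have e11 := e 1 1
  have e12 := e 1 2
  have e22 := e 2 2
  simp at e00 e01 e02 e11 e12 e22
  rw [← sq_eq_sq₀ (norm_nonneg _) (norm_nonneg _), norm_sq3, norm_sq3]
  simp only [rot_apply]
  linear_combination (x 0)^2 * e00 + (x 1)^2 * e11 + (x 2)^2*e22 + 2*x 0*x 1*e01 + 2*x 0*x 2*e02 + 2*x 1*x 2*e12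

lemma SO3_mul {S R : Matrix (Fin 3) (Fin 3) ℝ} (hS : S ∈ SO3) (hR : R ∈ SO3) : S * R ∈ SO3 := by
  refine ⟨?_, by rw [Matrix.det_mul, hS.2, hR.2, one_mul]⟩
  rw [Matrix.transpose_mul, Matrix.mul_assoc, ← Matrix.mul_assoc R, hR.1, Matrix.one_mul, hS.1]

lemma SO3_pow {S : Matrix (Fin 3) (Fin 3) ℝ} (hS : S ∈ SO3) (n : ℕ) : S^n ∈ SO3 := by
  induction n with
  | zero => simp [SO3]
  | succ n ih => rw [pow_succ]; exact SO3_mul ih hS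

def mC : Matrix (Fin 3) (Fin 3) ℝ := !![0,1,0;0,0,1;1,0,0]
def mA : Matrix (Fin 3) (Fin 3) ℝ := !![1,0,0;0,-1,0;0,0,-1]
def mB : Matrix (Fin 3) (Fin 3) ℝ := !![-1,0,0;0,1,0;0,0,-1]
def mQ : Matrix (Fin 3) (Fin 3) ℝ := !![0,1,0;1,0,0;0,0,-1]

lemma mC_mem : mC ∈ SO3 := by
  constructor
  · ext i j; fin_cases i <;> fin_cases j <;> simp [mC, Matrix.mul_apply, Fin.sum_univ_three]
  · simp [mC, Matrix.det_fin_three]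
lemma mA_mem : mA ∈ SO3 := by
  constructor
  · ext i j; fin_cases i <;> fin_cases j <;> simp [mA, Matrix.mul_apply, Fin.sum_univ_three]
  · simp [mA, Matrix.det_fin_three]
lemma mB_mem : mB ∈ SO3 := by
  constructor
  · ext i j; fin_cases i <;> fin_cases j <;> simp [mB, Matrix.mul_apply, Fin.sum_univ_three]
  · simp [mB, Matrix.det_fin_three]
lemma mQ_mem : mQ ∈ SO3 := by
  constructor
  · ext i j; fin_cases i <;> fin_cases j <;> simp [mQ, Matrix.mul_apply, Fin.sum_univ_three]
  · simp [mQ, Matrix.det_fin_three]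

/-- The 24 rotations of the cube. -/
def octa (p : Fin 3 × Fin 2 × Fin 2 × Fin 2) : Matrix (Fin 3) (Fin 3) ℝ :=
  mQ ^ (p.2.2.2 : ℕ) * (mB ^ (p.2.2.1 : ℕ) * (mA ^ (p.2.1 : ℕ) * mC ^ (p.1 : ℕ)))

lemma octa_mem (p) : octa p ∈ SO3 :=
  SO3_mul (SO3_pow mQ_mem _) (SO3_mul (SO3_pow mB_mem _) (SO3_mul (SO3_pow mA_mem _) (SO3_pow mC_mem _)))

/-- The inner product in coordinates. -/
def ip (w v : E3) : ℝ := w 0 * v 0 + w 1 * v 1 + w 2 * v 2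

lemma rot_one (v : E3) : rot 1 v = v := by
  ext i; fin_cases i <;> simp [rot_apply]

lemma octa_moments (w v : E3) (α β γ δ : ℝ) :
    ∑ p, (α + β * ip w (rot (octa p) v) + γ * ip w (rot (octa p) v)^2 + δ * ip w (rot (octa p) v)^3)
      = 24 * (α + γ * (‖w‖^2 * ‖v‖^2 / 3)) := by
  rw [norm_sq3, norm_sq3]
  simp only [Fintype.sum_prod_type, Fin.sum_univ_three, Fin.sum_univ_two, octa, rot_mul]
  simp only [Fin.val_zero, Fin.val_one, Fin.val_two, pow_zero, pow_one, pow_two mC, rot_mul, rot_one, Fin.isValue]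
  have c : ∀ u : E3, rot mC u 0 = u 1 ∧ rot mC u 1 = u 2 ∧ rot mC u 2 = u 0 := fun u => by
    simp [rot_apply, mC]
  have a : ∀ u : E3, rot mA u 0 = u 0 ∧ rot mA u 1 = -u 1 ∧ rot mA u 2 = -u 2 := fun u => by
    simp [rot_apply, mA]
  have b : ∀ u : E3, rot mB u 0 = -u 0 ∧ rot mB u 1 = u 1 ∧ rot mB u 2 = -u 2 := fun u => by
    simp [rot_apply, mB]
  have q : ∀ u : E3, rot mQ u 0 = u 1 ∧ rot mQ u 1 = u 0 ∧ rot mQ u 2 = -u 2 := fun u => by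
    simp [rot_apply, mQ]
  simp only [ip, c, a, b, q]
  ring

lemma pointwise_avg (w v : E3) (hv : v ≠ 0) (hne : ∀ p, rot (octa p) v - w ≠ 0) :
    24 * gB ‖v‖ ‖w‖ ≤ ∑ p, 1 / ‖rot (octa p) v - w‖ := by
  have hvp : 0 < ‖v‖ := norm_pos_iff.2 hv
  have hN : 0 < ‖w‖^2 + ‖v‖^2 := by positivity
  obtain ⟨N, hNe⟩ : ∃ N, N = ‖w‖^2 + ‖v‖^2 := ⟨_, rfl⟩
  have key : ∀ p, (1/√N) + (1/√N)/N * ip w (rot (octa p) v) + (1/√N)*(3/2)/N^2 * ip w (rot (octa p) v)^2 + (1/√N)*(5/2)/N^3 * ip w (rot (octa p) v)^3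
      ≤ 1 / ‖rot (octa p) v - w‖ := by
    intro p
    have hu : ‖rot (octa p) v‖ = ‖v‖ := rot_norm (octa_mem p) v
    have hpos : 0 < ‖rot (octa p) v - w‖ := norm_pos_iff.2 (hne p)
    generalize rot (octa p) v = u at *
    have e : ‖u - w‖^2 = N - 2 * ip w u := by
      rw [hNe, ← hu]
      simp only [norm_sq3, ip, PiLp.sub_apply]; ring
    have e' : 0 ≤ N + 2 * ip w u := by
      have : N + 2 * ip w u = ‖u + w‖^2 := by
        rw [hNe, ← hu]
        simp only [norm_sq3, ip, PiLp.add_apply]; ring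
      rw [this]; positivity
    have h := rsqrt_scaled N (ip w u) (hNe ▸ hN) (by linarith) (by nlinarith [sq_pos_of_pos hpos])
    rw [← e, Real.sqrt_sq hpos.le] at h
    calc _ = _ := by ring
      _ ≤ _ := h
  calc 24 * gB ‖v‖ ‖w‖ = _ := ?_
    _ = _ := (octa_moments w v (1/√N) ((1/√N)/N) ((1/√N)*(3/2)/N^2) ((1/√N)*(5/2)/N^3)).symm
    _ ≤ _ := Finset.sum_le_sum fun p _ => key p
  rw [gB, ← hNe]
  have : N ≠ 0 := by rw [hNe]; exact hN.ne'
  field_simp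

/-- The potential of the background. -/
def VV (Λ : Set E3) (x : E3) : ℝ := ∫ y in Λ, 1 / ‖x - y‖

lemma pre_ball (x : E3) (M : ℝ) : (fun t : E3 => x - t) ⁻¹' ball 0 M = ball x M := by
  ext y
  rw [mem_preimage, mem_ball_zero_iff, mem_ball, dist_eq_norm, norm_sub_rev]

lemma shift_int (f : ℝ → ℝ) (x : E3) (M : ℝ) :
    ∫ y in ball x M, f ‖x - y‖ = ∫ w in ball (0:E3) M, f ‖w‖ := by
  rw [← pre_ball]
  exact (Measure.measurePreserving_sub_left (volume : Measure E3) x).setIntegral_preimage_emb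
      (Homeomorph.subLeft x).measurableEmbedding (fun w => f ‖w‖) (ball 0 M)

lemma coul_int_ball (x : E3) (M : ℝ) : IntegrableOn (fun y : E3 => 1 / ‖x - y‖) (ball x M) := by
  have h := (Measure.measurePreserving_sub_left (volume : Measure E3) x).integrableOn_comp_preimage
    (Homeomorph.subLeft x).measurableEmbedding (f := fun w : E3 => 1 / ‖w‖) (s := ball 0 M)
  have h2 := h.2 (coulomb_ball M)
  rw [pre_ball] at h2
  exact h2

lemma coul_int (x : E3) {Λ : Set E3} (hb : IsBounded Λ) :
    IntegrableOn (fun y : E3 => 1 / ‖x - y‖) Λ := by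
  obtain ⟨M, hM⟩ := hb.subset_ball x
  exact (coul_int_ball x M).mono_set hM

lemma gB_int (t : ℝ) (ht : 0 < t) (z : E3) {Λ : Set E3} (hb : IsBounded Λ) :
    IntegrableOn (fun y : E3 => gB t ‖z - y‖) Λ := by
  obtain ⟨M, hM⟩ := hb.subset_closedBall z
  have : Continuous (fun y : E3 => gB t ‖z - y‖) := by
    have := gB_cont t ht
    fun_prop
  exact (this.continuousOn.integrableOn_compact (isCompact_closedBall z M)).mono_set hM

lemma loss_le (t : ℝ) (ht : 0 < t) (z : E3) {Λ : Set E3} (hb : IsBounded Λ) :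
    VV Λ z - 2 * Real.pi * t^2 ≤ ∫ y in Λ, gB t ‖z - y‖ := by
  have e : VV Λ z - ∫ y in Λ, gB t ‖z - y‖ = ∫ y in Λ, lossB t ‖z - y‖ :=
    (integral_sub (coul_int z hb) (gB_int t ht z hb)).symm
  obtain ⟨M, hM⟩ := hb.subset_ball_lt 0 z
  have h1 : ∫ y in Λ, lossB t ‖z - y‖ ≤ ∫ y in ball z M, lossB t ‖z - y‖ := by
    apply setIntegral_mono_set
    · exact (coul_int_ball z M).sub (gB_int t ht z isBounded_ball)
    · refine ae_restrict_of_ae ?_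
      filter_upwards [Measure.ae_ne volume z] with y hy
      exact lossB_nonneg t _ (norm_pos_iff.2 (sub_ne_zero.2 hy.symm))
    · exact hM.2.eventuallyLE
  have h2 : ∫ y in ball z M, lossB t ‖z - y‖ = ∫ w in ball (0:E3) M, lossB t ‖w‖ := by
    exact shift_int (lossB t) z M
  have := loss_ball t ht M hM.1
  linarith

lemma VV_nonneg (Λ : Set E3) (x : E3) : 0 ≤ VV Λ x :=
  integral_nonneg fun y => by positivity

lemma VV_bdd {Λ : Set E3} (hb : IsBounded Λ) : ∃ C, ∀ x, VV Λ x ≤ C := by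
  refine ⟨(∫ w in ball (0:E3) 1, 1 / ‖w‖) + volume.real Λ, fun x => ?_⟩
  have hfin : volume Λ ≠ ⊤ := hb.measure_lt_top.ne
  have hi : Integrable ((ball x 1).indicator (fun y : E3 => 1 / ‖x - y‖)) :=
    (coul_int_ball x 1).integrable_indicator measurableSet_ball
  calc VV Λ x ≤ ∫ y in Λ, ((ball x 1).indicator (fun y : E3 => 1 / ‖x - y‖) y + 1) := by
        apply integral_mono (coul_int x hb) (hi.integrableOn.add (integrableOn_const hfin))
        intro y
        change 1 / ‖x - y‖ ≤ (ball x 1).indicator (fun y : E3 => 1 / ‖x - y‖) y + 1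
        by_cases h : y ∈ ball x 1
        · simp [h]
        · simp only [indicator_of_notMem h, zero_add]
          simp only [mem_ball, dist_eq_norm, not_lt, norm_sub_rev y x] at h
          exact (div_le_one (by linarith)).2 h
    _ = (∫ y in Λ, (ball x 1).indicator (fun y : E3 => 1 / ‖x - y‖) y) + volume.real Λ := by
        rw [integral_add hi.integrableOn (integrableOn_const hfin)]
        simp
    _ ≤ (∫ y, (ball x 1).indicator (fun y : E3 => 1 / ‖x - y‖) y) + volume.real Λ := by
        refine add_le_add_left (setIntegral_le_integral hi ?_) _
        exact Eventually.of_forall fun y => indicator_nonneg (fun y _ => by positivity) y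
    _ = _ := by
        rw [integral_indicator measurableSet_ball, shift_int (fun a => 1 / a) x 1]

lemma VV_meas (Λ : Set E3) : Measurable (VV Λ) := by
  have : StronglyMeasurable (fun p : E3 × E3 => 1 / ‖p.1 - p.2‖) := by
    apply Measurable.stronglyMeasurable
    fun_prop
  exact this.integral_prod_right.measurable

lemma VV_avg {Λ : Set E3} (hb : IsBounded Λ) (z v : E3) (hv : v ≠ 0) :
    24 * (VV Λ z - 2 * Real.pi * ‖v‖^2) ≤ ∑ p, VV Λ (rot (octa p) v + z) := by
  have ht : 0 < ‖v‖ := norm_pos_iff.2 hv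
  have h := loss_le ‖v‖ ht z hb
  unfold VV at h ⊢
  rw [← integral_finsetSum _ (fun p _ => coul_int _ hb)]
  calc _ ≤ 24 * ∫ y in Λ, gB ‖v‖ ‖z - y‖ := by linarith
    _ = ∫ y in Λ, 24 * gB ‖v‖ ‖z - y‖ := (integral_const_mul _ _).symm
    _ ≤ _ := ?_
  apply integral_mono_ae ((gB_int _ ht z hb).const_mul 24) (integrable_finsetSum _ fun p _ => coul_int _ hb)
  refine ae_restrict_of_ae ?_
  have : ∀ᵐ y : E3, ∀ p, y ≠ rot (octa p) v + z := ae_all_iff.2 fun p => Measure.ae_ne volume _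
  filter_upwards [this] with y hy
  have := pointwise_avg (y - z) v hv (fun p h => hy p (by
    rw [sub_eq_zero] at h; rw [h]; abel))
  rw [norm_sub_rev z y]
  refine this.trans (le_of_eq ?_)
  refine Finset.sum_congr rfl fun p _ => ?_
  congr 2
  abel

lemma rot_meas2 : Measurable (fun q : Matrix (Fin 3) (Fin 3) ℝ × E3 => rot q.1 q.2) := by
  have h : ∀ i j, Measurable (fun q : Matrix (Fin 3) (Fin 3) ℝ × E3 => q.1 i j) := fun i j =>
    (measurable_pi_apply j).comp ((measurable_pi_apply i).comp measurable_fst)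
  have hx : ∀ j, Measurable (fun q : Matrix (Fin 3) (Fin 3) ℝ × E3 => q.2 j) := fun j =>
    (by fun_prop : Measurable (fun x : E3 => x j)).comp measurable_snd
  have : Measurable (fun q : Matrix (Fin 3) (Fin 3) ℝ × E3 => (EuclideanSpace.equiv (Fin 3) ℝ) (rot q.1 q.2)) := by
    refine measurable_pi_lambda _ fun i => ?_
    have : (fun q : Matrix (Fin 3) (Fin 3) ℝ × E3 => (EuclideanSpace.equiv (Fin 3) ℝ) (rot q.1 q.2) i) =
      fun q => q.1 i 0 * q.2 0 + q.1 i 1 * q.2 1 + q.1 i 2 * q.2 2 := by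
      ext q; exact rot_apply q.1 q.2 i
    rw [this]
    exact (((h i 0).mul (hx 0)).add ((h i 1).mul (hx 1))).add ((h i 2).mul (hx 2))
  have h2 := (EuclideanSpace.equiv (Fin 3) ℝ).symm.continuous.measurable.comp this
  simpa [Function.comp_def] using h2

lemma mulL_meas (S : Matrix (Fin 3) (Fin 3) ℝ) :
    Measurable (fun R : Matrix (Fin 3) (Fin 3) ℝ => S * R) := by
  refine measurable_pi_lambda _ fun i => measurable_pi_lambda _ fun j => ?_
  have h : ∀ i j, Measurable (fun q : Matrix (Fin 3) (Fin 3) ℝ => q i j) := fun i j =>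
    (measurable_pi_apply j).comp (measurable_pi_apply i)
  simp only [Matrix.mul_apply, Fin.sum_univ_three]
  exact (((h 0 j).const_mul _).add ((h 1 j).const_mul _)).add ((h 2 j).const_mul _)

lemma avg_x (μ : Measure (Matrix (Fin 3) (Fin 3) ℝ)) (hμ : IsHaarSO3 μ)
    {Λ : Set E3} (hb : IsBounded Λ) (z x : E3) :
    VV Λ z - 2 * Real.pi * ‖x‖^2 ≤ ∫ R, VV Λ (rot R x + z) ∂μ := by
  obtain ⟨hP, h0, hinv⟩ := hμ
  by_cases hx : x = 0
  · have : ∀ R, rot R (0:E3) = 0 := fun R => by ext i; simp [rot_apply]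
    simp [hx, this]
  obtain ⟨C, hC⟩ := VV_bdd hb
  have hm : Measurable (fun R => VV Λ (rot R x + z)) :=
    (VV_meas Λ).comp ((rot_meas2.comp (measurable_id.prodMk measurable_const)).add_const z)
  have hSO : ∀ᵐ R ∂μ, R ∈ SO3 := h0
  have hint : ∀ p, Integrable (fun R => VV Λ (rot (octa p * R) x + z)) μ := fun p => by
    refine Integrable.of_bound (hm.comp (mulL_meas (octa p))).aestronglyMeasurable C ?_
    exact Eventually.of_forall fun R => by
      rw [Real.norm_of_nonneg (VV_nonneg _ _)]; exact hC _
  have e : ∀ p, ∫ R, VV Λ (rot (octa p * R) x + z) ∂μ = ∫ R, VV Λ (rot R x + z) ∂μ := fun p => by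
    conv_rhs => rw [← hinv _ (octa_mem p)]
    rw [integral_map (mulL_meas _).aemeasurable hm.aestronglyMeasurable]
  have s : 24 * ∫ R, VV Λ (rot R x + z) ∂μ = ∫ R, ∑ p, VV Λ (rot (octa p * R) x + z) ∂μ := by
    rw [integral_finsetSum _ (fun p _ => hint p)]
    simp [e]
  have : 24 * (VV Λ z - 2 * Real.pi * ‖x‖^2) ≤ ∫ R, ∑ p, VV Λ (rot (octa p * R) x + z) ∂μ := by
    calc _ = ∫ R, 24 * (VV Λ z - 2 * Real.pi * ‖x‖^2) ∂μ := by simp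
      _ ≤ _ := ?_
    apply integral_mono_ae (integrable_const _) (integrable_finsetSum _ fun p _ => hint p)
    filter_upwards [hSO] with R hR
    have hn := rot_norm hR x
    have := VV_avg hb z (rot R x) (by rw [← norm_pos_iff, hn]; exact norm_pos_iff.2 hx)
    rw [hn] at this
    simpa only [rot_mul] using this
  linarith

lemma rigid_int {R : Matrix (Fin 3) (Fin 3) ℝ} (hR : R ∈ SO3) (z : E3) (Ω : Set E3) (f : E3 → ℝ) :
    ∫ x in rigidImage R z Ω, f x = ∫ x in Ω, f (rot R x + z) := by
  let L : E3 →ₗ[ℝ] E3 :=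
    { toFun := rot R
      map_add' := fun x y => by ext i; simp [rot_apply]; ring
      map_smul' := fun c x => by ext i; simp [rot_apply]; ring }
  let I : E3 →ₗᵢ[ℝ] E3 := ⟨L, fun x => rot_norm hR x⟩
  let J : E3 ≃ₗᵢ[ℝ] E3 := I.toLinearIsometryEquiv rfl
  have hp : MeasurePreserving (fun x : E3 => rot R x + z) volume volume :=
    (measurePreserving_add_right volume z).comp J.measurePreserving
  have he : MeasurableEmbedding (fun x : E3 => rot R x + z) :=
    ((J.toHomeomorph).trans (Homeomorph.addRight z)).measurableEmbedding
  exact hp.setIntegral_image_emb he f Ω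

/-- **Rotation-averaged interaction with the background**: for `Ω* ⊆ B(0,r*)` of volume `m`,
any `z` and any bounded measurable background region `Λ`,
`⨍_{SO(3)} ∬_{(z+RΩ*)×Λ} |x-y|⁻¹ ≥ m ∫_Λ |z-y|⁻¹ − 2π r*² m`. -/
theorem rotation_average_background (μ : Measure (Matrix (Fin 3) (Fin 3) ℝ))
    (hμ : IsHaarSO3 μ) (rstar : ℝ) (hr : 0 < rstar)
    (Ωstar : Set E3) (hΩm : MeasurableSet Ωstar) (hsub : Ωstar ⊆ ball 0 rstar)
    (m : ℝ) (hmass : vol Ωstar = m) (z : E3)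
    (Λ : Set E3) (hΛm : MeasurableSet Λ) (hΛb : IsBounded Λ) :
    m * (∫ y in Λ, 1 / ‖z - y‖) - 2 * Real.pi * rstar^2 * m ≤
      ∫ R, (∫ x in rigidImage R z Ωstar, ∫ y in Λ, 1 / ‖x - y‖) ∂μ := by
  obtain ⟨hP, h0, hinv⟩ := id hμ
  have hSO : ∀ᵐ R ∂μ, R ∈ SO3 := h0
  obtain ⟨C, hC⟩ := VV_bdd hΛb
  have hfin : volume Ωstar < ⊤ := (isBounded_ball.subset hsub).measure_lt_top
  have : IsFiniteMeasure (volume.restrict Ωstar) := ⟨by simpa using hfin⟩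
  have e1 : ∫ R, (∫ x in rigidImage R z Ωstar, ∫ y in Λ, 1 / ‖x - y‖) ∂μ =
      ∫ R, (∫ x in Ωstar, VV Λ (rot R x + z)) ∂μ := by
    apply integral_congr_ae
    filter_upwards [hSO] with R hR
    exact rigid_int hR z Ωstar (VV Λ)
  have hm : Measurable (fun q : Matrix (Fin 3) (Fin 3) ℝ × E3 => VV Λ (rot q.1 q.2 + z)) :=
    (VV_meas Λ).comp (rot_meas2.add_const z)
  have hint : Integrable (fun q : Matrix (Fin 3) (Fin 3) ℝ × E3 => VV Λ (rot q.1 q.2 + z))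
      (μ.prod (volume.restrict Ωstar)) := by
    refine Integrable.of_bound hm.aestronglyMeasurable C ?_
    exact Eventually.of_forall fun R => by
      rw [Real.norm_of_nonneg (VV_nonneg _ _)]; exact hC _
  rw [e1, integral_integral_swap hint]
  have e2 : m * (∫ y in Λ, 1 / ‖z - y‖) - 2 * Real.pi * rstar^2 * m =
      ∫ x in Ωstar, (VV Λ z - 2 * Real.pi * rstar^2) := by
    rw [setIntegral_const, smul_eq_mul, ← hmass]
    unfold vol VV Measure.real
    ring
  rw [e2]
  apply setIntegral_mono_on (integrable_const _) hint.integral_prod_right hΩm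
  intro x hx
  refine le_trans ?_ (avg_x μ hμ hΛb z x)
  have hxr : ‖x‖ < rstar := by simpa using hsub hx
  have : ‖x‖^2 ≤ rstar^2 := pow_le_pow_left₀ (norm_nonneg x) hxr.le 2
  have := mul_le_mul_of_nonneg_left this (by positivity : 0 ≤ 2 * Real.pi)
  linarith

end
end
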